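/- arXiv:math/0604124 — 3 statements merged into one kernel-verified Lean document; each statement's English description precedes it below -/
import Mathlib

section
/- Fix an integer d ≥ 1 and δ ∈ (0,1). Let a^{jk} : ℝ → ℝ (1 ≤ j,k ≤ d) be measurable functions of x¹ only, with a^{jk} = a^{kj} and δ|θ|² ≤ Σ_{j,k=1}^d a^{jk}(x¹) θ^j θ^k ≤ δ⁻¹|θ|² for all x¹ ∈ ℝ and θ ∈ ℝ^d. Set L₀u = u_t + Σ_{j,k} a^{jk}(x¹) u_{x^j x^k}. Then there exists N = N(d,δ) such that for every r > 0 and every u that is smooth on an open neighborhood of the closure of Q_r and vanishes on the parabolic boundary ∂'Q_r = ([0,r²] × ∂B_r) ∪ ({r²} × B_r), one has r² ∫_{Q_r} |u_x|² dx dt + ∫_{Q_r} |u|² dx dt ≤ N r⁴ ∫_{Q_r} |L₀u|² dx dt. -/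
open MeasureTheory

/-- Partial derivative in `t`. -/
noncomputable def pdt {d : ℕ} (u : ℝ × (Fin d → ℝ) → ℝ) : ℝ × (Fin d → ℝ) → ℝ :=
  fun p => fderiv ℝ u p (1, 0)

/-- Partial derivative in `x^j`. -/
noncomputable def pdx {d : ℕ} (j : Fin d) (u : ℝ × (Fin d → ℝ) → ℝ) :
    ℝ × (Fin d → ℝ) → ℝ :=
  fun p => fderiv ℝ u p (0, Pi.single j 1)

/-- Second partial derivative in `x^j, x^k`. -/
noncomputable def pdxx {d : ℕ} (j k : Fin d) (u : ℝ × (Fin d → ℝ) → ℝ) :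
    ℝ × (Fin d → ℝ) → ℝ :=
  pdx j (pdx k u)

/-- Open Euclidean ball `B_r ⊂ ℝ^d` centered at the origin. -/
def ballE (d : ℕ) (r : ℝ) : Set (Fin d → ℝ) := {x | ∑ j, (x j) ^ 2 < r ^ 2}

/-- Euclidean sphere `∂B_r ⊂ ℝ^d` centered at the origin. -/
def sphereE (d : ℕ) (r : ℝ) : Set (Fin d → ℝ) := {x | ∑ j, (x j) ^ 2 = r ^ 2}

/-- Parabolic cylinder `Q_r = (0,r²) × B_r`. -/
def Qc (d : ℕ) (r : ℝ) : Set (ℝ × (Fin d → ℝ)) := Set.Ioo 0 (r ^ 2) ×ˢ ballE d r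

/-- Parabolic boundary `∂'Q_r = ([0,r²] × ∂B_r) ∪ ({r²} × B_r)`. -/
def pbQc (d : ℕ) (r : ℝ) : Set (ℝ × (Fin d → ℝ)) :=
  (Set.Icc 0 (r ^ 2) ×ˢ sphereE d r) ∪ (({r ^ 2} : Set ℝ) ×ˢ ballE d r)


lemma clos (d : ℕ) (r : ℝ) (hr : 0 < r) (t : ℝ) (ht : t ∈ Set.Icc 0 (r^2)) (x : Fin d → ℝ)
    (hx : ∑ j, (x j)^2 ≤ r^2) : (t, x) ∈ closure (Qc d r) := by
  unfold Qc
  rw [closure_prod_eq, closure_Ioo (by positivity)]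
  refine ⟨ht, ?_⟩
  have h1 : Filter.Tendsto (fun s : ℝ => s • x) (nhdsWithin 1 (Set.Ioo 0 1)) (nhds ((1:ℝ) • x)) := by
    apply Filter.Tendsto.mono_left _ nhdsWithin_le_nhds
    exact (continuous_id.smul continuous_const).tendsto 1
  rw [one_smul] at h1
  have : (nhdsWithin (1:ℝ) (Set.Ioo 0 1)).NeBot := by
    rw [← mem_closure_iff_nhdsWithin_neBot, closure_Ioo (by norm_num)]
    simp
  refine mem_closure_of_tendsto h1 ?_
  filter_upwards [self_mem_nhdsWithin] with s hs
  have : ∑ j, ((s • x) j)^2 = s^2 * ∑ j, (x j)^2 := by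
    simp [mul_pow, Finset.mul_sum]
  show ∑ j, ((s • x) j)^2 < r^2
  rw [this]
  have : s^2 < 1 := by nlinarith [hs.1, hs.2]
  have : 0 < r^2 := by positivity
  nlinarith [sq_nonneg s]

lemma lemX (n : ℕ) (j : Fin (n+1)) (r : ℝ) (hr : 0 < r) (g : ℝ × (Fin (n+1) → ℝ) → ℝ)
    (U : Set (ℝ × (Fin (n+1) → ℝ))) (hU : IsOpen U) (hQ : closure (Qc (n+1) r) ⊆ U)
    (hg : ContDiffOn ℝ 1 g U)
    (hb : ∀ t ∈ Set.Icc 0 (r^2), ∀ x ∈ sphereE (n+1) r, g (t, x) = 0)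
    (w : (Fin (n+1) → ℝ) → ℝ) (hw : ∀ x s, w (Function.update x j s) = w x)
    (hi : IntegrableOn (fun p => w p.2 * pdx j g p) (Qc (n+1) r)) :
    ∫ p in Qc (n+1) r, w p.2 * pdx j g p = 0 := by
  have hball : MeasurableSet (ballE (n+1) r) :=
    (isOpen_lt (by fun_prop) continuous_const).measurableSet
  unfold Qc at hi ⊢
  rw [Measure.volume_eq_prod] at hi ⊢
  rw [setIntegral_prod _ hi]
  apply setIntegral_eq_zero_of_forall_eq_zero
  intro t ht
  have htc : t ∈ Set.Icc 0 (r^2) := Set.Ioo_subset_Icc_self ht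
  rw [← integral_indicator hball]
  set H := (ballE (n+1) r).indicator fun x => w x * pdx j g (t, x) with hH
  have e := volume_preserving_piFinSuccAbove (fun _ : Fin (n+1) => ℝ) j
  rw [← e.symm.integral_comp']
  by_cases hI : Integrable (fun y => H ((MeasurableEquiv.piFinSuccAbove (fun _ : Fin (n+1) => ℝ) j).symm y))
    ((volume : Measure ℝ).prod (volume : Measure (Fin n → ℝ)))
  swap
  · exact integral_undef hI
  rw [Measure.volume_eq_prod, integral_prod_symm _ hI]
  apply integral_eq_zero_of_ae
  refine Filter.Eventually.of_forall fun z => ?_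
  simp only [Pi.zero_apply, MeasurableEquiv.piFinSuccAbove_symm_apply]
  have hsum : ∀ s : ℝ, ∑ i, (j.insertNth (α := fun _ => ℝ) s z i)^2 = s^2 + ∑ i, (z i)^2 := by
    intro s
    rw [Fin.sum_univ_succAbove _ j]
    simp
  by_cases hc : r^2 - ∑ i, (z i)^2 ≤ 0
  · have : ∀ s : ℝ, H (j.insertNth (α := fun _ => ℝ) s z) = 0 := by
      intro s
      apply Set.indicator_of_notMem
      intro h
      have h : ∑ i, (j.insertNth (α := fun _ => ℝ) s z i)^2 < r^2 := h
      rw [hsum] at h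
      nlinarith [sq_nonneg s]
    exact integral_eq_zero_of_ae (Filter.Eventually.of_forall this)
  push Not at hc
  set ρ := Real.sqrt (r^2 - ∑ i, (z i)^2) with hρ
  have hρ2 : ρ^2 = r^2 - ∑ i, (z i)^2 := Real.sq_sqrt hc.le
  have hρ0 : 0 < ρ := Real.sqrt_pos.2 hc
  let y : ℝ → (Fin (n+1) → ℝ) := fun s => j.insertNth (α := fun _ => ℝ) s z
  have hyu : y = fun s => Function.update (y 0) j s := by
    funext s; simp [y]
  have hyd : ∀ s, HasDerivAt y (Pi.single j 1) s := by
    intro s; rw [hyu]; exact hasDerivAt_update _ _ _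
  have hmem : ∀ s ∈ Set.Icc (-ρ) ρ, (t, y s) ∈ U := by
    intro s hs
    apply hQ
    apply clos _ _ hr _ htc
    rw [hsum]
    nlinarith [hs.1, hs.2]
  have hHs : ∀ s, H (y s) = (Set.Ioo (-ρ) ρ).indicator (fun s => w (y 0) * pdx j g (t, y s)) s := by
    intro s
    have hwy : w (y s) = w (y 0) := by rw [hyu]; simp only; rw [hw, hw]
    by_cases hs : s ∈ Set.Ioo (-ρ) ρ
    · rw [Set.indicator_of_mem hs, hH, Set.indicator_of_mem, hwy]
      show ∑ i, (y s i)^2 < r^2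
      rw [hsum]; nlinarith [hs.1, hs.2]
    · rw [Set.indicator_of_notMem hs, hH, Set.indicator_of_notMem]
      intro h
      have h : ∑ i, (y s i)^2 < r^2 := h
      rw [hsum] at h
      apply hs
      exact abs_lt.1 (abs_lt_of_sq_lt_sq (by linarith) hρ0.le)
  have : ∫ s, H (y s) = 0 := by
    simp_rw [hHs]
    rw [integral_indicator measurableSet_Ioo, integral_const_mul, ← integral_Ioc_eq_integral_Ioo,
      ← intervalIntegral.integral_of_le (by linarith)]
    have hder : ∀ s ∈ Set.uIcc (-ρ) ρ, HasDerivAt (fun s => g (t, y s)) (pdx j g (t, y s)) s := by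
      intro s hs
      rw [Set.uIcc_of_le (by linarith)] at hs
      have h1 : HasFDerivAt g (fderiv ℝ g (t, y s)) (t, y s) :=
        ((hg.contDiffAt (hU.mem_nhds (hmem s hs))).differentiableAt (by norm_num)).hasFDerivAt
      exact h1.comp_hasDerivAt s ((hasDerivAt_const s t).prodMk (hyd s))
    rw [intervalIntegral.integral_eq_sub_of_hasDerivAt hder]
    · rw [hb t htc (y ρ), hb t htc (y (-ρ))]
      · simp
      · show ∑ i, (y (-ρ) i)^2 = r^2
        rw [hsum]; linarith [neg_sq ρ]
      · show ∑ i, (y ρ i)^2 = r^2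
        rw [hsum]; linarith
    · apply ContinuousOn.intervalIntegrable
      rw [Set.uIcc_of_le (by linarith)]
      have h2 : ContinuousOn (fun p => pdx j g p) U :=
        (hg.continuousOn_fderiv_of_isOpen hU le_rfl).clm_apply continuousOn_const
      have hyc : Continuous y := continuous_iff_continuousAt.2 fun s => (hyd s).continuousAt
      exact h2.comp (by fun_prop) hmem
  exact this

lemma lemT (d : ℕ) (r : ℝ) (hr : 0 < r) (g : ℝ × (Fin d → ℝ) → ℝ)
    (U : Set (ℝ × (Fin d → ℝ))) (hU : IsOpen U) (hQ : closure (Qc d r) ⊆ U)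
    (hg : ContDiffOn ℝ 1 g U)
    (hb : ∀ x ∈ ballE d r, g (r^2, x) = 0) (hg0 : ∀ p, 0 ≤ g p)
    (w : (Fin d → ℝ) → ℝ) (hw : ∀ x, 0 ≤ w x)
    (hi : IntegrableOn (fun p => w p.2 * pdt g p) (Qc d r)) :
    ∫ p in Qc d r, w p.2 * pdt g p ≤ 0 := by
  have hball : MeasurableSet (ballE d r) :=
    (isOpen_lt (by fun_prop) continuous_const).measurableSet
  unfold IntegrableOn at hi
  unfold Qc at hi ⊢
  rw [Measure.volume_eq_prod, ← Measure.prod_restrict] at hi ⊢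
  rw [integral_prod_symm _ hi]
  apply setIntegral_nonpos hball
  intro x hx
  have hr2 : 0 ≤ r^2 := by positivity
  have hmem : ∀ s ∈ Set.Icc 0 (r^2), (s, x) ∈ U := fun s hs => hQ (clos _ _ hr _ hs _ (le_of_lt hx))
  simp only
  rw [integral_const_mul, ← integral_Ioc_eq_integral_Ioo, ← intervalIntegral.integral_of_le hr2]
  have hder : ∀ s ∈ Set.uIcc 0 (r^2), HasDerivAt (fun s => g (s, x)) (pdt g (s, x)) s := by
    intro s hs
    rw [Set.uIcc_of_le hr2] at hs
    have h1 : HasFDerivAt g (fderiv ℝ g (s, x)) (s, x) :=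
      ((hg.contDiffAt (hU.mem_nhds (hmem s hs))).differentiableAt (by norm_num)).hasFDerivAt
    exact h1.comp_hasDerivAt s ((hasDerivAt_id s).prodMk (hasDerivAt_const s x))
  rw [intervalIntegral.integral_eq_sub_of_hasDerivAt hder]
  · rw [hb x hx]
    nlinarith [mul_nonneg (hw x) (hg0 (0, x))]
  · apply ContinuousOn.intervalIntegrable
    rw [Set.uIcc_of_le hr2]
    have h2 : ContinuousOn (fun p => pdt g p) U :=
      (hg.continuousOn_fderiv_of_isOpen hU le_rfl).clm_apply continuousOn_const
    exact h2.comp (by fun_prop) hmem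

lemma intg (d : ℕ) (r : ℝ) (hr : 0 < r) (h : ℝ × (Fin d → ℝ) → ℝ)
    (U : Set (ℝ × (Fin d → ℝ))) (hQ : closure (Qc d r) ⊆ U)
    (hh : ContinuousOn h U) (b : (Fin d → ℝ) → ℝ) (hbm : Measurable b) (C : ℝ)
    (hC : ∀ x, |b x| ≤ C) : IntegrableOn (fun p => b p.2 * h p) (Qc d r) := by
  have hK : IsCompact (closure (Qc d r)) := by
    have hK0 : IsCompact (Set.Icc 0 (r^2) ×ˢ Set.pi Set.univ (fun _ : Fin d => Set.Icc (-r) r)) :=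
      isCompact_Icc.prod (isCompact_univ_pi fun _ => isCompact_Icc)
    refine hK0.of_isClosed_subset isClosed_closure (closure_minimal ?_ hK0.isClosed)
    rintro ⟨t, x⟩ ⟨ht, hx⟩
    refine ⟨Set.Ioo_subset_Icc_self ht, fun j _ => ?_⟩
    have hx : ∑ i, (x i)^2 < r^2 := hx
    have : (x j)^2 ≤ ∑ i, (x i)^2 :=
      Finset.single_le_sum (f := fun i => (x i)^2) (fun i _ => sq_nonneg _) (Finset.mem_univ j)
    exact abs_le.1 (abs_le_of_sq_le_sq (by linarith) hr.le)
  have h1 : IntegrableOn h (Qc d r) :=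
    ((hh.mono hQ).integrableOn_compact hK).mono_set subset_closure
  refine Integrable.bdd_mul (c := C) h1 ?_ ?_
  · exact (hbm.comp measurable_snd).aestronglyMeasurable
  · exact Filter.Eventually.of_forall fun p => hC p.2

lemma pdx_mul {d : ℕ} (j : Fin d) (f g : ℝ × (Fin d → ℝ) → ℝ) (p) (hf : DifferentiableAt ℝ f p)
    (hg : DifferentiableAt ℝ g p) :
    pdx j (fun q => f q * g q) p = f p * pdx j g p + g p * pdx j f p := by
  unfold pdx
  rw [fderiv_fun_mul hf hg]
  simp

lemma pdt_mul {d : ℕ} (f g : ℝ × (Fin d → ℝ) → ℝ) (p) (hf : DifferentiableAt ℝ f p)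
    (hg : DifferentiableAt ℝ g p) :
    pdt (fun q => f q * g q) p = f p * pdt g p + g p * pdt f p := by
  unfold pdt
  rw [fderiv_fun_mul hf hg]
  simp

lemma pdxx_symm {d : ℕ} (j k : Fin d) (f : ℝ × (Fin d → ℝ) → ℝ) (p)
    (hf : ContDiffAt ℝ (⊤ : ℕ∞) f p) : pdxx j k f p = pdxx k j f p := by
  have h1 : DifferentiableAt ℝ (fderiv ℝ f) p :=
    (hf.fderiv_right (m := (⊤ : ℕ∞)) (by simp)).differentiableAt (by simp)
  have key : ∀ j k : Fin d, pdxx j k f p =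
      fderiv ℝ (fderiv ℝ f) p (0, Pi.single j 1) (0, Pi.single k 1) := by
    intro j k
    unfold pdxx pdx
    rw [fderiv_clm_apply h1 (differentiableAt_const _)]
    simp
  rw [key, key]
  exact (hf.isSymmSndFDerivAt (by
    simp only [minSmoothness_of_isRCLikeNormedField]
    exact WithTop.coe_le_coe.2 (le_top (a := (2 : ℕ∞))))).eq _ _

lemma pdx_smooth {d : ℕ} (j : Fin d) (f : ℝ × (Fin d → ℝ) → ℝ) (U : Set (ℝ × (Fin d → ℝ)))
    (hU : IsOpen U) (hf : ContDiffOn ℝ (⊤ : ℕ∞) f U) : ContDiffOn ℝ (⊤ : ℕ∞) (pdx j f) U :=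
  (hf.fderiv_of_isOpen hU (by simp)).clm_apply contDiffOn_const

lemma pdt_smooth {d : ℕ} (f : ℝ × (Fin d → ℝ) → ℝ) (U : Set (ℝ × (Fin d → ℝ)))
    (hU : IsOpen U) (hf : ContDiffOn ℝ (⊤ : ℕ∞) f U) : ContDiffOn ℝ (⊤ : ℕ∞) (pdt f) U :=
  (hf.fderiv_of_isOpen hU (by simp)).clm_apply contDiffOn_const

lemma ipp (n : ℕ) (j : Fin (n+1)) (r : ℝ) (hr : 0 < r) (u v : ℝ × (Fin (n+1) → ℝ) → ℝ)
    (U : Set (ℝ × (Fin (n+1) → ℝ))) (hU : IsOpen U) (hQ : closure (Qc (n+1) r) ⊆ U)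
    (hu : ContDiffOn ℝ (⊤ : ℕ∞) u U) (hv : ContDiffOn ℝ (⊤ : ℕ∞) v U)
    (hb : ∀ p ∈ pbQc (n+1) r, u p = 0)
    (w : (Fin (n+1) → ℝ) → ℝ) (hwm : Measurable w) (C : ℝ) (hC : ∀ x, |w x| ≤ C)
    (hw : ∀ x s, w (Function.update x j s) = w x) :
    ∫ p in Qc (n+1) r, w p.2 * (u p * pdx j v p + v p * pdx j u p) = 0 := by
  have hQo : MeasurableSet (Qc (n+1) r) :=
    measurableSet_Ioo.prod (isOpen_lt (by fun_prop) continuous_const).measurableSet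
  have hg : ContDiffOn ℝ (⊤ : ℕ∞) (fun q => u q * v q) U := hu.mul hv
  have := lemX n j r hr (fun q => u q * v q) U hU hQ (hg.of_le (by exact_mod_cast le_top))
    (fun t ht x hx => by simp [hb (t, x) (Or.inl ⟨ht, hx⟩)]) w hw
    (intg _ r hr _ U hQ (pdx_smooth j _ U hU hg).continuousOn w hwm C hC)
  rw [← this]
  apply setIntegral_congr_fun hQo
  intro p hp
  have hn := hU.mem_nhds (hQ (subset_closure hp))
  simp only
  rw [pdx_mul j u v p ((hu.contDiffAt hn).differentiableAt (by simp))
    ((hv.contDiffAt hn).differentiableAt (by simp))]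

lemma ippt (n : ℕ) (r : ℝ) (hr : 0 < r) (u : ℝ × (Fin (n+1) → ℝ) → ℝ)
    (U : Set (ℝ × (Fin (n+1) → ℝ))) (hU : IsOpen U) (hQ : closure (Qc (n+1) r) ⊆ U)
    (hu : ContDiffOn ℝ (⊤ : ℕ∞) u U)
    (hb : ∀ p ∈ pbQc (n+1) r, u p = 0)
    (w : (Fin (n+1) → ℝ) → ℝ) (hwm : Measurable w) (C : ℝ) (hC : ∀ x, |w x| ≤ C)
    (hw : ∀ x, 0 ≤ w x) :
    ∫ p in Qc (n+1) r, w p.2 * (u p * pdt u p) ≤ 0 := by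
  have hQo : MeasurableSet (Qc (n+1) r) :=
    measurableSet_Ioo.prod (isOpen_lt (by fun_prop) continuous_const).measurableSet
  have hg : ContDiffOn ℝ (⊤ : ℕ∞) (fun q => u q * u q) U := hu.mul hu
  have := lemT (n+1) r hr (fun q => u q * u q) U hU hQ (hg.of_le (by exact_mod_cast le_top))
    (fun x hx => by simp [hb (r^2, x) (Or.inr ⟨rfl, hx⟩)]) (fun p => mul_self_nonneg _) w hw
    (intg _ r hr _ U hQ (pdt_smooth _ U hU hg).continuousOn w hwm C hC)
  have h2 : ∫ p in Qc (n+1) r, w p.2 * pdt (fun q => u q * u q) p =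
      ∫ p in Qc (n+1) r, 2 * (w p.2 * (u p * pdt u p)) := by
    apply setIntegral_congr_fun hQo
    intro p hp
    have hn := hU.mem_nhds (hQ (subset_closure hp))
    have hd := (hu.contDiffAt hn).differentiableAt (by simp)
    simp only
    rw [pdt_mul u u p hd hd]
    ring
  rw [h2, integral_const_mul] at this
  linarith

lemma a_bound (d : ℕ) (δ : ℝ) (b : Fin d → Fin d → ℝ) (hδ : 0 < δ) (hs : ∀ j k, b j k = b k j)
    (he : ∀ (θ : Fin d → ℝ),
          δ * ∑ j, (θ j) ^ 2 ≤ ∑ j, ∑ k, b j k * θ j * θ k ∧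
          ∑ j, ∑ k, b j k * θ j * θ k ≤ δ⁻¹ * ∑ j, (θ j) ^ 2) :
    (∀ j, δ ≤ b j j ∧ b j j ≤ δ⁻¹) ∧ ∀ j k, |b j k| ≤ 2 * δ⁻¹ := by
  have hinv : 0 < δ⁻¹ := by positivity
  have h1 : ∀ j, δ ≤ b j j ∧ b j j ≤ δ⁻¹ := by
    intro j
    have := he (Pi.single j 1)
    simpa [Pi.single_apply, ite_pow] using this
  refine ⟨h1, fun j k => ?_⟩
  by_cases hjk : j = k
  · subst hjk
    rw [abs_le]; constructor <;> linarith [(h1 j).1, (h1 j).2]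
  have h2 := he (Pi.single j 1 + Pi.single k 1)
  have hq : ∑ i, ∑ l, b i l * (Pi.single j 1 + Pi.single k 1 : Fin d → ℝ) i *
      (Pi.single j 1 + Pi.single k 1 : Fin d → ℝ) l = b j j + b j k + b k j + b k k := by
    simp [Pi.single_apply, mul_add, add_mul, Finset.sum_add_distrib]
    ring
  have hn : ∑ i, ((Pi.single j 1 + Pi.single k 1 : Fin d → ℝ) i)^2 = 2 := by
    have : ∀ i, ((Pi.single j 1 + Pi.single k 1 : Fin d → ℝ) i)^2
        = (if i = j then 1 else 0) + (if i = k then 1 else 0) := by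
      intro i
      simp only [Pi.add_apply, Pi.single_apply]
      by_cases h : i = j
      · have : i ≠ k := fun h' => hjk (h.symm.trans h')
        simp [h, hjk]
      · simp [h]
    simp_rw [this]
    rw [Finset.sum_add_distrib]
    simp; norm_num
  rw [hq, hn, hs k j] at h2
  rw [abs_le]
  constructor <;> linarith [(h1 j).1, (h1 j).2, (h1 k).1, (h1 k).2, h2.1, h2.2]

lemma poinc (n : ℕ) (r : ℝ) (hr : 0 < r) (u : ℝ × (Fin (n+1) → ℝ) → ℝ)
    (U : Set (ℝ × (Fin (n+1) → ℝ))) (hU : IsOpen U) (hQ : closure (Qc (n+1) r) ⊆ U)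
    (hu : ContDiffOn ℝ (⊤ : ℕ∞) u U) (hb : ∀ p ∈ pbQc (n+1) r, u p = 0) :
    ∫ p in Qc (n+1) r, (u p)^2 ≤ 4 * r^2 * ∫ p in Qc (n+1) r, ∑ j, (pdx j u p)^2 := by
  have hQo : MeasurableSet (Qc (n+1) r) :=
    measurableSet_Ioo.prod (isOpen_lt (by fun_prop) continuous_const).measurableSet
  have hint : ∀ h : ℝ × (Fin (n+1) → ℝ) → ℝ, ContinuousOn h U → IntegrableOn h (Qc (n+1) r) := by
    intro h hh
    simpa using intg _ r hr h U hQ hh (fun _ => 1) measurable_const 1 (by simp)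
  have hX : ContDiff ℝ (⊤ : ℕ∞) (fun p : ℝ × (Fin (n+1) → ℝ) => p.2 0) := by fun_prop
  have hv : ContDiffOn ℝ (⊤ : ℕ∞) (fun p => p.2 0 * u p) U := hX.contDiffOn.mul hu
  have h1 := ipp n 0 r hr u (fun p => p.2 0 * u p) U hU hQ hu hv hb (fun _ => 1)
    measurable_const 1 (by simp) (by simp)
  have cu := hu.continuousOn
  have cux : ∀ j, ContinuousOn (pdx j u) U := fun j => (pdx_smooth j u U hU hu).continuousOn
  have hS : IntegrableOn (fun p => ∑ j, (pdx j u p)^2) (Qc (n+1) r) :=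
    hint _ (continuousOn_finsetSum _ fun j _ => (cux j).pow 2)
  have hu2 : IntegrableOn (fun p => (u p)^2) (Qc (n+1) r) := hint _ (cu.pow 2)
  have h3 : ∫ p in Qc (n+1) r, ((1/2) * (u p)^2 - 2 * r^2 * ∑ j, (pdx j u p)^2) ≤ 0 := by
    rw [← h1]
    apply setIntegral_mono_on
    · exact (hu2.const_mul _).sub (hS.const_mul _)
    · simp only [one_mul]
      exact hint _ ((cu.mul (pdx_smooth 0 _ U hU hv).continuousOn).add (hv.continuousOn.mul (cux 0)))
    · exact hQo
    intro p hp
    have hn := hU.mem_nhds (hQ (subset_closure hp))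
    have hd := (hu.contDiffAt hn).differentiableAt (by simp)
    have hp0 : pdx 0 (fun p : ℝ × (Fin (n+1) → ℝ) => p.2 0) p = 1 := by
      unfold pdx
      have : HasFDerivAt (fun p : ℝ × (Fin (n+1) → ℝ) => p.2 0)
        ((ContinuousLinearMap.proj 0).comp (ContinuousLinearMap.snd ℝ ℝ (Fin (n+1) → ℝ))) p :=
        ((ContinuousLinearMap.proj (R := ℝ) (φ := fun _ : Fin (n+1) => ℝ) 0).comp
          (ContinuousLinearMap.snd ℝ ℝ (Fin (n+1) → ℝ))).hasFDerivAt
      rw [this.fderiv]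
      simp
    rw [pdx_mul 0 _ u p (hX.differentiable (by simp) p) hd, hp0]
    have hx : ∑ i, (p.2 i)^2 < r^2 := hp.2
    have hx0 : (p.2 0)^2 ≤ ∑ i, (p.2 i)^2 :=
      Finset.single_le_sum (f := fun i => (p.2 i)^2) (fun i _ => sq_nonneg _) (Finset.mem_univ 0)
    have hu0 : (pdx 0 u p)^2 ≤ ∑ i, (pdx i u p)^2 :=
      Finset.single_le_sum (f := fun i => (pdx i u p)^2) (fun i _ => sq_nonneg _) (Finset.mem_univ 0)
    have e1 : (p.2 0)^2 * (pdx 0 u p)^2 ≤ r^2 * ∑ i, (pdx i u p)^2 :=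
      mul_le_mul (by linarith) hu0 (sq_nonneg _) (sq_nonneg _)
    nlinarith [sq_nonneg (u p + 2 * (p.2 0 * pdx 0 u p))]
  rw [integral_sub (hu2.const_mul _) (hS.const_mul _), integral_const_mul, integral_const_mul] at h3
  linarith

lemma energy (n : ℕ) (δ : ℝ) (hδ : 0 < δ) (a : ℝ → Fin (n+1) → Fin (n+1) → ℝ)
    (ham : ∀ j k, Measurable fun s => a s j k)
    (has : ∀ s j k, a s j k = a s k j)
    (hae : ∀ (s : ℝ) (θ : Fin (n+1) → ℝ),
          δ * ∑ j, (θ j) ^ 2 ≤ ∑ j, ∑ k, a s j k * θ j * θ k ∧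
          ∑ j, ∑ k, a s j k * θ j * θ k ≤ δ⁻¹ * ∑ j, (θ j) ^ 2)
    (r : ℝ) (hr : 0 < r) (u : ℝ × (Fin (n+1) → ℝ) → ℝ)
    (U : Set (ℝ × (Fin (n+1) → ℝ))) (hU : IsOpen U) (hQ : closure (Qc (n+1) r) ⊆ U)
    (hu : ContDiffOn ℝ (⊤ : ℕ∞) u U) (hb : ∀ p ∈ pbQc (n+1) r, u p = 0) :
    δ^2 * (∫ p in Qc (n+1) r, ∑ j, (pdx j u p)^2)
      - δ^2 / (8 * r^2) * (∫ p in Qc (n+1) r, (u p)^2)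
      - 2 * r^2 / δ^4 * (∫ p in Qc (n+1) r,
          (pdt u p + ∑ j, ∑ k, a (p.2 0) j k * pdxx j k u p) ^ 2) ≤ 0 := by
  have hQo : MeasurableSet (Qc (n+1) r) :=
    measurableSet_Ioo.prod (isOpen_lt (by fun_prop) continuous_const).measurableSet
  have hint : ∀ h : ℝ × (Fin (n+1) → ℝ) → ℝ, ContinuousOn h U → IntegrableOn h (Qc (n+1) r) := by
    intro h hh
    simpa using intg _ r hr h U hQ hh (fun _ => 1) measurable_const 1 (by simp)
  have cu := hu.continuousOn
  have cut : ContinuousOn (pdt u) U := (pdt_smooth u U hU hu).continuousOn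
  have cux : ∀ j, ContinuousOn (pdx j u) U := fun j => (pdx_smooth j u U hU hu).continuousOn
  have cuxx : ∀ j k, ContinuousOn (pdxx j k u) U := fun j k =>
    (pdx_smooth j _ U hU (pdx_smooth k u U hU hu)).continuousOn
  have hS : IntegrableOn (fun p => ∑ j, (pdx j u p)^2) (Qc (n+1) r) :=
    hint _ (continuousOn_finsetSum _ fun j _ => (cux j).pow 2)
  have hu2 : IntegrableOn (fun p => (u p)^2) (Qc (n+1) r) := hint _ (cu.pow 2)
  have hab := fun s => a_bound (n+1) δ (a s) hδ (has s) (hae s)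
  have ham' : ∀ j k, Measurable fun x : Fin (n+1) → ℝ => a (x 0) j k := fun j k =>
    (ham j k).comp (measurable_pi_apply 0)
  have hinv : 0 < δ⁻¹ := by positivity
  have hf2 : IntegrableOn (fun p : ℝ × (Fin (n+1) → ℝ) =>
      (pdt u p + ∑ j, ∑ k, a (p.2 0) j k * pdxx j k u p) ^ 2) (Qc (n+1) r) := by
    have m1 : MemLp (pdt u) 2 (volume.restrict (Qc (n+1) r)) :=
      (memLp_two_iff_integrable_sq (hint _ cut).aestronglyMeasurable).2 (hint _ (cut.pow 2))
    have m2 : ∀ j k, MemLp (fun p : ℝ × (Fin (n+1) → ℝ) => a (p.2 0) j k * pdxx j k u p) 2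
        (volume.restrict (Qc (n+1) r)) := by
      intro j k
      have i1 := intg _ r hr _ U hQ (cuxx j k) _ (ham' j k) (2 * δ⁻¹) (fun x => (hab _).2 j k)
      have i2 := intg _ r hr _ U hQ ((cuxx j k).pow 2) _ ((ham' j k).pow_const 2) ((2 * δ⁻¹)^2)
        (fun x => by rw [abs_pow]; exact pow_le_pow_left₀ (abs_nonneg _) ((hab _).2 j k) 2)
      refine (memLp_two_iff_integrable_sq i1.aestronglyMeasurable).2 ?_
      simp_rw [mul_pow]
      exact i2
    exact (m1.add (memLp_finsetSum _ fun j _ => memLp_finsetSum _ fun k _ => m2 j k)).integrable_sq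
  -- the weight
  have hw0 : ∀ s, 0 < a s 0 0 := fun s => hδ.trans_le ((hab s).1 0).1
  have hw1 : ∀ s, (a s 0 0)⁻¹ ≤ δ⁻¹ := fun s => inv_anti₀ hδ ((hab s).1 0).1
  have hw2 : ∀ s, δ ≤ (a s 0 0)⁻¹ := fun s => by
    have := inv_anti₀ (hw0 s) ((hab s).1 0).2
    simpa using this
  have hwm : Measurable fun x : Fin (n+1) → ℝ => (a (x 0) 0 0)⁻¹ := (ham' 0 0).inv
  have hwa : ∀ s, |(a s 0 0)⁻¹| ≤ δ⁻¹ := fun s => by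
    rw [abs_of_pos (inv_pos.2 (hw0 s))]; exact hw1 s
  have hcm : ∀ j k, Measurable fun x : Fin (n+1) → ℝ => (a (x 0) 0 0)⁻¹ * a (x 0) j k :=
    fun j k => hwm.mul (ham' j k)
  have hcb : ∀ j k s, |(a s 0 0)⁻¹ * a s j k| ≤ δ⁻¹ * (2 * δ⁻¹) := fun j k s => by
    rw [abs_mul]
    exact mul_le_mul (hwa s) ((hab s).2 j k) (abs_nonneg _) hinv.le
  have ht := ippt n r hr u U hU hQ hu hb _ hwm δ⁻¹ (fun x => hwa _)
    (fun x => (inv_pos.2 (hw0 _)).le)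
  have hti := intg _ r hr (fun p => u p * pdt u p) U hQ (cu.mul cut) _ hwm δ⁻¹ (fun x => hwa _)
  -- spatial terms, first coordinate of differentiation different from zero
  have hjk1 : ∀ j k, (j ≠ 0 ∨ k = 0) → ∫ p in Qc (n+1) r, ((a (p.2 0) 0 0)⁻¹ * a (p.2 0) j k) *
      (u p * pdxx j k u p + pdx k u p * pdx j u p) = 0 := by
    intro j k hjk
    refine ipp n j r hr u (pdx k u) U hU hQ hu (pdx_smooth k u U hU hu) hb
      (fun x => (a (x 0) 0 0)⁻¹ * a (x 0) j k) (hcm j k) _ (fun x => hcb j k _) ?_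
    intro x s
    by_cases hj : j = 0
    · have hk : k = 0 := by tauto
      subst hj hk
      rw [inv_mul_cancel₀ (hw0 _).ne', inv_mul_cancel₀ (hw0 _).ne']
    · rw [Function.update_of_ne (Ne.symm hj)]
  have hjk : ∀ j k, ∫ p in Qc (n+1) r, ((a (p.2 0) 0 0)⁻¹ * a (p.2 0) j k) *
      (u p * pdxx j k u p + pdx k u p * pdx j u p) = 0 := by
    intro j k
    by_cases h : j ≠ 0 ∨ k = 0
    · exact hjk1 j k h
    · push Not at h
      rw [← hjk1 k j (Or.inl h.2)]
      apply setIntegral_congr_fun hQo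
      intro p hp
      have hn := hU.mem_nhds (hQ (subset_closure hp))
      simp only
      rw [pdxx_symm j k u p (hu.contDiffAt hn), has _ j k]
      ring
  have hjki : ∀ j k, IntegrableOn (fun p => ((a (p.2 0) 0 0)⁻¹ * a (p.2 0) j k) *
      (u p * pdxx j k u p + pdx k u p * pdx j u p)) (Qc (n+1) r) := fun j k =>
    intg _ r hr _ U hQ ((cu.mul (cuxx j k)).add ((cux k).mul (cux j))) _ (hcm j k) _
      (fun x => hcb j k _)
  have hsumi : IntegrableOn (fun p => ∑ j, ∑ k, ((a (p.2 0) 0 0)⁻¹ * a (p.2 0) j k) *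
      (u p * pdxx j k u p + pdx k u p * pdx j u p)) (Qc (n+1) r) :=
    integrable_finsetSum _ fun j _ => integrable_finsetSum _ fun k _ => hjki j k
  have hsum : ∫ p in Qc (n+1) r, ∑ j, ∑ k, ((a (p.2 0) 0 0)⁻¹ * a (p.2 0) j k) *
      (u p * pdxx j k u p + pdx k u p * pdx j u p) = 0 := by
    rw [integral_finsetSum _ fun j _ => integrable_finsetSum _ fun k _ => hjki j k]
    apply Finset.sum_eq_zero
    intro j _
    rw [integral_finsetSum _ fun k _ => hjki j k]
    exact Finset.sum_eq_zero fun k _ => hjk j k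
  have hmain : ∫ p in Qc (n+1) r, (δ^2 * (∑ j, (pdx j u p)^2) - δ^2 / (8 * r^2) * (u p)^2
      - 2 * r^2 / δ^4 * (pdt u p + ∑ j, ∑ k, a (p.2 0) j k * pdxx j k u p) ^ 2) ≤
      ∫ p in Qc (n+1) r, ((a (p.2 0) 0 0)⁻¹ * (u p * pdt u p) +
        ∑ j, ∑ k, ((a (p.2 0) 0 0)⁻¹ * a (p.2 0) j k) *
      (u p * pdxx j k u p + pdx k u p * pdx j u p)) := by
    apply setIntegral_mono_on
    · exact ((hS.const_mul _).sub (hu2.const_mul _)).sub (hf2.const_mul _)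
    · exact hti.add hsumi
    · exact hQo
    intro p hp
    set f := pdt u p + ∑ j, ∑ k, a (p.2 0) j k * pdxx j k u p with hf
    set w := (a (p.2 0) 0 0)⁻¹ with hw
    set q := ∑ j, ∑ k, a (p.2 0) j k * pdx j u p * pdx k u p with hq
    set S := ∑ j, (pdx j u p)^2 with hSd
    have e : w * (u p * pdt u p) + ∑ j, ∑ k, (w * a (p.2 0) j k) *
      (u p * pdxx j k u p + pdx k u p * pdx j u p) = w * (u p * f) + w * q := by
      rw [hf, hq]
      simp only [mul_add, Finset.mul_sum, Finset.sum_add_distrib]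
      rw [← add_assoc]
      congr 1
      · congr 1
        exact Finset.sum_congr rfl fun j _ => Finset.sum_congr rfl fun k _ => by ring
      · exact Finset.sum_congr rfl fun j _ => Finset.sum_congr rfl fun k _ => by ring
    rw [e]
    have hq1 : δ * S ≤ q := (hae (p.2 0) (fun j => pdx j u p)).1
    have hS0 : 0 ≤ S := Finset.sum_nonneg fun _ _ => sq_nonneg _
    have e1 : δ^2 * S ≤ w * q := by
      have : δ * (δ * S) ≤ w * q :=
        mul_le_mul (hw2 _) hq1 (by positivity) (inv_pos.2 (hw0 _)).le
      linarith
    have e2 : -(δ⁻¹ * |u p * f|) ≤ w * (u p * f) := by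
      have h1 : |w * (u p * f)| ≤ δ⁻¹ * |u p * f| := by
        rw [abs_mul]
        exact mul_le_mul_of_nonneg_right (hwa _) (abs_nonneg _)
      exact (abs_le.1 h1).1
    have e3 : δ⁻¹ * |u p * f| ≤ δ^2 / (8 * r^2) * (u p)^2 + 2 * r^2 / δ^4 * f^2 := by
      rw [abs_mul, ← sq_abs (u p), ← sq_abs f]
      have : δ^2 / (8 * r^2) * |u p|^2 + 2 * r^2 / δ^4 * |f|^2 - δ⁻¹ * (|u p| * |f|)
        = 2 * r^2 * (δ / (4 * r^2) * |u p| - |f| / δ^2)^2 := by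
        field_simp
        ring
      have h2 : 0 ≤ 2 * r^2 * (δ / (4 * r^2) * |u p| - |f| / δ^2)^2 := by positivity
      linarith
    linarith
  have hd1 : IntegrableOn (fun p => δ^2 * (∑ j, (pdx j u p)^2) - δ^2 / (8 * r^2) * (u p)^2)
      (Qc (n+1) r) := (hS.const_mul _).sub (hu2.const_mul _)
  rw [integral_add hti hsumi, hsum, integral_sub hd1
    (hf2.const_mul _), integral_sub (hS.const_mul _) (hu2.const_mul _), integral_const_mul,
    integral_const_mul, integral_const_mul] at hmain
  linarith

theorem stmt6 (d : ℕ) (hd : 0 < d) (δ : ℝ) (hδ : δ ∈ Set.Ioo (0 : ℝ) 1) :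
    ∃ N : ℝ, 0 < N ∧
      ∀ a : ℝ → Fin d → Fin d → ℝ,
        (∀ j k, Measurable fun s => a s j k) →
        (∀ s j k, a s j k = a s k j) →
        (∀ (s : ℝ) (θ : Fin d → ℝ),
          δ * ∑ j, (θ j) ^ 2 ≤ ∑ j, ∑ k, a s j k * θ j * θ k ∧
          ∑ j, ∑ k, a s j k * θ j * θ k ≤ δ⁻¹ * ∑ j, (θ j) ^ 2) →
        ∀ r : ℝ, 0 < r →
          ∀ (u : ℝ × (Fin d → ℝ) → ℝ) (U : Set (ℝ × (Fin d → ℝ))),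
            IsOpen U → closure (Qc d r) ⊆ U → ContDiffOn ℝ (⊤ : ℕ∞) u U →
            (∀ p ∈ pbQc d r, u p = 0) →
            r ^ 2 * (∫ p in Qc d r, ∑ j, (pdx j u p) ^ 2)
                + (∫ p in Qc d r, (u p) ^ 2)
              ≤ N * r ^ 4 * ∫ p in Qc d r,
                  (pdt u p + ∑ j, ∑ k, a (p.2 ⟨0, hd⟩) j k * pdxx j k u p) ^ 2 := by
  obtain ⟨hδ0, hδ1⟩ := hδ
  refine ⟨20 / δ^6, by positivity, ?_⟩
  intro a ham has hae r hr u U hU hQ hu hb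
  obtain ⟨n, rfl⟩ : ∃ n, d = n + 1 := ⟨d - 1, by omega⟩
  have h1 := poinc n r hr u U hU hQ hu hb
  have h2 := energy n δ hδ0 a ham has hae r hr u U hU hQ hu hb
  have h0 : (⟨0, hd⟩ : Fin (n+1)) = 0 := rfl
  rw [h0]
  set A := ∫ p in Qc (n+1) r, ∑ j, (pdx j u p)^2
  set B := ∫ p in Qc (n+1) r, (u p)^2
  set F := ∫ p in Qc (n+1) r, (pdt u p + ∑ j, ∑ k, a (p.2 0) j k * pdxx j k u p) ^ 2
  have h3 : δ^2 / (8 * r^2) * B ≤ δ^2 / 2 * A := by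
    calc δ^2 / (8 * r^2) * B ≤ δ^2 / (8 * r^2) * (4 * r^2 * A) :=
          mul_le_mul_of_nonneg_left h1 (by positivity)
      _ = δ^2 / 2 * A := by field_simp; ring
  have h4 : δ^2 / 2 * A ≤ 2 * r^2 / δ^4 * F := by linarith
  have h5 : A ≤ 4 * r^2 / δ^6 * F := by
    have h6 := mul_le_mul_of_nonneg_left h4 (show 0 ≤ 2 / δ^2 by positivity)
    calc A = 2 / δ^2 * (δ^2 / 2 * A) := by field_simp
      _ ≤ _ := h6
      _ = 4 * r^2 / δ^6 * F := by field_simp; ring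
  have h6 := mul_le_mul_of_nonneg_left h5 (show 0 ≤ 5 * r^2 by positivity)
  calc r^2 * A + B ≤ 5 * r^2 * A := by linarith
    _ ≤ _ := h6
    _ = 20 / δ^6 * r^4 * F := by field_simp; ring
end

section
/- Fix an integer d ≥ 1 and δ ∈ (0,1). Let a^{jk} : ℝ → ℝ (1 ≤ j,k ≤ d) be measurable functions of x¹ only, with a^{jk} = a^{kj} and δ|θ|² ≤ Σ_{j,k=1}^d a^{jk}(x¹) θ^j θ^k ≤ δ⁻¹|θ|² for all x¹ ∈ ℝ and θ ∈ ℝ^d. Set L₀u = u_t + Σ_{j,k} a^{jk}(x¹) u_{x^j x^k}. Let 0 < r < R. Then there exists N = N(d,δ) such that for every u smooth on an open neighborhood of the closure of Q_R: (∫_{Q_r} (|u|² + |u_t|² + |u_x|² + |u_{xx}|²) dx dt)^{1/2} ≤ N [ (∫_{Q_R} |L₀u − u|² dx dt)^{1/2} + (R−r)^{-2} (∫_{Q_R} |u|² dx dt)^{1/2} ]. -/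
open MeasureTheory

open scoped ContDiff Topology

namespace Par

variable {d : ℕ}

/-- Directional derivative. -/
noncomputable def D (w : ℝ × (Fin d → ℝ)) (f : ℝ × (Fin d → ℝ) → ℝ) : ℝ × (Fin d → ℝ) → ℝ :=
  fun p => fderiv ℝ f p w

/-- Smooth. -/
def Sm (f : ℝ × (Fin d → ℝ) → ℝ) : Prop := ContDiff ℝ ∞ f

/-- Bounded measurable. -/
def BM (f : ℝ × (Fin d → ℝ) → ℝ) : Prop := Measurable f ∧ ∃ C, ∀ p, |f p| ≤ C

/-- Bounded measurable, compactly supported. -/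
def BS (f : ℝ × (Fin d → ℝ) → ℝ) : Prop := BM f ∧ HasCompactSupport f

/-- Half space. -/
def H (d : ℕ) : Set (ℝ × (Fin d → ℝ)) := {p | 0 < p.1}

lemma measH : MeasurableSet (H d) := measurableSet_lt measurable_const measurable_fst

lemma Sm.diff {f : ℝ × (Fin d → ℝ) → ℝ} (hf : Sm f) : Differentiable ℝ f :=
  ContDiff.differentiable hf (by simp)

lemma Sm.D {f : ℝ × (Fin d → ℝ) → ℝ} (hf : Sm f) (w) : Sm (D w f) := by
  have h : ContDiff ℝ ∞ (fderiv ℝ f) := ContDiff.fderiv_right hf (m := ∞) (by simp)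
  exact h.clm_apply contDiff_const

lemma Sm.mul {f g : ℝ × (Fin d → ℝ) → ℝ} (hf : Sm f) (hg : Sm g) : Sm (fun p => f p * g p) :=
  ContDiff.mul hf hg

lemma Sm.cont {f : ℝ × (Fin d → ℝ) → ℝ} (hf : Sm f) : Continuous f := ContDiff.continuous hf

lemma D_cs {f : ℝ × (Fin d → ℝ) → ℝ} (hf : HasCompactSupport f) (w) :
    HasCompactSupport (D w f) := hf.fderiv_apply (𝕜 := ℝ) w

lemma D_mul {f g : ℝ × (Fin d → ℝ) → ℝ} (hf : Sm f) (hg : Sm g) (w p) :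
    D w (fun p => f p * g p) p = D w f p * g p + f p * D w g p := by
  unfold D
  rw [fderiv_fun_mul (hf.diff p) (hg.diff p)]
  simp; ring

lemma D_add {f g : ℝ × (Fin d → ℝ) → ℝ} (hf : Sm f) (hg : Sm g) (w p) :
    D w (fun p => f p + g p) p = D w f p + D w g p := by
  unfold D
  rw [fderiv_fun_add (hf.diff p) (hg.diff p)]
  simp

lemma D_comm {f : ℝ × (Fin d → ℝ) → ℝ} (hf : Sm f) (v w) :
    D v (D w f) = D w (D v f) := by
  funext p
  have h : ContDiff ℝ ∞ (fderiv ℝ f) := ContDiff.fderiv_right hf (m := ∞) (by simp)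
  have h2 : DifferentiableAt ℝ (fderiv ℝ f) p := h.differentiable (by simp) p
  have key := second_derivative_symmetric (𝕜 := ℝ) (f := f) (f' := fderiv ℝ f)
    (f'' := fderiv ℝ (fderiv ℝ f) p) (x := p) (fun y => (hf.diff y).hasFDerivAt)
    h2.hasFDerivAt v w
  have e : ∀ a b, D a (D b f) p = fderiv ℝ (fderiv ℝ f) p a b := by
    intro a b
    unfold D
    rw [fderiv_clm_apply h2 (differentiableAt_const b)]
    simp
  rw [e, e, key]

lemma D_congr {f g : ℝ × (Fin d → ℝ) → ℝ} {p} (h : f =ᶠ[𝓝 p] g) (w) :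
    D w f =ᶠ[𝓝 p] D w g := by
  filter_upwards [h.fderiv (𝕜 := ℝ)] with q hq
  unfold D; rw [hq]

lemma BM.mul {f g : ℝ × (Fin d → ℝ) → ℝ} (hf : BM f) (hg : BM g) : BM (fun p => f p * g p) := by
  obtain ⟨h1, C, hC⟩ := hf
  obtain ⟨h2, C', hC'⟩ := hg
  refine ⟨h1.mul h2, C * C', fun p => ?_⟩
  rw [abs_mul]
  exact mul_le_mul (hC p) (hC' p) (abs_nonneg _) ((abs_nonneg _).trans (hC p))

lemma BM.add {f g : ℝ × (Fin d → ℝ) → ℝ} (hf : BM f) (hg : BM g) : BM (fun p => f p + g p) := by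
  obtain ⟨h1, C, hC⟩ := hf
  obtain ⟨h2, C', hC'⟩ := hg
  exact ⟨h1.add h2, C + C', fun p => (abs_add_le _ _).trans (add_le_add (hC p) (hC' p))⟩

lemma BM.const (c : ℝ) : BM (fun _ : ℝ × (Fin d → ℝ) => c) :=
  ⟨measurable_const, |c|, fun _ => le_rfl⟩

lemma BM.neg {f : ℝ × (Fin d → ℝ) → ℝ} (hf : BM f) : BM (fun p => - f p) := by
  simpa using (BM.const (-1)).mul hf

lemma BM.sum {ι : Type*} (s : Finset ι) {f : ι → ℝ × (Fin d → ℝ) → ℝ} (hf : ∀ i, BM (f i)) :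
    BM (fun p => ∑ i ∈ s, f i p) := by
  classical
  induction s using Finset.induction_on with
  | empty => simpa using BM.const 0
  | insert a s ha ih => simpa [Finset.sum_insert ha] using (hf a).add ih

lemma BM.ind {f : ℝ × (Fin d → ℝ) → ℝ} (hf : BM f) {s} (hs : MeasurableSet s) :
    BM (s.indicator f) := by
  obtain ⟨h1, C, hC⟩ := hf
  refine ⟨h1.indicator hs, C, fun p => ?_⟩
  by_cases hp : p ∈ s
  · simpa [hp] using hC p
  · simpa [hp] using (abs_nonneg _).trans (hC p)

lemma BS.bm {f : ℝ × (Fin d → ℝ) → ℝ} (hf : BS f) : BM f := hf.1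

lemma Sm.bs {f : ℝ × (Fin d → ℝ) → ℝ} (hf : Sm f) (h : HasCompactSupport f) : BS f := by
  obtain ⟨C, hC⟩ := h.exists_bound_of_continuous hf.cont
  exact ⟨⟨hf.cont.measurable, C, hC⟩, h⟩

lemma BS.add {f g : ℝ × (Fin d → ℝ) → ℝ} (hf : BS f) (hg : BS g) : BS (fun p => f p + g p) :=
  ⟨hf.1.add hg.1, hf.2.add hg.2⟩

lemma BS.mul {f g : ℝ × (Fin d → ℝ) → ℝ} (hf : BM f) (hg : BS g) : BS (fun p => f p * g p) :=
  ⟨hf.mul hg.1, hg.2.mul_left⟩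

lemma BS.neg {f : ℝ × (Fin d → ℝ) → ℝ} (hf : BS f) : BS (fun p => - f p) := by
  simpa using BS.mul (BM.const (-1)) hf

lemma BS.sub {f g : ℝ × (Fin d → ℝ) → ℝ} (hf : BS f) (hg : BS g) : BS (fun p => f p - g p) := by
  simpa [sub_eq_add_neg] using hf.add hg.neg

lemma BS.sum {ι : Type*} (s : Finset ι) {f : ι → ℝ × (Fin d → ℝ) → ℝ} (hf : ∀ i, BS (f i)) :
    BS (fun p => ∑ i ∈ s, f i p) := by
  classical
  induction s using Finset.induction_on with
  | empty => exact ⟨by simpa using BM.const 0, by simp only [Finset.sum_empty]; exact HasCompactSupport.zero⟩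
  | insert a s ha ih => simpa [Finset.sum_insert ha] using (hf a).add ih

lemma BS.sq {f : ℝ × (Fin d → ℝ) → ℝ} (hf : BS f) : BS (fun p => f p ^ 2) := by
  simpa [_root_.sq] using BS.mul hf.1 hf

lemma BS.ind {f : ℝ × (Fin d → ℝ) → ℝ} (hf : BS f) {s} (hs : MeasurableSet s) :
    BS (s.indicator f) := by
  refine ⟨hf.1.ind hs, hf.2.mono fun p hp => ?_⟩
  intro h
  apply hp
  by_cases hs : p ∈ s <;> simp [hs, h]

lemma BS.int {f : ℝ × (Fin d → ℝ) → ℝ} (hf : BS f) : Integrable f := by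
  obtain ⟨⟨h1, C, hC⟩, h2⟩ := hf
  have h3 : IntegrableOn f (tsupport f) := by
    apply Measure.integrableOn_of_bounded (M := C) h2.measure_lt_top.ne h1.aestronglyMeasurable
    exact Filter.Eventually.of_forall fun p => hC p
  exact (integrableOn_iff_integrable_of_support_subset (subset_tsupport f)).1 h3

lemma BS.intH {f : ℝ × (Fin d → ℝ) → ℝ} (hf : BS f) (s : Set (ℝ × (Fin d → ℝ))) :
    IntegrableOn f s := hf.int.integrableOn

/-- invariance of `c` along `w` -/
def Inv (c : ℝ × (Fin d → ℝ) → ℝ) (w : ℝ × (Fin d → ℝ)) : Prop := ∀ p (s : ℝ), c (p + s • w) = c p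

lemma int_D_zero {c f : ℝ × (Fin d → ℝ) → ℝ} {w : ℝ × (Fin d → ℝ)} (hc : BM c) (hcw : Inv c w)
    (hw : w.1 = 0) (hf : Sm f) (hfs : HasCompactSupport f) :
    ∫ p in H d, c p * D w f p = 0 := by
  have : (volume : Measure (ℝ × (Fin d → ℝ))).IsAddHaarMeasure := by
    rw [Measure.volume_eq_prod]; infer_instance
  have key := integral_bilinear_hasLineDerivAt_right_eq_neg_left_of_integrable
    (μ := (volume : Measure (ℝ × (Fin d → ℝ))))
    (f := f) (f' := D w f) (g := (H d).indicator c) (g' := fun _ => 0) (v := w)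
    (B := ContinuousLinearMap.mul ℝ ℝ)
    (by
      have := (BS.mul (hc.ind (measH (d := d))) ((hf.D w).bs (D_cs hfs w))).int
      simpa [mul_comm] using this)
    (by simp)
    (by
      have := (BS.mul (hc.ind (measH (d := d))) (hf.bs hfs)).int
      simpa [mul_comm] using this)
    (fun x _ => ((hf.diff x).hasFDerivAt).hasLineDerivAt w)
    (fun x _ => by
      have : (fun t : ℝ => (H d).indicator c (x + t • w)) = fun _ => (H d).indicator c x := by
        funext t
        have : (x + t • w ∈ H d) ↔ x ∈ H d := by simp [H, hw]
        by_cases hx : x ∈ H d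
        · rw [Set.indicator_of_mem (this.2 hx), Set.indicator_of_mem hx, hcw]
        · rw [Set.indicator_of_notMem (fun h => hx (this.1 h)), Set.indicator_of_notMem hx]
      unfold HasLineDerivAt
      rw [this]
      exact hasDerivAt_const _ _)
  rw [← integral_indicator measH]
  simp at key
  rw [← key]
  congr 1
  funext p
  by_cases hp : p ∈ H d <;> simp [hp, mul_comm]

lemma ibp {c f g : ℝ × (Fin d → ℝ) → ℝ} {w : ℝ × (Fin d → ℝ)} (hc : BM c) (hcw : Inv c w)
    (hw : w.1 = 0) (hf : Sm f) (hfs : HasCompactSupport f) (hg : Sm g) :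
    ∫ p in H d, c p * (D w f p * g p) = - ∫ p in H d, c p * (f p * D w g p) := by
  have h0 := int_D_zero hc hcw hw (hf.mul hg) (HasCompactSupport.mul_right hfs)
  simp_rw [D_mul hf hg, mul_add] at h0
  rw [integral_add] at h0
  · linarith
  · exact (BS.mul hc (((hf.D w).mul hg).bs (D_cs hfs w).mul_right)).intH _
  · exact (BS.mul hc ((hf.mul (hg.D w)).bs hfs.mul_right)).intH _

lemma ibt {c f : ℝ × (Fin d → ℝ) → ℝ} (hc : BM c) (hcw : Inv c (1, 0)) (hc0 : ∀ p, 0 ≤ c p)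
    (hf : Sm f) (hfs : HasCompactSupport f) (hf0 : ∀ p, 0 ≤ f p) :
    ∫ p in H d, c p * D (1, 0) f p ≤ 0 := by
  have hint := (BS.mul hc ((hf.D (1, 0)).bs (D_cs hfs (1, 0)))).intH (H d)
  have hH : H d = Set.Ioi 0 ×ˢ Set.univ := by ext p; simp [H]
  have hvol : (volume : Measure (ℝ × (Fin d → ℝ))).restrict (H d)
      = (volume.restrict (Set.Ioi (0 : ℝ))).prod volume := by
    rw [hH, Measure.volume_eq_prod, ← Measure.prod_restrict, Measure.restrict_univ]
  unfold IntegrableOn at hint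
  rw [hvol] at hint ⊢
  rw [integral_prod_symm _ hint]
  apply integral_nonpos
  intro y
  simp only
  have e : ∀ t : ℝ, c (t, y) = c (0, y) := by
    intro t
    have := hcw (0, y) t
    simpa using this
  simp_rw [e]
  rw [integral_const_mul]
  have hs : ContDiff ℝ 1 (fun t : ℝ => f (t, y)) := by
    have : ContDiff ℝ 1 f := ContDiff.of_le hf (by exact_mod_cast le_top)
    exact this.comp (contDiff_id.prodMk contDiff_const)
  have hcs : HasCompactSupport (fun t : ℝ => f (t, y)) := by
    have : Topology.IsClosedEmbedding (fun t : ℝ => (t, y)) := by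
      refine Topology.IsClosedEmbedding.of_continuous_injective_isClosedMap (by fun_prop)
        (fun a b h => by simpa using h) ?_
      exact isClosedMap_prodMk_right y
    exact hfs.comp_isClosedEmbedding this
  have h1 := hcs.integral_Ioi_deriv_eq hs 0
  have h2 : ∀ t : ℝ, deriv (fun t : ℝ => f (t, y)) t = D (1, 0) f (t, y) := by
    intro t
    have a1 : HasDerivAt (fun t : ℝ => (t, y)) (1, 0) t :=
      (hasDerivAt_id t).prodMk (hasDerivAt_const t y)
    exact ((hf.diff (t, y)).hasFDerivAt.comp_hasDerivAt t a1).deriv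
  simp_rw [h2] at h1
  rw [h1]
  have := mul_nonneg (hc0 (0, y)) (hf0 (0, y))
  simp; linarith

end Par

namespace Par

variable {d : ℕ}

/-- spatial unit vector -/
noncomputable def ee (j : Fin d) : ℝ × (Fin d → ℝ) := (0, Pi.single j 1)

/-- time unit vector -/
noncomputable def et (d : ℕ) : ℝ × (Fin d → ℝ) := (1, 0)

lemma I_add {f g : ℝ × (Fin d → ℝ) → ℝ} (hf : BS f) (hg : BS g) :
    ∫ p in H d, (f p + g p) = (∫ p in H d, f p) + ∫ p in H d, g p :=
  integral_add (hf.intH _) (hg.intH _)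

lemma I_sub {f g : ℝ × (Fin d → ℝ) → ℝ} (hf : BS f) (hg : BS g) :
    ∫ p in H d, (f p - g p) = (∫ p in H d, f p) - ∫ p in H d, g p :=
  integral_sub (hf.intH _) (hg.intH _)

lemma I_sum {ι : Type*} (s : Finset ι) {f : ι → ℝ × (Fin d → ℝ) → ℝ} (hf : ∀ i, BS (f i)) :
    ∫ p in H d, (∑ i ∈ s, f i p) = ∑ i ∈ s, ∫ p in H d, f i p :=
  integral_finsetSum s fun i _ => (hf i).intH _

lemma I_mono {f g : ℝ × (Fin d → ℝ) → ℝ} (hf : BS f) (hg : BS g) (h : ∀ p ∈ H d, f p ≤ g p) :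
    ∫ p in H d, f p ≤ ∫ p in H d, g p :=
  setIntegral_mono_on (hf.intH _) (hg.intH _) measH h

lemma I_nonneg {f : ℝ × (Fin d → ℝ) → ℝ} (h : ∀ p, 0 ≤ f p) : 0 ≤ ∫ p in H d, f p :=
  integral_nonneg h

lemma I_cm (c : ℝ) (f : ℝ × (Fin d → ℝ) → ℝ) :
    ∫ p in H d, c * f p = c * ∫ p in H d, f p := integral_const_mul _ _

/-- coefficients -/
structure Co (z : Fin d) (δ : ℝ) (α : Fin d → Fin d → ℝ × (Fin d → ℝ) → ℝ) : Prop where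
  bm : ∀ j k, BM (α j k)
  inv : ∀ j k l, l ≠ z → Inv (α j k) (ee l)
  invt : ∀ j k, Inv (α j k) (et d)
  ell : ∀ p (θ : Fin d → ℝ), δ * ∑ j, (θ j) ^ 2 ≤ ∑ j, ∑ k, α j k p * θ j * θ k
  bd : ∀ j k p, |α j k p| ≤ δ⁻¹
  lo : ∀ p, δ ≤ α z z p

/-- cut-off free compactly supported smooth functions -/
def G (v : ℝ × (Fin d → ℝ) → ℝ) : Prop := Sm v ∧ HasCompactSupport v

lemma G.D {v : ℝ × (Fin d → ℝ) → ℝ} (hv : G v) (w) : G (D w v) := ⟨hv.1.D w, D_cs hv.2 w⟩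
lemma G.bs {v : ℝ × (Fin d → ℝ) → ℝ} (hv : G v) : BS v := hv.1.bs hv.2
lemma G.bm {v : ℝ × (Fin d → ℝ) → ℝ} (hv : G v) : BM v := hv.bs.1

lemma swap {c v : ℝ × (Fin d → ℝ) → ℝ} (hc : BM c) (hv : G v) {k l : Fin d} (j : Fin d)
    (hl : Inv c (ee l)) (hk : Inv c (ee k)) :
    ∫ p in H d, c p * (D (ee l) (D (ee l) v) p * D (ee j) (D (ee k) v) p)
      = ∫ p in H d, c p * (D (ee k) (D (ee l) v) p * D (ee j) (D (ee l) v) p) := by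
  have hv1 := hv.D (ee l)
  have h1 := ibp hc hl rfl hv1.1 hv1.2 ((hv.D (ee k)).D (ee j)).1
  have h2 := ibp hc hk rfl hv1.1 hv1.2 (hv1.D (ee j)).1
  rw [h1, h2]
  have : D (ee l) (D (ee j) (D (ee k) v)) = D (ee k) (D (ee j) (D (ee l) v)) := by
    rw [D_comm hv.1 (ee j) (ee k), D_comm (hv.D (ee j)).1 (ee l) (ee k), D_comm hv.1 (ee l) (ee j)]
  rw [this]

lemma ibt2 {c f : ℝ × (Fin d → ℝ) → ℝ} (hc : BM c) (hcw : Inv c (et d)) (hc0 : ∀ p, 0 ≤ c p)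
    (hf : G f) : ∫ p in H d, c p * (f p * D (et d) f p) ≤ 0 := by
  have := ibt hc hcw hc0 (hf.1.mul hf.1) hf.2.mul_right (fun p => mul_self_nonneg _)
  have e : ∀ p, c p * D (1, 0) (fun p => f p * f p) p = 2 * (c p * (f p * D (et d) f p)) := by
    intro p
    rw [D_mul hf.1 hf.1]
    unfold et
    ring
  simp_rw [e] at this
  rw [I_cm] at this
  linarith

/-- the parabolic operator minus identity -/
noncomputable def Lop (α : Fin d → Fin d → ℝ × (Fin d → ℝ) → ℝ) (v : ℝ × (Fin d → ℝ) → ℝ) :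
    ℝ × (Fin d → ℝ) → ℝ :=
  fun p => (D (et d) v p + ∑ j, ∑ k, α j k p * D (ee j) (D (ee k) v) p) - v p

lemma Lop_bs {z : Fin d} {δ} {α} (hα : Co z δ α) {v} (hv : G v) : BS (Lop α v) := by
  refine BS.sub (BS.add (hv.D _).bs (BS.sum _ fun j => BS.sum _ fun k => ?_)) hv.bs
  exact BS.mul (hα.bm j k) ((hv.D _).D _).bs

lemma b_facts {z : Fin d} {δ : ℝ} (h0 : 0 < δ) {α} (hα : Co z δ α) :
    BM (fun p => (α z z p)⁻¹) ∧ (∀ p, δ ≤ (α z z p)⁻¹) ∧ (∀ p, (α z z p)⁻¹ ≤ δ⁻¹) ∧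
    (∀ p, (α z z p)⁻¹ * α z z p = 1) ∧ (∀ l, l ≠ z → Inv (fun p => (α z z p)⁻¹) (ee l)) ∧
    Inv (fun p => (α z z p)⁻¹) (et d) := by
  have hpos : ∀ p, 0 < α z z p := fun p => h0.trans_le (hα.lo p)
  have h1 : ∀ p, (α z z p)⁻¹ ≤ δ⁻¹ := fun p => inv_anti₀ h0 (hα.lo p)
  refine ⟨⟨(hα.bm z z).1.inv, δ⁻¹, fun p => ?_⟩, fun p => ?_, h1, fun p => ?_, ?_, ?_⟩
  · rw [abs_of_pos (inv_pos.2 (hpos p))]; exact h1 p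
  · have := inv_anti₀ (hpos p) ((le_abs_self _).trans (hα.bd z z p))
    simpa using this
  · exact inv_mul_cancel₀ (hpos p).ne'
  · intro l hl p s
    simp only [hα.inv z z l hl p s]
  · intro p s
    simp only [hα.invt z z p s]

lemma energy1 {z : Fin d} {δ : ℝ} (h0 : 0 < δ) {α} (hα : Co z δ α) {v} (hv : G v)
    (l : Fin d) (hl : l ≠ z) :
    ∑ j, ∫ p in H d, (D (ee j) (D (ee l) v) p) ^ 2 ≤ (δ⁻¹) ^ 6 * ∫ p in H d, (Lop α v p) ^ 2 := by
  obtain ⟨hb, hb1, hb2, hb3, hb4, hb5⟩ := b_facts h0 hα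
  set b := fun p => (α z z p)⁻¹ with hbdef
  have hb0 : ∀ p, 0 ≤ b p := fun p => h0.le.trans (hb1 p)
  have hbs := Lop_bs hα hv
  have bsv2 : ∀ j k, BS (D (ee j) (D (ee k) v)) := fun j k => ((hv.D _).D _).bs
  have bst := (hv.D (et d)).bs
  -- swapped second order terms
  have hsw : ∀ j k, ∫ p in H d, (b p * α j k p) * (D (ee l) (D (ee l) v) p * D (ee j) (D (ee k) v) p)
      = ∫ p in H d, (b p * α j k p) * (D (ee k) (D (ee l) v) p * D (ee j) (D (ee l) v) p) := by
    intro j k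
    have hbm := hb.mul (hα.bm j k)
    have hinv : ∀ m, m ≠ z → Inv (fun p => b p * α j k p) (ee m) := by
      intro m hm p s
      simp only [hb4 m hm p s, hα.inv j k m hm p s]
    by_cases hk : k = z
    · by_cases hj : j = z
      · subst hk hj
        have : ∀ p, b p * α j j p = 1 := hb3
        simp_rw [this]
        exact swap (BM.const 1) hv j (fun _ _ => rfl) (fun _ _ => rfl)
      · have := swap hbm hv k (hinv l hl) (hinv j hj)
        rw [D_comm hv.1 (ee j) (ee k), this]
        simp_rw [mul_comm]
    · exact swap hbm hv j (hinv l hl) (hinv k hk)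
  -- time term
  have ht : 0 ≤ ∫ p in H d, b p * (D (ee l) (D (ee l) v) p * D (et d) v p) := by
    rw [ibp hb (hb4 l hl) rfl (hv.D (ee l)).1 (hv.D (ee l)).2 (hv.D (et d)).1,
      D_comm hv.1]
    have := ibt2 hb hb5 hb0 (hv.D (ee l))
    linarith
  have hz : ∫ p in H d, b p * (D (ee l) (D (ee l) v) p * v p) ≤ 0 := by
    rw [ibp hb (hb4 l hl) rfl (hv.D (ee l)).1 (hv.D (ee l)).2 hv.1]
    have : 0 ≤ ∫ p in H d, b p * (D (ee l) v p * D (ee l) v p) :=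
      I_nonneg fun p => mul_nonneg (hb0 p) (mul_self_nonneg _)
    linarith
  have b1 : BS (fun p => b p * (D (ee l) (D (ee l) v) p * D (et d) v p)) :=
    BS.mul hb (BS.mul (bsv2 l l).1 bst)
  have b2 : ∀ j k, BS (fun p => (b p * α j k p) *
      (D (ee l) (D (ee l) v) p * D (ee j) (D (ee k) v) p)) := fun j k =>
    BS.mul (hb.mul (hα.bm j k)) (BS.mul (bsv2 l l).1 (bsv2 j k))
  have b2' : ∀ j k, BS (fun p => (b p * α j k p) *
      (D (ee k) (D (ee l) v) p * D (ee j) (D (ee l) v) p)) := fun j k =>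
    BS.mul (hb.mul (hα.bm j k)) (BS.mul (bsv2 k l).1 (bsv2 j l))
  have b3 : BS (fun p => b p * (D (ee l) (D (ee l) v) p * v p)) :=
    BS.mul hb (BS.mul (bsv2 l l).1 hv.bs)
  have b4 : BS (fun p => b p * (Lop α v p * D (ee l) (D (ee l) v) p)) :=
    BS.mul hb (BS.mul hbs.1 (bsv2 l l))
  have e1 : ∫ p in H d, b p * (Lop α v p * D (ee l) (D (ee l) v) p)
      = (∫ p in H d, b p * (D (ee l) (D (ee l) v) p * D (et d) v p))
        + (∑ j, ∑ k, ∫ p in H d, (b p * α j k p) *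
            (D (ee l) (D (ee l) v) p * D (ee j) (D (ee k) v) p))
        - ∫ p in H d, b p * (D (ee l) (D (ee l) v) p * v p) := by
    simp_rw [← I_sum _ (b2 _)]
    rw [← I_sum _ (fun j => BS.sum _ (b2 j)), ← I_add b1 (BS.sum _ fun j => BS.sum _ (b2 j)),
      ← I_sub (b1.add (BS.sum _ fun j => BS.sum _ (b2 j))) b3]
    congr 1
    funext p
    simp only [Lop, sub_mul, add_mul, mul_sub, mul_add, Finset.sum_mul, Finset.mul_sum]
    congr 1
    · congr 1
      · ring
      · refine Finset.sum_congr rfl fun j _ => Finset.sum_congr rfl fun k _ => by ring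
    · ring
  simp_rw [hsw] at e1
  simp_rw [← I_sum _ (b2' _)] at e1
  rw [← I_sum _ (fun j => BS.sum _ (b2' j))] at e1
  have bq : BS (fun p => ∑ j, ∑ k, (b p * α j k p) *
            (D (ee k) (D (ee l) v) p * D (ee j) (D (ee l) v) p)) :=
    BS.sum _ fun j => BS.sum _ (b2' j)
  have bl : BS (fun p => δ ^ 2 * ∑ j, (D (ee j) (D (ee l) v) p) ^ 2) :=
    BS.mul (BM.const _) (BS.sum _ fun j => (bsv2 j l).sq)
  have br : BS (fun p => δ ^ 2 / 2 * (D (ee l) (D (ee l) v) p) ^ 2) :=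
    BS.mul (BM.const _) (bsv2 l l).sq
  have br' : BS (fun p => (δ⁻¹) ^ 4 / 2 * (Lop α v p) ^ 2) :=
    BS.mul (BM.const _) hbs.sq
  have i1 : ∫ p in H d, δ ^ 2 * ∑ j, (D (ee j) (D (ee l) v) p) ^ 2
      ≤ ∫ p in H d, ∑ j, ∑ k, (b p * α j k p) *
            (D (ee k) (D (ee l) v) p * D (ee j) (D (ee l) v) p) := by
    refine I_mono bl bq fun p _ => ?_
    have h1 := hα.ell p (fun j => D (ee j) (D (ee l) v) p)
    have h2 : ∑ j, ∑ k, (b p * α j k p) * (D (ee k) (D (ee l) v) p * D (ee j) (D (ee l) v) p)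
      = b p * ∑ j, ∑ k, α j k p * D (ee j) (D (ee l) v) p * D (ee k) (D (ee l) v) p := by
      simp only [Finset.mul_sum]
      refine Finset.sum_congr rfl fun j _ => Finset.sum_congr rfl fun k _ => by ring
    rw [h2]
    have h3 := mul_le_mul_of_nonneg_left h1 (hb0 p)
    have hS : 0 ≤ ∑ j, (D (ee j) (D (ee l) v) p) ^ 2 := Finset.sum_nonneg fun j _ => sq_nonneg _
    have h4 := mul_le_mul_of_nonneg_right (hb1 p) (mul_nonneg h0.le hS)
    nlinarith
  have i2 : ∫ p in H d, b p * (Lop α v p * D (ee l) (D (ee l) v) p)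
      ≤ ∫ p in H d, (δ ^ 2 / 2 * (D (ee l) (D (ee l) v) p) ^ 2
        + (δ⁻¹) ^ 4 / 2 * (Lop α v p) ^ 2) := by
    refine I_mono b4 (br.add br') fun p _ => ?_
    generalize Lop α v p = x
    generalize D (ee l) (D (ee l) v) p = y
    have hbp : (b p) ^ 2 ≤ (δ⁻¹) ^ 2 := pow_le_pow_left₀ (hb0 p) (hb2 p) 2
    have hδ : δ * δ⁻¹ = 1 := mul_inv_cancel₀ h0.ne'
    have h1 : b p * (x * y) ≤ δ ^ 2 / 2 * y ^ 2 + (δ⁻¹) ^ 2 / 2 * (b p) ^ 2 * x ^ 2 := by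
      have := sq_nonneg (δ * y - δ⁻¹ * b p * x)
      have e : (δ * y - δ⁻¹ * b p * x) ^ 2
        = δ ^ 2 * y ^ 2 - 2 * (δ * δ⁻¹) * (b p * (x * y)) + (δ⁻¹) ^ 2 * (b p) ^ 2 * x ^ 2 := by ring
      rw [e, hδ] at this
      linarith
    have h2 : (δ⁻¹) ^ 2 / 2 * (b p) ^ 2 * x ^ 2 ≤ (δ⁻¹) ^ 2 / 2 * (δ⁻¹) ^ 2 * x ^ 2 := by gcongr
    have e : (δ⁻¹) ^ 2 / 2 * (δ⁻¹) ^ 2 * x ^ 2 = (δ⁻¹) ^ 4 / 2 * x ^ 2 := by ring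
    linarith
  rw [I_add br br', I_cm, I_cm] at i2
  rw [I_cm, I_sum _ fun j => (bsv2 j l).sq] at i1
  have i3 : ∫ p in H d, (D (ee l) (D (ee l) v) p) ^ 2
      ≤ ∑ j, ∫ p in H d, (D (ee j) (D (ee l) v) p) ^ 2 :=
    Finset.single_le_sum (f := fun j => ∫ p in H d, (D (ee j) (D (ee l) v) p) ^ 2)
      (fun j _ => I_nonneg fun p => sq_nonneg _) (Finset.mem_univ l)
  generalize ∑ j, ∫ p in H d, (D (ee j) (D (ee l) v) p) ^ 2 = S at *
  generalize ∫ p in H d, (Lop α v p) ^ 2 = X at *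
  have i4 : δ ^ 2 * S ≤ (δ⁻¹) ^ 4 * X := by nlinarith [sq_nonneg δ]
  have hδ : δ * δ⁻¹ = 1 := mul_inv_cancel₀ h0.ne'
  calc S = (δ * δ⁻¹) ^ 2 * S := by rw [hδ]; ring
    _ = (δ⁻¹) ^ 2 * (δ ^ 2 * S) := by ring
    _ ≤ (δ⁻¹) ^ 2 * ((δ⁻¹) ^ 4 * X) := mul_le_mul_of_nonneg_left i4 (by positivity)
    _ = (δ⁻¹) ^ 6 * X := by ring

end Par

namespace Par

variable {d : ℕ}

lemma energy2 {z : Fin d} {δ : ℝ} (h0 : 0 < δ) {α} (hα : Co z δ α) {v} (hv : G v)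
    {g : ℝ × (Fin d → ℝ) → ℝ}
    (hg : ∀ p, g p = D (et d) v p + α z z p * D (ee z) (D (ee z) v) p - v p) :
    (∫ p in H d, (D (et d) v p) ^ 2 ≤ (δ⁻¹) ^ 2 * ∫ p in H d, (g p) ^ 2) ∧
    (∫ p in H d, (v p) ^ 2 ≤ (δ⁻¹) ^ 2 * ∫ p in H d, (g p) ^ 2) ∧
    (∫ p in H d, (D (ee z) (D (ee z) v) p) ^ 2
      ≤ 3 * (δ⁻¹) ^ 2 * (1 + 2 * (δ⁻¹) ^ 2) * ∫ p in H d, (g p) ^ 2) := by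
  obtain ⟨hb, hb1, hb2, hb3, hb4, hb5⟩ := b_facts h0 hα
  set b := fun p => (α z z p)⁻¹ with hbdef
  have hb0 : ∀ p, 0 ≤ b p := fun p => h0.le.trans (hb1 p)
  have bsz := ((hv.D (ee z)).D (ee z)).bs
  have bst := (hv.D (et d)).bs
  have bsg : BS g := by
    have : g = fun p => D (et d) v p + α z z p * D (ee z) (D (ee z) v) p - v p := funext hg
    rw [this]
    exact (bst.add (BS.mul (hα.bm z z) bsz)).sub hv.bs
  have hδ : δ * δ⁻¹ = 1 := mul_inv_cancel₀ h0.ne'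
  have hi0 : 0 < δ⁻¹ := inv_pos.2 h0
  have hone : ∀ w : ℝ × (Fin d → ℝ), Inv (fun _ : ℝ × (Fin d → ℝ) => (1 : ℝ)) w :=
    fun _ _ _ => rfl
  -- basic sign facts
  have s1 : ∫ p in H d, b p * (v p * D (et d) v p) ≤ 0 := ibt2 hb hb5 hb0 hv
  have s2 : 0 ≤ ∫ p in H d, 1 * (D (ee z) (D (ee z) v) p * D (et d) v p) := by
    rw [ibp (BM.const 1) (hone _) rfl (hv.D (ee z)).1 (hv.D (ee z)).2 (hv.D (et d)).1,
      D_comm hv.1]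
    have := ibt2 (BM.const 1) (hone _) (fun _ => zero_le_one) (hv.D (ee z))
    linarith
  have s3 : ∫ p in H d, 1 * (D (ee z) (D (ee z) v) p * v p) ≤ 0 := by
    rw [ibp (BM.const 1) (hone _) rfl (hv.D (ee z)).1 (hv.D (ee z)).2 hv.1]
    have : 0 ≤ ∫ p in H d, 1 * (D (ee z) v p * D (ee z) v p) :=
      I_nonneg fun p => mul_nonneg zero_le_one (mul_self_nonneg _)
    linarith
  have c1 : BS fun p => b p * (v p * D (et d) v p) := BS.mul hb (BS.mul hv.bm bst)
  have c2 : BS fun p => 1 * (D (ee z) (D (ee z) v) p * D (et d) v p) :=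
    BS.mul (BM.const 1) (BS.mul bsz.1 bst)
  have c3 : BS fun p => 1 * (D (ee z) (D (ee z) v) p * v p) :=
    BS.mul (BM.const 1) (BS.mul bsz.1 hv.bs)
  have c4 : BS fun p => δ / 2 * (D (et d) v p) ^ 2 := BS.mul (BM.const _) bst.sq
  have c5 : BS fun p => δ⁻¹ / 2 * (g p) ^ 2 := BS.mul (BM.const _) bsg.sq
  have c6 : BS fun p => δ / 2 * (v p) ^ 2 := BS.mul (BM.const _) hv.bs.sq
  have pw : ∀ p (y x : ℝ), δ / 2 * y ^ 2 - δ⁻¹ / 2 * x ^ 2 ≤ b p * (y ^ 2 - x * y) := by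
    intro p y x
    have h1 : δ * y ^ 2 ≤ b p * y ^ 2 := mul_le_mul_of_nonneg_right (hb1 p) (sq_nonneg _)
    have h2 : b p * x ^ 2 ≤ δ⁻¹ * x ^ 2 := mul_le_mul_of_nonneg_right (hb2 p) (sq_nonneg _)
    have h3 := mul_nonneg (hb0 p) (sq_nonneg (x - y))
    nlinarith
  have A1 : ∫ p in H d, (D (et d) v p) ^ 2 ≤ (δ⁻¹) ^ 2 * ∫ p in H d, (g p) ^ 2 := by
    have := I_mono (c4.sub c5) (c1.sub c2) (fun p _ => by
      have h1 := pw p (D (et d) v p) (g p)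
      have h2 : b p * ((D (et d) v p) ^ 2 - g p * D (et d) v p)
        = b p * (v p * D (et d) v p) - (b p * α z z p) *
          (D (ee z) (D (ee z) v) p * D (et d) v p) := by rw [hg]; ring
      rw [hb3] at h2
      exact h1.trans h2.le)
    rw [I_sub c4 c5, I_sub c1 c2, I_cm, I_cm] at this
    generalize ∫ p in H d, (D (et d) v p) ^ 2 = S at *
    generalize ∫ p in H d, (g p) ^ 2 = X at *
    have h : δ * S ≤ δ⁻¹ * X := by linarith
    calc S = δ⁻¹ * (δ * S) := by rw [← mul_assoc, mul_comm δ⁻¹, hδ, one_mul]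
      _ ≤ δ⁻¹ * (δ⁻¹ * X) := mul_le_mul_of_nonneg_left h hi0.le
      _ = _ := by ring
  have A2 : ∫ p in H d, (v p) ^ 2 ≤ (δ⁻¹) ^ 2 * ∫ p in H d, (g p) ^ 2 := by
    have := I_mono (c6.sub c5) (c1.add c3) (fun p _ => by
      have h1 := pw p (v p) (- g p)
      have h2 : b p * ((v p) ^ 2 - (- g p) * v p)
        = b p * (v p * D (et d) v p) + (b p * α z z p) *
          (D (ee z) (D (ee z) v) p * v p) := by rw [hg]; ring
      rw [hb3] at h2
      rw [neg_sq] at h1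
      exact h1.trans h2.le)
    rw [I_sub c6 c5, I_add c1 c3, I_cm, I_cm] at this
    generalize ∫ p in H d, (v p) ^ 2 = S at *
    generalize ∫ p in H d, (g p) ^ 2 = X at *
    have h : δ * S ≤ δ⁻¹ * X := by linarith
    calc S = δ⁻¹ * (δ * S) := by rw [← mul_assoc, mul_comm δ⁻¹, hδ, one_mul]
      _ ≤ δ⁻¹ * (δ⁻¹ * X) := mul_le_mul_of_nonneg_left h hi0.le
      _ = _ := by ring
  refine ⟨A1, A2, ?_⟩
  have := I_mono bsz.sq (BS.mul (BM.const (3 * (δ⁻¹) ^ 2)) ((bsg.sq.add bst.sq).add hv.bs.sq))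
    (fun p _ => by
      have h1 : D (ee z) (D (ee z) v) p = b p * (g p - D (et d) v p + v p) := by
        have : b p * (g p - D (et d) v p + v p)
          = (b p * α z z p) * D (ee z) (D (ee z) v) p := by rw [hg]; ring
        rw [this, hb3, one_mul]
      rw [h1, mul_pow]
      have hbp : (b p) ^ 2 ≤ (δ⁻¹) ^ 2 := pow_le_pow_left₀ (hb0 p) (hb2 p) 2
      have h2 : (g p - D (et d) v p + v p) ^ 2 ≤ 3 * ((g p) ^ 2 + (D (et d) v p) ^ 2 + (v p) ^ 2) := by
        nlinarith [sq_nonneg (g p + D (et d) v p), sq_nonneg (g p - v p),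
          sq_nonneg (D (et d) v p + v p)]
      calc _ ≤ (δ⁻¹) ^ 2 * (3 * ((g p) ^ 2 + (D (et d) v p) ^ 2 + (v p) ^ 2)) :=
            mul_le_mul hbp h2 (sq_nonneg _) (sq_nonneg _)
        _ = _ := by ring)
  rw [I_cm, I_add (bsg.sq.add bst.sq) hv.bs.sq, I_add bsg.sq bst.sq] at this
  refine this.trans ?_
  have : (0 : ℝ) ≤ 3 * (δ⁻¹) ^ 2 := by positivity
  have h2 := mul_le_mul_of_nonneg_left (add_le_add A1 A2) this
  nlinarith

/-- full norm squared -/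
noncomputable def tot (v : ℝ × (Fin d → ℝ) → ℝ) : ℝ × (Fin d → ℝ) → ℝ :=
  fun p => (v p) ^ 2 + (D (et d) v p) ^ 2 + (∑ j, (D (ee j) v p) ^ 2)
    + ∑ j, ∑ k, (D (ee j) (D (ee k) v) p) ^ 2

lemma tot_bs {v : ℝ × (Fin d → ℝ) → ℝ} (hv : G v) : BS (tot v) :=
  ((hv.bs.sq.add (hv.D _).bs.sq).add (BS.sum _ fun j => (hv.D _).bs.sq)).add
    (BS.sum _ fun j => BS.sum _ fun k => ((hv.D _).D _).bs.sq)

lemma globalEst (d : ℕ) {δ : ℝ} (h0 : 0 < δ) : ∃ C : ℝ, 0 < C ∧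
    ∀ (z : Fin d) (α : Fin d → Fin d → ℝ × (Fin d → ℝ) → ℝ), Co z δ α →
    ∀ v : ℝ × (Fin d → ℝ) → ℝ, G v →
      ∫ p in H d, tot v p ≤ C * ∫ p in H d, (Lop α v p) ^ 2 := by
  obtain ⟨κ, hκ⟩ : ∃ κ, κ = δ⁻¹ := ⟨_, rfl⟩
  have hκ0 : 0 < κ := hκ ▸ inv_pos.2 h0
  obtain ⟨C2, hC2⟩ : ∃ C2 : ℝ, C2 = 2 + 2 * (d : ℝ) ^ 4 * κ ^ 8 := ⟨_, rfl⟩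
  have hC20 : 0 < C2 := by rw [hC2]; positivity
  obtain ⟨C3, hC3⟩ : ∃ C3 : ℝ, C3 = 3 * κ ^ 2 * (1 + 2 * κ ^ 2) * C2 + κ ^ 6 + κ ^ 2 * C2 :=
    ⟨_, rfl⟩
  have hC30 : 0 < C3 := by rw [hC3]; positivity
  refine ⟨C3 + C3 + d * C3 + d * (d * C3), by positivity, ?_⟩
  intro z α hα v hv
  have bsL := Lop_bs hα hv
  have bs2 : ∀ j k, BS (D (ee j) (D (ee k) v)) := fun j k => ((hv.D _).D _).bs
  obtain ⟨X, hX⟩ : ∃ X, X = ∫ p in H d, (Lop α v p) ^ 2 := ⟨_, rfl⟩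
  have hX0 : 0 ≤ X := hX ▸ I_nonneg fun p => sq_nonneg _
  have T1 : ∀ j l, l ≠ z → ∫ p in H d, (D (ee j) (D (ee l) v) p) ^ 2 ≤ κ ^ 6 * X := by
    intro j l hl
    have := energy1 h0 hα hv l hl
    rw [← hX, ← hκ] at this
    refine le_trans ?_ this
    exact Finset.single_le_sum (f := fun j => ∫ p in H d, (D (ee j) (D (ee l) v) p) ^ 2)
      (fun j _ => I_nonneg fun p => sq_nonneg _) (Finset.mem_univ j)
  have T2 : ∀ j l, ¬ (j = z ∧ l = z) → ∫ p in H d, (D (ee j) (D (ee l) v) p) ^ 2 ≤ κ ^ 6 * X := by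
    intro j l hjl
    by_cases hl : l = z
    · rw [D_comm hv.1]; exact T1 l j (fun h => hjl ⟨h, hl⟩)
    · exact T1 j l hl
  let β : Fin d → Fin d → ℝ × (Fin d → ℝ) → ℝ := fun j k p => if j = z ∧ k = z then 0 else α j k p
  have hβ : ∀ j k, BM (β j k) := by
    intro j k
    by_cases h : j = z ∧ k = z
    · simpa [β, h] using BM.const 0
    · simpa [β, h] using hα.bm j k
  let g : ℝ × (Fin d → ℝ) → ℝ := fun p => D (et d) v p + α z z p * D (ee z) (D (ee z) v) p - v p
  have bsS : BS fun p => ∑ j, ∑ k, β j k p * D (ee j) (D (ee k) v) p :=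
    BS.sum _ fun j => BS.sum _ fun k => BS.mul (hβ j k) (bs2 j k)
  have hgL : ∀ p, g p = Lop α v p - ∑ j, ∑ k, β j k p * D (ee j) (D (ee k) v) p := by
    intro p
    have : ∑ j, ∑ k, α j k p * D (ee j) (D (ee k) v) p
        = α z z p * D (ee z) (D (ee z) v) p + ∑ j, ∑ k, β j k p * D (ee j) (D (ee k) v) p := by
      have e : ∀ j k, α j k p * D (ee j) (D (ee k) v) p
        = (if j = z then (if k = z then α z z p * D (ee z) (D (ee z) v) p else 0) else 0)
          + β j k p * D (ee j) (D (ee k) v) p := by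
        intro j k
        by_cases hj : j = z <;> by_cases hk : k = z <;> simp [β, hj, hk]
      rw [Finset.sum_congr rfl fun j _ => Finset.sum_congr rfl fun k _ => e j k]
      simp only [Finset.sum_add_distrib]
      simp
    simp only [g, Lop, this]
    ring
  have hG : ∫ p in H d, (g p) ^ 2 ≤ C2 * X := by
    have bsR : BS fun p => (2 * (d : ℝ) ^ 2 * κ ^ 2) * ∑ j, ∑ k,
        (if j = z ∧ k = z then (fun _ => 0) else fun p => (D (ee j) (D (ee k) v) p) ^ 2) p := by
      refine BS.mul (BM.const _) (BS.sum _ fun j => BS.sum _ fun k => ?_)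
      by_cases h : j = z ∧ k = z
      · simpa [h] using BS.mul (BM.const 0) (bs2 z z)
      · simpa [h] using (bs2 j k).sq
    have bsq : ∀ j k, BS (if j = z ∧ k = z then (fun _ => 0) else
        fun p => (D (ee j) (D (ee k) v) p) ^ 2) := by
      intro j k
      by_cases h : j = z ∧ k = z
      · simpa [h] using BS.mul (BM.const 0) (bs2 z z)
      · simpa [h] using (bs2 j k).sq
    have bsg : BS g := by
      have : g = fun p => _ := funext hgL
      rw [this]; exact bsL.sub bsS
    have := I_mono bsg.sq ((BS.mul (BM.const 2) bsL.sq).add bsR) (fun p _ => by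
      rw [hgL]
      have h1 : (∑ j, ∑ k, β j k p * D (ee j) (D (ee k) v) p) ^ 2
          ≤ d * ∑ j, (d * ∑ k, (β j k p * D (ee j) (D (ee k) v) p) ^ 2) := by
        have a1 := sq_sum_le_card_mul_sum_sq (s := Finset.univ)
          (f := fun j => ∑ k, β j k p * D (ee j) (D (ee k) v) p)
        simp only [Finset.card_univ, Fintype.card_fin] at a1
        refine a1.trans ?_
        gcongr with j
        have a2 := sq_sum_le_card_mul_sum_sq (s := Finset.univ)
          (f := fun k => β j k p * D (ee j) (D (ee k) v) p)
        simpa only [Finset.card_univ, Fintype.card_fin] using a2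
      have h2 : ∀ j k, (β j k p * D (ee j) (D (ee k) v) p) ^ 2 ≤ κ ^ 2 *
        (if j = z ∧ k = z then (fun _ => 0) else fun p => (D (ee j) (D (ee k) v) p) ^ 2) p := by
        intro j k
        by_cases h : j = z ∧ k = z
        · simp [β, h]
        · simp only [β, h, if_false, mul_pow]
          have : (α j k p) ^ 2 ≤ κ ^ 2 := by
            rw [← sq_abs, hκ]; exact pow_le_pow_left₀ (abs_nonneg _) (hα.bd j k p) 2
          exact mul_le_mul_of_nonneg_right this (sq_nonneg _)
      have h3 : (d : ℝ) * ∑ j, (d * ∑ k, (β j k p * D (ee j) (D (ee k) v) p) ^ 2)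
        ≤ d * ∑ j, (d * ∑ k, κ ^ 2 * (if j = z ∧ k = z then (fun _ => 0)
            else fun p => (D (ee j) (D (ee k) v) p) ^ 2) p) := by
        gcongr with j _ k _
        exact h2 j k
      have h4 : d * ∑ j, (d * ∑ k, κ ^ 2 * (if j = z ∧ k = z then (fun _ => 0)
            else fun p => (D (ee j) (D (ee k) v) p) ^ 2) p)
          = (d : ℝ) ^ 2 * κ ^ 2 * ∑ j, ∑ k, (if j = z ∧ k = z then (fun _ => 0)
            else fun p => (D (ee j) (D (ee k) v) p) ^ 2) p := by
        simp only [Finset.mul_sum]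
        refine Finset.sum_congr rfl fun j _ => Finset.sum_congr rfl fun k _ => by ring
      rw [h4] at h3
      have h5 := h1.trans h3
      generalize ∑ j, ∑ k, β j k p * D (ee j) (D (ee k) v) p = s at *
      have : (Lop α v p - s) ^ 2 ≤ 2 * (Lop α v p) ^ 2 + 2 * s ^ 2 := by
        nlinarith [sq_nonneg (Lop α v p + s)]
      refine this.trans ?_
      nlinarith)
    rw [I_add (BS.mul (BM.const 2) bsL.sq) bsR, I_cm, I_cm,
      I_sum _ (fun j => BS.sum _ (bsq j))] at this
    simp_rw [fun j => I_sum Finset.univ (bsq j)] at this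
    have hs : ∑ j, ∑ k, ∫ p in H d, (if j = z ∧ k = z then (fun _ => 0)
            else fun p => (D (ee j) (D (ee k) v) p) ^ 2) p ≤ d * (d * (κ ^ 6 * X)) := by
      calc _ ≤ ∑ j : Fin d, ∑ k : Fin d, κ ^ 6 * X := by
            gcongr with j _ k _
            by_cases h : j = z ∧ k = z
            · simp only [h, and_self, if_true, integral_zero]; positivity
            · simp only [h, if_false]; exact T2 j k h
        _ = _ := by simp
    rw [← hX] at this
    have h6 := mul_le_mul_of_nonneg_left hs (show (0 : ℝ) ≤ 2 * (d : ℝ) ^ 2 * κ ^ 2 by positivity)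
    rw [hC2]
    nlinarith
  obtain ⟨A1, A2, A3⟩ := energy2 h0 hα hv (g := g) (fun p => rfl)
  rw [← hκ] at A1 A2 A3
  have hz : ∀ c, 0 ≤ c → c * ∫ p in H d, (g p) ^ 2 ≤ c * (C2 * X) := fun c hc =>
    mul_le_mul_of_nonneg_left hG hc
  have q1 : 0 ≤ κ ^ 2 * C2 * X := by positivity
  have q2 : 0 ≤ κ ^ 6 * X := by positivity
  have q3 : 0 ≤ 3 * κ ^ 2 * (1 + 2 * κ ^ 2) * C2 * X := by positivity
  have F1 : ∫ p in H d, (D (et d) v p) ^ 2 ≤ C3 * X := by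
    have := A1.trans (hz _ (by positivity)); rw [hC3]; nlinarith
  have F2 : ∫ p in H d, (v p) ^ 2 ≤ C3 * X := by
    have := A2.trans (hz _ (by positivity)); rw [hC3]; nlinarith
  have F3 : ∀ j k, ∫ p in H d, (D (ee j) (D (ee k) v) p) ^ 2 ≤ C3 * X := by
    intro j k
    by_cases h : j = z ∧ k = z
    · rw [h.1, h.2]
      have := A3.trans (hz _ (by positivity)); rw [hC3]; nlinarith
    · have := T2 j k h
      rw [hC3]; nlinarith
  have F4 : ∀ j, ∫ p in H d, (D (ee j) v p) ^ 2 ≤ C3 * X := by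
    intro j
    have h1 := ibp (BM.const 1) (fun _ _ => rfl) rfl (f := v) (g := D (ee j) v) (w := ee j)
      hv.1 hv.2 (hv.D _).1
    have h2 := I_mono (BS.mul (BM.const (-1)) (BS.mul hv.bm (bs2 j j)))
      (BS.mul (BM.const (1 / 2)) (hv.bs.sq.add (bs2 j j).sq)) (fun p _ => by
        nlinarith [sq_nonneg (v p + D (ee j) (D (ee j) v) p)])
    rw [I_cm, I_cm, I_add hv.bs.sq (bs2 j j).sq] at h2
    simp only [one_mul, ← sq] at h1
    have := F3 j j
    linarith
  have e : ∫ p in H d, tot v p = (∫ p in H d, (v p) ^ 2) + (∫ p in H d, (D (et d) v p) ^ 2)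
      + (∑ j, ∫ p in H d, (D (ee j) v p) ^ 2)
      + ∑ j, ∑ k, ∫ p in H d, (D (ee j) (D (ee k) v) p) ^ 2 := by
    have b1 : BS fun p => (v p) ^ 2 := hv.bs.sq
    have b2 : BS fun p => (D (et d) v p) ^ 2 := (hv.D _).bs.sq
    have b3 : ∀ j, BS fun p => (D (ee j) v p) ^ 2 := fun j => (hv.D _).bs.sq
    have b4 : ∀ j k, BS fun p => (D (ee j) (D (ee k) v) p) ^ 2 := fun j k => (bs2 j k).sq
    unfold tot
    rw [I_add ((b1.add b2).add (BS.sum _ b3)) (BS.sum _ fun j => BS.sum _ (b4 j)),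
      I_add (b1.add b2) (BS.sum _ b3), I_add b1 b2, I_sum _ b3, I_sum _ fun j => BS.sum _ (b4 j)]
    simp_rw [fun j => I_sum Finset.univ (b4 j)]
  rw [e, ← hX]
  have k1 : ∑ j, ∫ p in H d, (D (ee j) v p) ^ 2 ≤ d * (C3 * X) := by
    calc _ ≤ ∑ j : Fin d, C3 * X := Finset.sum_le_sum fun j _ => F4 j
      _ = _ := by simp
  have k2 : ∑ j, ∑ k, ∫ p in H d, (D (ee j) (D (ee k) v) p) ^ 2 ≤ d * (d * (C3 * X)) := by
    calc _ ≤ ∑ j : Fin d, ∑ k : Fin d, C3 * X :=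
          Finset.sum_le_sum fun j _ => Finset.sum_le_sum fun k _ => F3 j k
      _ = _ := by simp
  linarith

end Par

namespace Par

variable {d : ℕ}

lemma D_chain {g : ℝ → ℝ} {q : ℝ × (Fin d → ℝ) → ℝ} (hg : Differentiable ℝ g) (hq : Sm q) (w p) :
    D w (fun p => g (q p)) p = deriv g (q p) * D w q p := by
  have h := (hg (q p)).hasDerivAt.comp_hasFDerivAt p (hq.diff p).hasFDerivAt
  unfold D
  have e : (fun p => g (q p)) = g ∘ q := rfl
  rw [e, h.fderiv]
  simp

lemma transition_bd : ∃ M : ℝ, 0 < M ∧ (∀ x, |deriv Real.smoothTransition x| ≤ M) ∧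
    ∀ x, |deriv (deriv Real.smoothTransition) x| ≤ M := by
  have hs : ContDiff ℝ ∞ Real.smoothTransition := Real.smoothTransition.contDiff
  have hs1 : ContDiff ℝ ∞ (deriv Real.smoothTransition) := by
    have := (contDiff_infty_iff_deriv (𝕜 := ℝ)).1 hs
    exact this.2
  have hs2 : ContDiff ℝ ∞ (deriv (deriv Real.smoothTransition)) :=
    ((contDiff_infty_iff_deriv (𝕜 := ℝ)).1 hs1).2
  have hcs : HasCompactSupport (deriv Real.smoothTransition) := by
    refine HasCompactSupport.intro (isCompact_Icc (a := (0 : ℝ)) (b := 1)) fun x hx => ?_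
    simp only [Set.mem_Icc, not_and_or, not_le] at hx
    rcases hx with hx | hx
    · have : Real.smoothTransition =ᶠ[𝓝 x] fun _ => 0 := by
        filter_upwards [Iio_mem_nhds hx] with y hy
        exact Real.smoothTransition.zero_of_nonpos hy.le
      rw [this.deriv_eq]; simp
    · have : Real.smoothTransition =ᶠ[𝓝 x] fun _ => 1 := by
        filter_upwards [Ioi_mem_nhds hx] with y hy
        exact Real.smoothTransition.one_of_one_le hy.le
      rw [this.deriv_eq]; simp
  obtain ⟨M1, h1⟩ := hcs.exists_bound_of_continuous hs1.continuous
  obtain ⟨M2, h2⟩ := hcs.deriv.exists_bound_of_continuous hs2.continuous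
  refine ⟨max M1 M2 + 1, ?_, fun x => ?_, fun x => ?_⟩
  · have := (norm_nonneg _).trans (h1 0)
    have := le_max_left M1 M2
    linarith
  · have := h1 x
    have := le_max_left M1 M2
    rw [Real.norm_eq_abs] at *
    linarith
  · have := h2 x
    have := le_max_right M1 M2
    rw [Real.norm_eq_abs] at *
    linarith

lemma cutoff : ∃ K : ℝ, 0 < K ∧ ∀ (d : ℕ) (r R : ℝ), 0 < r → r < R →
    ∃ η : ℝ × (Fin d → ℝ) → ℝ, Sm η ∧ (∀ p, 0 ≤ η p) ∧ (∀ p, η p ≤ 1) ∧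
      (∀ p ∈ Qc d r, η p = 1) ∧ (∀ p ∈ H d, p ∉ Qc d R → η p = 0) ∧
      ∀ p ∈ Qc d R, |D (et d) η p| ≤ K * ((R - r)⁻¹) ^ 2 ∧
        (∀ j, |D (ee j) η p| ≤ K * (R - r)⁻¹) ∧
        ∀ j k, |D (ee j) (D (ee k) η) p| ≤ K * ((R - r)⁻¹) ^ 2 := by
  obtain ⟨M, hM, hM1, hM2⟩ := transition_bd
  refine ⟨6 * M, by positivity, ?_⟩
  intro d r R hr hrR
  set s := Real.smoothTransition with hsdef
  have hs : ContDiff ℝ ∞ s := Real.smoothTransition.contDiff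
  have hs1 : ContDiff ℝ ∞ (deriv s) := ((contDiff_infty_iff_deriv (𝕜 := ℝ)).1 hs).2
  obtain ⟨W, hW⟩ : ∃ W, W = R ^ 2 - r ^ 2 := ⟨_, rfl⟩
  obtain ⟨ρ, hρ⟩ : ∃ ρ, ρ = R - r := ⟨_, rfl⟩
  have hρ0 : 0 < ρ := by rw [hρ]; linarith
  have hWρ : ρ ^ 2 ≤ W := by rw [hρ, hW]; nlinarith
  have hWR : ρ * R ≤ W := by rw [hρ, hW]; nlinarith
  have hW0 : 0 < W := by have := pow_pos hρ0 2; linarith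
  let q1 : ℝ × (Fin d → ℝ) → ℝ := fun p => (R ^ 2 - p.1) / W
  let q2 : ℝ × (Fin d → ℝ) → ℝ := fun p => (R ^ 2 - ∑ i, (p.2 i) ^ 2) / W
  have hq1 : Sm q1 := by unfold Sm; fun_prop
  have hq2 : Sm q2 := by unfold Sm; fun_prop
  have hlin : ∀ i : Fin d, Sm (d := d) (fun p => p.2 i) := by intro i; unfold Sm; fun_prop
  have dlin : ∀ (i : Fin d) (w p), D (d := d) w (fun p => p.2 i) p = w.2 i := by
    intro i w p
    have h : HasFDerivAt (fun p : ℝ × (Fin d → ℝ) => p.2 i)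
      ((ContinuousLinearMap.proj i).comp (ContinuousLinearMap.snd ℝ ℝ (Fin d → ℝ))) p :=
      ((ContinuousLinearMap.proj (R := ℝ) (φ := fun _ : Fin d => ℝ) i).comp
            (ContinuousLinearMap.snd ℝ ℝ (Fin d → ℝ))).hasFDerivAt
    unfold D
    rw [h.fderiv]; simp
  have dq1 : ∀ w p, D (d := d) w q1 p = - w.1 / W := by
    intro w p
    have h : HasFDerivAt q1 (W⁻¹ • (- ContinuousLinearMap.fst ℝ ℝ (Fin d → ℝ))) p := by
      have := ((hasFDerivAt_fst (𝕜 := ℝ) (p := p)).const_sub (R ^ 2)).const_mul W⁻¹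
      have e : q1 = fun y => W⁻¹ * (R ^ 2 - y.1) := by funext y; simp only [q1]; field_simp
      rw [e]; exact this
    unfold D
    rw [h.fderiv]; simp; field_simp
  have dq2 : ∀ w p, D (d := d) w q2 p = - (∑ i, 2 * p.2 i * w.2 i) / W := by
    intro w p
    have h : HasFDerivAt q2 (W⁻¹ • (- ∑ i : Fin d, (2 * p.2 i) •
        ((ContinuousLinearMap.proj i).comp (ContinuousLinearMap.snd ℝ ℝ (Fin d → ℝ)) :
          (ℝ × (Fin d → ℝ)) →L[ℝ] ℝ))) p := by
      have h1 : ∀ i ∈ (Finset.univ : Finset (Fin d)), HasFDerivAt (fun p : ℝ × (Fin d → ℝ) => (p.2 i) ^ 2) ((2 * p.2 i) •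
        ((ContinuousLinearMap.proj i).comp (ContinuousLinearMap.snd ℝ ℝ (Fin d → ℝ)) :
          (ℝ × (Fin d → ℝ)) →L[ℝ] ℝ)) p := by
        intro i _
        have h : HasFDerivAt (fun p : ℝ × (Fin d → ℝ) => p.2 i)
          ((ContinuousLinearMap.proj i).comp (ContinuousLinearMap.snd ℝ ℝ (Fin d → ℝ))) p :=
          ((ContinuousLinearMap.proj (R := ℝ) (φ := fun _ : Fin d => ℝ) i).comp
            (ContinuousLinearMap.snd ℝ ℝ (Fin d → ℝ))).hasFDerivAt
        have := h.pow 2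
        simpa using this
      have := ((HasFDerivAt.fun_sum h1).const_sub (R ^ 2)).const_mul W⁻¹
      have e : q2 = fun y => W⁻¹ * (R ^ 2 - ∑ i, (y.2 i) ^ 2) := by
        funext y; simp only [q2]; field_simp
      rw [e]; exact this
    unfold D
    rw [h.fderiv]; simp; field_simp
  have hφ : Sm (fun p => s (q1 p)) := ContDiff.comp hs hq1
  have hψ : Sm (fun p => s (q2 p)) := ContDiff.comp hs hq2
  have hψ1 : Sm (fun p => deriv s (q2 p)) := ContDiff.comp hs1 hq2
  have hsd : Differentiable ℝ s := hs.differentiable (by simp)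
  have hsd1 : Differentiable ℝ (deriv s) := hs1.differentiable (by simp)
  have s0 : ∀ x, 0 ≤ s x := Real.smoothTransition.nonneg
  have s1 : ∀ x, s x ≤ 1 := Real.smoothTransition.le_one
  have sa : ∀ x, |s x| ≤ 1 := fun x => by rw [abs_of_nonneg (s0 x)]; exact s1 x
  have dk : ∀ k, D (ee k) (fun p => s (q1 p) * s (q2 p))
      = fun p => s (q1 p) * (deriv s (q2 p) * (-2 / W * p.2 k)) := by
    intro k
    funext p
    rw [D_mul hφ hψ, D_chain hsd hq1, D_chain hsd hq2, dq1, dq2]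
    simp [ee, Pi.single_apply]
    ring_nf
    simp
  have dt : ∀ p, D (et d) (fun p => s (q1 p) * s (q2 p)) p
      = deriv s (q1 p) * (-1 / W) * s (q2 p) := by
    intro p
    rw [D_mul hφ hψ, D_chain hsd hq1, D_chain hsd hq2, dq1, dq2]
    simp [et]
  have hlk : ∀ k : Fin d, Sm (d := d) (fun p => -2 / W * p.2 k) := by
    intro i; unfold Sm; fun_prop
  have dlk : ∀ (k : Fin d) (w p), D (d := d) w (fun p => -2 / W * p.2 k) p = -2 / W * w.2 k := by
    intro k w p
    have hc : Sm (d := d) (fun _ => -2 / W) := contDiff_const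
    rw [D_mul hc (hlin k), dlin]
    have : D (d := d) w (fun _ => -2 / W) p = 0 := by simp [D]
    rw [this]; ring
  have djk : ∀ j k p, D (ee j) (D (ee k) (fun p => s (q1 p) * s (q2 p))) p
      = s (q1 p) * (deriv (deriv s) (q2 p) * (-2 / W * p.2 j) * (-2 / W * p.2 k)
        + deriv s (q2 p) * (-2 / W * (if k = j then 1 else 0))) := by
    intro j k p
    rw [dk, D_mul hφ (hψ1.mul (hlk k)), D_mul hψ1 (hlk k), D_chain hsd hq1, D_chain hsd1 hq2, dq1,
      dq2, dlk]
    simp [ee, Pi.single_apply]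
    ring_nf
    simp
  have hW1 : 1 / W ≤ (ρ⁻¹) ^ 2 := by
    rw [inv_pow, ← one_div]; exact one_div_le_one_div_of_le (by positivity) hWρ
  have hxk : ∀ p ∈ Qc d R, ∀ k, |-2 / W * p.2 k| ≤ 2 * ρ⁻¹ := by
    intro p hp k
    have h1 : ∑ i, (p.2 i) ^ 2 < R ^ 2 := hp.2
    have h2 : (p.2 k) ^ 2 ≤ ∑ i, (p.2 i) ^ 2 :=
      Finset.single_le_sum (f := fun i => (p.2 i) ^ 2) (fun i _ => sq_nonneg _) (Finset.mem_univ k)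
    have h3 : |p.2 k| ≤ R := abs_le_of_sq_le_sq (by linarith) (by linarith)
    rw [abs_mul, abs_div, abs_neg, abs_two, abs_of_pos hW0, div_mul_eq_mul_div,
      div_le_iff₀ hW0]
    have h4 : R ≤ ρ⁻¹ * W := by
      rw [← div_eq_inv_mul, le_div_iff₀ hρ0]; linarith
    linarith
  refine ⟨fun p => s (q1 p) * s (q2 p), hφ.mul hψ, fun p => mul_nonneg (s0 _) (s0 _),
    fun p => mul_le_one₀ (s1 _) (s0 _) (s1 _), ?_, ?_, ?_⟩
  · intro p hp
    have h1 : p.1 < r ^ 2 := hp.1.2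
    have h2 : ∑ i, (p.2 i) ^ 2 < r ^ 2 := hp.2
    have e1 : s (q1 p) = 1 := by
      apply Real.smoothTransition.one_of_one_le
      simp only [q1]; rw [le_div_iff₀ hW0]; linarith
    have e2 : s (q2 p) = 1 := by
      apply Real.smoothTransition.one_of_one_le
      simp only [q2]; rw [le_div_iff₀ hW0]; linarith
    simp only [e1, e2, one_mul]
  · intro p hp hpQ
    by_cases h1 : p.1 < R ^ 2
    · have h2 : R ^ 2 ≤ ∑ i, (p.2 i) ^ 2 := by
        by_contra h
        exact hpQ ⟨⟨hp, h1⟩, not_le.1 h⟩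
      have e2 : s (q2 p) = 0 := by
        apply Real.smoothTransition.zero_of_nonpos
        simp only [q2]; exact div_nonpos_of_nonpos_of_nonneg (by linarith) hW0.le
      simp only [e2, mul_zero]
    · have e2 : s (q1 p) = 0 := by
        apply Real.smoothTransition.zero_of_nonpos
        simp only [q1]; exact div_nonpos_of_nonpos_of_nonneg (by linarith) hW0.le
      simp only [e2, zero_mul]
  · intro p hp
    rw [← hρ]
    have hr0 : 0 < ρ⁻¹ := inv_pos.2 hρ0
    refine ⟨?_, fun j => ?_, fun j k => ?_⟩
    · rw [dt, abs_mul, abs_mul, abs_div, abs_neg, abs_one, abs_of_pos hW0]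
      calc _ ≤ M * (ρ⁻¹) ^ 2 * 1 := by
            gcongr
            · exact hM1 _
            · exact sa _
        _ ≤ _ := by nlinarith [mul_pos hM (pow_pos hr0 2)]
    · rw [dk, abs_mul, abs_mul]
      calc _ ≤ 1 * (M * (2 * ρ⁻¹)) := by
            gcongr
            · exact sa _
            · exact hM1 _
            · exact hxk p hp j
        _ ≤ _ := by nlinarith [mul_pos hM hr0]
    · rw [djk, abs_mul]
      have g1 : |deriv (deriv s) (q2 p) * (-2 / W * p.2 j) * (-2 / W * p.2 k)|
          ≤ M * (2 * ρ⁻¹) * (2 * ρ⁻¹) := by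
        rw [abs_mul, abs_mul]
        gcongr
        · exact hM2 _
        · exact hxk p hp j
        · exact hxk p hp k
      have g2 : |deriv s (q2 p) * (-2 / W * (if k = j then 1 else 0))| ≤ M * (2 * (ρ⁻¹) ^ 2) := by
        rw [abs_mul]
        gcongr
        · exact hM1 _
        · rw [abs_mul, abs_div, abs_neg, abs_two, abs_of_pos hW0]
          have : |(if k = j then (1 : ℝ) else 0)| ≤ 1 := by split_ifs <;> simp
          calc 2 / W * _ ≤ 2 / W * 1 := by gcongr
            _ = 2 * (1 / W) := by ring
            _ ≤ _ := by gcongr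
      calc _ ≤ 1 * (M * (2 * ρ⁻¹) * (2 * ρ⁻¹) + M * (2 * (ρ⁻¹) ^ 2)) := by
            gcongr
            · exact sa _
            · exact (abs_add_le _ _).trans (add_le_add g1 g2)
        _ = _ := by ring

end Par

namespace Par

variable {d : ℕ}

lemma D1_form {η u : ℝ × (Fin d → ℝ) → ℝ} (hη : Sm η) (hu : Sm u) (w) :
    D w (fun p => η p * η p * u p)
      = fun p => 2 * (η p * D w η p) * u p + η p * η p * D w u p := by
  funext p
  rw [D_mul (hη.mul hη) hu, D_mul hη hη]
  ring

lemma D2_form {η u : ℝ × (Fin d → ℝ) → ℝ} (hη : Sm η) (hu : Sm u) (a b p) :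
    D a (D b (fun p => η p * η p * u p)) p
      = η p * η p * D a (D b u) p + 2 * η p * (D a η p * D b u p + D b η p * D a u p)
        + (2 * (D a η p * D b η p) + 2 * (η p * D a (D b η) p)) * u p := by
  have hc : Sm (d := d) (fun _ => (2 : ℝ)) := contDiff_const
  have dc : D (d := d) a (fun _ => (2 : ℝ)) p = 0 := by simp [D]
  have h1 : Sm fun p => 2 * (η p * D b η p) := hc.mul (hη.mul (hη.D b))
  rw [D1_form hη hu, D_add (h1.mul hu) ((hη.mul hη).mul (hu.D b)), D_mul h1 hu,
    D_mul hc (hη.mul (hη.D b)), D_mul hη (hη.D b), D_mul (hη.mul hη) (hu.D b), D_mul hη hη, dc]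
  ring

set_option maxHeartbeats 4000000 in
lemma localEst (d : ℕ) {δ : ℝ} (h0 : 0 < δ) : ∃ C : ℝ, 0 < C ∧
    ∀ (z : Fin d) (α : Fin d → Fin d → ℝ × (Fin d → ℝ) → ℝ), Co z δ α →
    ∀ r R : ℝ, 0 < r → r < R → ∀ u : ℝ × (Fin d → ℝ) → ℝ, G u →
      ∫ p in Qc d r, tot u p ≤ C * ((∫ p in Qc d R, (Lop α u p) ^ 2)
        + ((R - r)⁻¹) ^ 4 * ∫ p in Qc d R, (u p) ^ 2) := by
  obtain ⟨C, hC, hglob⟩ := globalEst d h0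
  obtain ⟨K, hK, hcut⟩ := cutoff
  obtain ⟨κ, hκ⟩ : ∃ κ, κ = δ⁻¹ := ⟨_, rfl⟩
  have hκ0 : 0 < κ := hκ ▸ inv_pos.2 h0
  obtain ⟨m1, hm1⟩ : ∃ m1 : ℝ, m1 = 2 * K + d * (d * (κ * (2 * K ^ 2 + 2 * K))) := ⟨_, rfl⟩
  have hm10 : 0 < m1 := by rw [hm1]; positivity
  obtain ⟨m2, hm2⟩ : ∃ m2 : ℝ, m2 = 4 * K * κ * d := ⟨_, rfl⟩
  have hm20 : 0 ≤ m2 := by rw [hm2]; positivity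
  obtain ⟨c1, hc1⟩ : ∃ c1 : ℝ, c1 = 3 * (1 + m1 ^ 2 + m2 ^ 2 * d) := ⟨_, rfl⟩
  have hc10 : 0 < c1 := by rw [hc1]; positivity
  obtain ⟨ε, hε⟩ : ∃ ε : ℝ, ε = 1 / (2 * (C * c1)) := ⟨_, rfl⟩
  have hε0 : 0 < ε := by rw [hε]; positivity
  obtain ⟨c2, hc2⟩ : ∃ c2 : ℝ, c2 = 1 / (2 * ε) + 4 * K ^ 2 + 2 * K := ⟨_, rfl⟩
  have hc20 : 0 < c2 := by rw [hc2]; positivity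
  refine ⟨2 * (C * c1) * (1 + d * (2 * c2)), by positivity, ?_⟩
  intro z α hα r R hr hrR u hu
  obtain ⟨η, hη, hη0, hη1, hηr, hηR, hηd⟩ := hcut d r R hr hrR
  obtain ⟨σ, hσ⟩ : ∃ σ, σ = (R - r)⁻¹ := ⟨_, rfl⟩
  have hσ0 : 0 < σ := by rw [hσ]; exact inv_pos.2 (by linarith)
  rw [← hσ] at hηd ⊢
  have opQ : ∀ r, IsOpen (Qc d r) := by
    intro r
    refine isOpen_Ioo.prod ?_
    exact isOpen_lt (by fun_prop) continuous_const
  have mQ : ∀ r, MeasurableSet (Qc d r) := fun r => (opQ r).measurableSet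
  have subH : ∀ r, Qc d r ⊆ H d := fun r p hp => hp.1.1
  let v : ℝ × (Fin d → ℝ) → ℝ := fun p => η p * η p * u p
  have hv : G v := ⟨(hη.mul hη).mul hu.1, hu.2.mul_left⟩
  have bs2 : ∀ j k, BS (D (ee j) (D (ee k) v)) := fun j k => ((hv.D _).D _).bs
  -- zero of first derivatives of the cutoff
  have hz : ∀ p, η p = 0 → ∀ w, D w η p = 0 := by
    intro p hp w
    have : IsLocalMin η p := Filter.Eventually.of_forall fun q => by rw [hp]; exact hη0 q
    unfold D
    rw [this.fderiv_eq_zero]; rfl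
  -- restricted integrals
  have toH : ∀ f : ℝ × (Fin d → ℝ) → ℝ, ∫ p in Qc d R, f p
      = ∫ p in H d, (Qc d R).indicator f p := by
    intro f
    rw [setIntegral_indicator (mQ R), Set.inter_eq_right.2 (subH R)]
  obtain ⟨A, hA⟩ : ∃ A, A = ∫ p in Qc d R, (Lop α u p) ^ 2 := ⟨_, rfl⟩
  obtain ⟨B, hB⟩ : ∃ B, B = ∫ p in Qc d R, (u p) ^ 2 := ⟨_, rfl⟩
  have hA0 : 0 ≤ A := by rw [hA]; exact integral_nonneg fun p => sq_nonneg _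
  have hB0 : 0 ≤ B := by rw [hB]; exact integral_nonneg fun p => sq_nonneg _
  rw [← hA, ← hB]
  rw [toH] at hA hB
  have bA : BS ((Qc d R).indicator fun p => (Lop α u p) ^ 2) := (Lop_bs hα hu).sq.ind (mQ R)
  have bB : BS ((Qc d R).indicator fun p => (u p) ^ 2) := hu.bs.sq.ind (mQ R)
  have bη : ∀ j, BS fun p => (η p * D (ee j) u p) ^ 2 := fun j =>
    (((hη.mul (hu.D (ee j)).1).bs (hu.D (ee j)).2.mul_left)).sq
  -- pointwise estimate of the operator
  have P1 : ∀ p ∈ H d, (Lop α v p) ^ 2 ≤ c1 * ((Qc d R).indicator (fun p => (Lop α u p) ^ 2) p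
      + σ ^ 4 * (Qc d R).indicator (fun p => (u p) ^ 2) p
      + σ ^ 2 * ∑ j, (η p * D (ee j) u p) ^ 2) := by
    intro p hp
    have hform : Lop α v p = η p * η p * Lop α u p
        + (2 * (η p * D (et d) η p) + ∑ j, ∑ k, α j k p *
            (2 * (D (ee j) η p * D (ee k) η p) + 2 * (η p * D (ee j) (D (ee k) η) p))) * u p
        + ∑ j, ∑ k, α j k p * (2 * (D (ee j) η p * (η p * D (ee k) u p)
            + D (ee k) η p * (η p * D (ee j) u p))) := by
      have e1 : D (et d) v p = 2 * (η p * D (et d) η p) * u p + η p * η p * D (et d) u p := by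
        rw [D1_form hη hu.1]
      have e2 : ∀ j k, α j k p * D (ee j) (D (ee k) v) p
          = η p * η p * (α j k p * D (ee j) (D (ee k) u) p)
          + (α j k p * (2 * (D (ee j) η p * D (ee k) η p)
              + 2 * (η p * D (ee j) (D (ee k) η) p))) * u p
          + α j k p * (2 * (D (ee j) η p * (η p * D (ee k) u p)
            + D (ee k) η p * (η p * D (ee j) u p))) := by
        intro j k
        rw [D2_form hη hu.1]; ring
      unfold Lop
      rw [e1, Finset.sum_congr rfl fun j _ => Finset.sum_congr rfl fun k _ => e2 j k]
      simp only [Finset.sum_add_distrib, ← Finset.mul_sum, ← Finset.sum_mul]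
      simp only [v]
      ring
    by_cases hpQ : p ∈ Qc d R
    · obtain ⟨t1, t2, t3⟩ := hηd p hpQ
      rw [Set.indicator_of_mem hpQ, Set.indicator_of_mem hpQ, hform]
      have hηa : |η p| ≤ 1 := by rw [abs_of_nonneg (hη0 p)]; exact hη1 p
      have hαa : ∀ j k, |α j k p| ≤ κ := fun j k => hκ ▸ hα.bd j k p
      have n1 : |2 * (η p * D (et d) η p) + ∑ j, ∑ k, α j k p *
            (2 * (D (ee j) η p * D (ee k) η p) + 2 * (η p * D (ee j) (D (ee k) η) p))|
            ≤ m1 * σ ^ 2 := by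
        have a1 : |2 * (η p * D (et d) η p)| ≤ 2 * (1 * (K * σ ^ 2)) := by
          rw [abs_mul, abs_mul, abs_two]; gcongr
        have a2 : ∀ j k, |α j k p * (2 * (D (ee j) η p * D (ee k) η p)
            + 2 * (η p * D (ee j) (D (ee k) η) p))|
            ≤ κ * (2 * (K * σ * (K * σ)) + 2 * (1 * (K * σ ^ 2))) := by
          intro j k
          rw [abs_mul]
          gcongr
          · exact hαa j k
          · refine (abs_add_le _ _).trans (add_le_add ?_ ?_)
            · rw [abs_mul, abs_mul, abs_two]; gcongr <;> exact t2 _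
            · rw [abs_mul, abs_mul, abs_two]; gcongr; exact t3 _ _
        calc _ ≤ 2 * (1 * (K * σ ^ 2)) + ∑ j : Fin d, ∑ k : Fin d,
              κ * (2 * (K * σ * (K * σ)) + 2 * (1 * (K * σ ^ 2))) := by
              refine (abs_add_le _ _).trans (add_le_add a1 ?_)
              refine (Finset.abs_sum_le_sum_abs _ _).trans (Finset.sum_le_sum fun j _ => ?_)
              exact (Finset.abs_sum_le_sum_abs _ _).trans (Finset.sum_le_sum fun k _ => a2 j k)
          _ = m1 * σ ^ 2 := by simp [hm1]; ring
      have n2 : |∑ j, ∑ k, α j k p * (2 * (D (ee j) η p * (η p * D (ee k) u p)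
            + D (ee k) η p * (η p * D (ee j) u p)))| ≤ m2 * σ * ∑ j, |η p * D (ee j) u p| := by
        have a2 : ∀ j k, |α j k p * (2 * (D (ee j) η p * (η p * D (ee k) u p)
            + D (ee k) η p * (η p * D (ee j) u p)))|
            ≤ κ * (2 * (K * σ * |η p * D (ee k) u p| + K * σ * |η p * D (ee j) u p|)) := by
          intro j k
          rw [abs_mul, abs_mul, abs_two]
          gcongr
          · exact hαa j k
          · refine (abs_add_le _ _).trans (add_le_add ?_ ?_)
            · rw [abs_mul]; gcongr; exact t2 _
            · rw [abs_mul]; gcongr; exact t2 _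
        calc _ ≤ ∑ j, ∑ k, κ * (2 * (K * σ * |η p * D (ee k) u p|
                + K * σ * |η p * D (ee j) u p|)) := by
              refine (Finset.abs_sum_le_sum_abs _ _).trans (Finset.sum_le_sum fun j _ => ?_)
              exact (Finset.abs_sum_le_sum_abs _ _).trans (Finset.sum_le_sum fun k _ => a2 j k)
          _ = m2 * σ * ∑ j, |η p * D (ee j) u p| := by
              simp only [← Finset.mul_sum, Finset.sum_add_distrib, Finset.sum_const,
                Finset.card_univ, Fintype.card_fin, nsmul_eq_mul]
              rw [hm2]; ring
      have n3 : (∑ j, |η p * D (ee j) u p|) ^ 2 ≤ d * ∑ j, (η p * D (ee j) u p) ^ 2 := by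
        have a1 := sq_sum_le_card_mul_sum_sq (s := Finset.univ)
          (f := fun j => |η p * D (ee j) u p|)
        simpa only [Finset.card_univ, Fintype.card_fin, sq_abs] using a1
      generalize 2 * (η p * D (et d) η p) + ∑ j, ∑ k, α j k p *
            (2 * (D (ee j) η p * D (ee k) η p) + 2 * (η p * D (ee j) (D (ee k) η) p)) = X2 at *
      generalize ∑ j, ∑ k, α j k p * (2 * (D (ee j) η p * (η p * D (ee k) u p)
            + D (ee k) η p * (η p * D (ee j) u p))) = X3 at *
      have hY0 : 0 ≤ ∑ j, |η p * D (ee j) u p| := Finset.sum_nonneg fun j _ => abs_nonneg _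
      have hZ0 : 0 ≤ ∑ j, (η p * D (ee j) u p) ^ 2 := Finset.sum_nonneg fun j _ => sq_nonneg _
      generalize ∑ j, |η p * D (ee j) u p| = Y at *
      generalize ∑ j, (η p * D (ee j) u p) ^ 2 = Z at *
      have w1 : (η p * η p * Lop α u p) ^ 2 ≤ (Lop α u p) ^ 2 := by
        have : (η p * η p) ^ 2 ≤ 1 := by
          have : η p * η p ≤ 1 := mul_le_one₀ (hη1 p) (hη0 p) (hη1 p)
          exact pow_le_one₀ (mul_nonneg (hη0 p) (hη0 p)) this
        rw [mul_pow]
        exact mul_le_of_le_one_left (sq_nonneg _) this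
      have w2 : (X2 * u p) ^ 2 ≤ m1 ^ 2 * (σ ^ 4 * (u p) ^ 2) := by
        have : X2 ^ 2 ≤ (m1 * σ ^ 2) ^ 2 := by
          rw [← sq_abs X2]; exact pow_le_pow_left₀ (abs_nonneg _) n1 2
        rw [mul_pow]
        calc _ ≤ (m1 * σ ^ 2) ^ 2 * (u p) ^ 2 := mul_le_mul_of_nonneg_right this (sq_nonneg _)
          _ = _ := by ring
      have w3 : X3 ^ 2 ≤ m2 ^ 2 * d * (σ ^ 2 * Z) := by
        have : X3 ^ 2 ≤ (m2 * σ * Y) ^ 2 := by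
          rw [← sq_abs X3]; exact pow_le_pow_left₀ (abs_nonneg _) n2 2
        calc _ ≤ (m2 * σ) ^ 2 * Y ^ 2 := by rw [← mul_pow]; exact this
          _ ≤ (m2 * σ) ^ 2 * (d * Z) := mul_le_mul_of_nonneg_left n3 (sq_nonneg _)
          _ = _ := by ring
      have w4 : (η p * η p * Lop α u p + X2 * u p + X3) ^ 2
          ≤ 3 * ((η p * η p * Lop α u p) ^ 2 + (X2 * u p) ^ 2 + X3 ^ 2) := by
        generalize η p * η p * Lop α u p = x
        generalize X2 * u p = y
        nlinarith [sq_nonneg (x - y), sq_nonneg (x - X3), sq_nonneg (y - X3)]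
      refine w4.trans ?_
      have v1 : 0 ≤ (Lop α u p) ^ 2 := sq_nonneg _
      have v2 : 0 ≤ σ ^ 4 * (u p) ^ 2 := by positivity
      have v3 : 0 ≤ σ ^ 2 * Z := by positivity
      have m1s : 0 ≤ m1 ^ 2 := sq_nonneg _
      have m2s : 0 ≤ m2 ^ 2 * d := by positivity
      generalize (Lop α u p) ^ 2 = x at *
      generalize σ ^ 4 * (u p) ^ 2 = y at *
      generalize σ ^ 2 * Z = w at *
      generalize m1 ^ 2 = a at *
      generalize m2 ^ 2 * (d : ℝ) = b at *
      rw [hc1]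
      nlinarith [mul_nonneg m1s v1, mul_nonneg m1s v3, mul_nonneg m2s v1, mul_nonneg m2s v2]
    · have e0 := hηR p hp hpQ
      have e1 := hz p e0
      rw [hform]
      simp [e0, e1, hpQ]
  -- interpolation
  have P2 : ∀ j, σ ^ 2 * ∫ p in H d, (η p * D (ee j) u p) ^ 2
      ≤ ε * (∫ p in H d, (D (ee j) (D (ee j) v) p) ^ 2) + 2 * c2 * (σ ^ 4 * B) := by
    intro j
    have hg : Sm fun p => η p * η p * D (ee j) u p := (hη.mul hη).mul (hu.D _).1
    have h1 := ibp (BM.const (σ ^ 2)) (fun _ _ => rfl) rfl (w := ee j) hu.1 hu.2 hg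
    rw [← integral_neg] at h1
    have bl : BS fun p => -(σ ^ 2 * (u p * D (ee j) (fun p => η p * η p * D (ee j) u p) p)) :=
      (BS.mul (BM.const _) ((hu.1.mul (hg.D _)).bs hu.2.mul_right)).neg
    have b1 : BS fun p => ε / 2 * (D (ee j) (D (ee j) v) p) ^ 2 :=
      BS.mul (BM.const _) (bs2 j j).sq
    have b2 : BS fun p => (c2 * σ ^ 4) * (Qc d R).indicator (fun p => (u p) ^ 2) p :=
      BS.mul (BM.const _) bB
    have b3 : BS fun p => σ ^ 2 / 2 * (η p * D (ee j) u p) ^ 2 := BS.mul (BM.const _) (bη j)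
    have h2 := I_mono bl ((b1.add b2).add b3) (fun p hp => by
      have e1 : D (ee j) (fun p => η p * η p * D (ee j) u p) p
          = 2 * (η p * D (ee j) η p) * D (ee j) u p + η p * η p * D (ee j) (D (ee j) u) p := by
        rw [D1_form hη (hu.D _).1]
      by_cases hpQ : p ∈ Qc d R
      · obtain ⟨t1, t2, t3⟩ := hηd p hpQ
        have t2 := t2 j
        have t3 := t3 j j
        rw [Set.indicator_of_mem hpQ]
        have e2 := D2_form hη hu.1 (ee j) (ee j) p
        have hform : -(σ ^ 2 * (u p * D (ee j) (fun p => η p * η p * D (ee j) u p) p))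
            = - (σ ^ 2 * u p * D (ee j) (D (ee j) v) p)
              + σ ^ 2 * (2 * (D (ee j) η p * u p) * (η p * D (ee j) u p))
              + σ ^ 2 * (2 * ((D (ee j) η p) ^ 2 + η p * D (ee j) (D (ee j) η) p)) * (u p) ^ 2 := by
          rw [e1]
          simp only [v]
          rw [e2]
          ring
        rw [hform]
        generalize D (ee j) (D (ee j) v) p = V
        generalize η p * D (ee j) u p = y
        have r1 : -(σ ^ 2 * u p * V) ≤ ε / 2 * V ^ 2 + 1 / (2 * ε) * (σ ^ 4 * (u p) ^ 2) := by
          have := sq_nonneg (ε * V + σ ^ 2 * u p)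
          have e : ε / 2 * V ^ 2 + 1 / (2 * ε) * (σ ^ 4 * (u p) ^ 2) + σ ^ 2 * u p * V
            = 1 / (2 * ε) * (ε * V + σ ^ 2 * u p) ^ 2 := by field_simp; ring
          have : 0 ≤ 1 / (2 * ε) * (ε * V + σ ^ 2 * u p) ^ 2 := by positivity
          linarith
        have d2 : (D (ee j) η p) ^ 2 ≤ K ^ 2 * σ ^ 2 := by
          rw [← sq_abs, ← mul_pow]; exact pow_le_pow_left₀ (abs_nonneg _) t2 2
        have d3 : η p * D (ee j) (D (ee j) η) p ≤ K * σ ^ 2 := by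
          have : |η p * D (ee j) (D (ee j) η) p| ≤ 1 * (K * σ ^ 2) := by
            rw [abs_mul, abs_of_nonneg (hη0 p)]; gcongr; exact hη1 p
          have := le_abs_self (η p * D (ee j) (D (ee j) η) p)
          linarith
        have r2 : σ ^ 2 * (2 * (D (ee j) η p * u p) * y)
            ≤ σ ^ 2 / 2 * y ^ 2 + 2 * K ^ 2 * (σ ^ 4 * (u p) ^ 2) := by
          have a1 : 2 * (D (ee j) η p * u p) * y ≤ 1 / 2 * y ^ 2
              + 2 * ((D (ee j) η p) ^ 2 * (u p) ^ 2) := by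
            nlinarith [sq_nonneg (y - 2 * (D (ee j) η p * u p))]
          have a2 : (D (ee j) η p) ^ 2 * (u p) ^ 2 ≤ K ^ 2 * σ ^ 2 * (u p) ^ 2 :=
            mul_le_mul_of_nonneg_right d2 (sq_nonneg _)
          calc _ ≤ σ ^ 2 * (1 / 2 * y ^ 2 + 2 * (K ^ 2 * σ ^ 2 * (u p) ^ 2)) := by
                apply mul_le_mul_of_nonneg_left _ (sq_nonneg _)
                linarith
            _ = _ := by ring
        have r3 : σ ^ 2 * (2 * ((D (ee j) η p) ^ 2 + η p * D (ee j) (D (ee j) η) p)) * (u p) ^ 2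
            ≤ (2 * K ^ 2 + 2 * K) * (σ ^ 4 * (u p) ^ 2) := by
          calc _ ≤ σ ^ 2 * (2 * (K ^ 2 * σ ^ 2 + K * σ ^ 2)) * (u p) ^ 2 := by gcongr
            _ = _ := by ring
        have e : c2 * σ ^ 4 * (u p) ^ 2 = (1 / (2 * ε)) * (σ ^ 4 * (u p) ^ 2)
          + 4 * K ^ 2 * (σ ^ 4 * (u p) ^ 2) + 2 * K * (σ ^ 4 * (u p) ^ 2) := by rw [hc2]; ring
        rw [e]
        linarith
      · have e0 := hηR p hp hpQ
        rw [e1]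
        simp [e0, hpQ]
        positivity)
    rw [← h1, I_add (b1.add b2) b3, I_add b1 b2, I_cm, I_cm, I_cm, I_cm, ← hB] at h2
    have e : ∫ p in H d, D (ee j) u p * (η p * η p * D (ee j) u p)
        = ∫ p in H d, (η p * D (ee j) u p) ^ 2 := by
      congr 1; funext p; ring
    rw [e] at h2
    linarith
  -- combine
  obtain ⟨T, hT⟩ : ∃ T, T = ∫ p in H d, tot v p := ⟨_, rfl⟩
  have Q1 : T ≤ C * (c1 * (A + σ ^ 4 * B
      + σ ^ 2 * ∑ j, ∫ p in H d, (η p * D (ee j) u p) ^ 2)) := by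
    rw [hT]
    refine (hglob z α hα v hv).trans (mul_le_mul_of_nonneg_left ?_ hC.le)
    have b2 : BS fun p => σ ^ 4 * (Qc d R).indicator (fun p => (u p) ^ 2) p :=
      BS.mul (BM.const _) bB
    have b3 : BS fun p => σ ^ 2 * ∑ j, (η p * D (ee j) u p) ^ 2 :=
      BS.mul (BM.const _) (BS.sum _ bη)
    have := I_mono (Lop_bs hα hv).sq (BS.mul (BM.const c1) ((bA.add b2).add b3)) P1
    rw [I_cm, I_add (bA.add b2) b3, I_add bA b2, I_cm, I_cm, I_sum _ bη, ← hA, ← hB] at this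
    exact this
  have Q2 : ∑ j, ∫ p in H d, (D (ee j) (D (ee j) v) p) ^ 2 ≤ T := by
    rw [← I_sum _ fun j => (bs2 j j).sq, hT]
    refine I_mono (BS.sum _ fun j => (bs2 j j).sq) (tot_bs hv) fun p _ => ?_
    have a1 : ∑ j, (D (ee j) (D (ee j) v) p) ^ 2 ≤ ∑ j, ∑ k, (D (ee j) (D (ee k) v) p) ^ 2 :=
      Finset.sum_le_sum fun j _ =>
        Finset.single_le_sum (f := fun k => (D (ee j) (D (ee k) v) p) ^ 2)
          (fun k _ => sq_nonneg _) (Finset.mem_univ j)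
    have a2 : 0 ≤ ∑ j, (D (ee j) v p) ^ 2 := Finset.sum_nonneg fun j _ => sq_nonneg _
    unfold tot
    have := sq_nonneg (v p)
    have := sq_nonneg (D (et d) v p)
    linarith
  have Q3 : σ ^ 2 * ∑ j, ∫ p in H d, (η p * D (ee j) u p) ^ 2
      ≤ ε * T + d * (2 * c2 * (σ ^ 4 * B)) := by
    rw [Finset.mul_sum]
    calc _ ≤ ∑ j, (ε * (∫ p in H d, (D (ee j) (D (ee j) v) p) ^ 2) + 2 * c2 * (σ ^ 4 * B)) :=
          Finset.sum_le_sum fun j _ => P2 j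
      _ = ε * (∑ j, ∫ p in H d, (D (ee j) (D (ee j) v) p) ^ 2) + d * (2 * c2 * (σ ^ 4 * B)) := by
          rw [Finset.sum_add_distrib, ← Finset.mul_sum]; simp
      _ ≤ _ := by gcongr
  have Q4 : T ≤ 2 * (C * c1) * (1 + d * (2 * c2)) * (A + σ ^ 4 * B) := by
    have hCc : 0 < C * c1 := mul_pos hC hc10
    have a1 := mul_le_mul_of_nonneg_left Q3 hCc.le
    have a2 : C * c1 * (ε * T) = T / 2 := by rw [hε]; field_simp
    have a3 : T ≤ 2 * (C * c1) * (A + σ ^ 4 * B + d * (2 * c2 * (σ ^ 4 * B))) := by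
      nlinarith
    refine a3.trans ?_
    have a4 : A + σ ^ 4 * B + d * (2 * c2 * (σ ^ 4 * B))
        ≤ (1 + d * (2 * c2)) * (A + σ ^ 4 * B) := by
      have : 0 ≤ d * (2 * c2) * A := by positivity
      linarith
    calc _ ≤ 2 * (C * c1) * ((1 + d * (2 * c2)) * (A + σ ^ 4 * B)) :=
          mul_le_mul_of_nonneg_left a4 (by positivity)
      _ = _ := by ring
  refine le_trans ?_ Q4
  have huv : ∀ p ∈ Qc d r, tot u p = tot v p := by
    intro p hp
    have e : u =ᶠ[𝓝 p] v := by
      filter_upwards [(opQ r).mem_nhds hp] with q hq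
      simp [v, hηr q hq]
    unfold tot
    simp_rw [e.eq_of_nhds, (D_congr e _).eq_of_nhds, fun j k => (D_congr (D_congr e (ee k)) (ee j)).eq_of_nhds]
  rw [setIntegral_congr_fun (mQ r) huv, hT]
  refine setIntegral_mono_set ((tot_bs hv).intH _) ?_ (subH r).eventuallyLE
  refine Filter.Eventually.of_forall fun p => ?_
  unfold tot
  simp only [Pi.zero_apply]
  positivity

end Par

namespace Par

variable {d : ℕ}

lemma opQ (r : ℝ) : IsOpen (Qc d r) := by
  refine isOpen_Ioo.prod ?_
  exact isOpen_lt (by fun_prop) continuous_const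

lemma Q_compact {R : ℝ} (hR : 0 < R) : IsCompact (closure (Qc d R)) := by
  have hK : IsCompact (Set.Icc (0 : ℝ) (R ^ 2) ×ˢ
      Set.Icc (fun _ : Fin d => -R) (fun _ : Fin d => R)) :=
    isCompact_Icc.prod isCompact_Icc
  refine hK.of_isClosed_subset isClosed_closure (closure_minimal ?_ hK.isClosed)
  rintro ⟨t, x⟩ ⟨ht, hx⟩
  refine ⟨⟨ht.1.le, ht.2.le⟩, ?_⟩
  have hx' : ∑ j, (x j) ^ 2 < R ^ 2 := hx
  have h1 : ∀ j, |x j| ≤ R := fun j => by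
    have := Finset.single_le_sum (f := fun j => (x j) ^ 2) (fun i _ => sq_nonneg _)
      (Finset.mem_univ j)
    exact abs_le_of_sq_le_sq (by simpa using this.trans hx'.le) hR.le
  exact ⟨fun j => (abs_le.1 (h1 j)).1, fun j => (abs_le.1 (h1 j)).2⟩

lemma Q_mono {r R : ℝ} (hr : 0 < r) (h : r < R) : Qc d r ⊆ Qc d R := by
  have : r ^ 2 ≤ R ^ 2 := by gcongr
  rintro ⟨t, x⟩ ⟨ht, hx⟩
  exact ⟨⟨ht.1, ht.2.trans_le this⟩, lt_of_lt_of_le hx this⟩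

lemma extend {u : ℝ × (Fin d → ℝ) → ℝ} {U S : Set (ℝ × (Fin d → ℝ))} (hU : IsOpen U)
    (hS : IsCompact S) (hSU : S ⊆ U) (hu : ContDiffOn ℝ ∞ u U) :
    ∃ v, G v ∧ ∀ p ∈ S, u =ᶠ[𝓝 p] v := by
  obtain ⟨K, hK, h1, h2⟩ := exists_compact_between hS hU hSU
  obtain ⟨f, f1, f0, -⟩ := exists_contMDiffMap_one_nhds_of_subset_interior (n := (⊤ : ℕ∞))
    (modelWithCornersSelf ℝ (ℝ × (Fin d → ℝ))) hS.isClosed h1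
  have fs : ContDiff ℝ ∞ f := f.contMDiff.contDiff
  refine ⟨fun p => f p * u p, ⟨?_, ?_⟩, ?_⟩
  · refine contDiff_iff_contDiffAt.2 fun p => ?_
    by_cases hp : p ∈ K
    · exact fs.contDiffAt.mul (hu.contDiffAt (hU.mem_nhds (h2 hp)))
    · have : (fun p => f p * u p) =ᶠ[𝓝 p] fun _ => (0 : ℝ) := by
        filter_upwards [hK.isClosed.isOpen_compl.mem_nhds hp] with q hq
        rw [f0 q hq, zero_mul]
      exact contDiffAt_const.congr_of_eventuallyEq this
  · exact HasCompactSupport.intro hK fun p hp => by rw [f0 p hp, zero_mul]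
  · intro p hp
    have := (Filter.Eventually.filter_mono (nhds_le_nhdsSet hp) f1)
    filter_upwards [this] with q hq
    rw [hq, one_mul]

lemma mkCo (hd : 0 < d) {δ : ℝ} (h0 : 0 < δ) {a : ℝ → Fin d → Fin d → ℝ}
    (ha : ∀ j k, Measurable fun s => a s j k) (hs : ∀ s j k, a s j k = a s k j)
    (he : ∀ (s : ℝ) (θ : Fin d → ℝ),
          δ * ∑ j, (θ j) ^ 2 ≤ ∑ j, ∑ k, a s j k * θ j * θ k ∧
          ∑ j, ∑ k, a s j k * θ j * θ k ≤ δ⁻¹ * ∑ j, (θ j) ^ 2) :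
    Co (⟨0, hd⟩ : Fin d) δ (fun j k p => a (p.2 ⟨0, hd⟩) j k) := by
  have hdiag : ∀ s j, δ ≤ a s j j ∧ a s j j ≤ δ⁻¹ := fun s j => by
    have := he s (fun i => if i = j then 1 else 0)
    simpa using this
  have hoff : ∀ s j k (c : ℝ), 0 ≤ a s j j + c * a s j k + c * a s k j + c * c * a s k k := by
    intro s j k c
    have := (he s (fun i => (if i = j then 1 else 0) + c * (if i = k then 1 else 0))).1
    have h2 : 0 ≤ δ * ∑ i, ((if i = j then (1 : ℝ) else 0) + c * (if i = k then 1 else 0)) ^ 2 :=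
      mul_nonneg h0.le (Finset.sum_nonneg fun _ _ => sq_nonneg _)
    have h3 := h2.trans this
    simp only [mul_add, add_mul, Finset.sum_add_distrib, mul_ite, ite_mul, mul_zero, zero_mul,
      mul_one, Finset.sum_ite_eq', Finset.mem_univ, if_true, Finset.sum_const_zero,
      Finset.sum_ite_irrel] at h3
    linarith
  have bd : ∀ j k s, |a s j k| ≤ δ⁻¹ := fun j k s => by
    have h1 := hoff s j k 1
    have h2 := hoff s j k (-1)
    have h3 := (hdiag s j).2
    have h4 := (hdiag s k).2
    rw [hs s k j] at h1 h2
    rw [abs_le]; constructor <;> linarith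
  have mz : Measurable fun p : ℝ × (Fin d → ℝ) => p.2 ⟨0, hd⟩ := by fun_prop
  refine ⟨fun j k => ⟨(ha j k).comp mz, δ⁻¹, fun p => bd j k _⟩, ?_, ?_, fun p θ => (he _ θ).1,
    fun j k p => bd j k _, fun p => (hdiag _ _).1⟩
  · intro j k l hl p s
    simp [ee, hl.symm]
  · intro j k p s
    simp [et]

end Par

theorem stmt7 (d : ℕ) (hd : 0 < d) (δ : ℝ) (hδ : δ ∈ Set.Ioo (0 : ℝ) 1) :
    ∃ N : ℝ, 0 < N ∧
      ∀ a : ℝ → Fin d → Fin d → ℝ,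
        (∀ j k, Measurable fun s => a s j k) →
        (∀ s j k, a s j k = a s k j) →
        (∀ (s : ℝ) (θ : Fin d → ℝ),
          δ * ∑ j, (θ j) ^ 2 ≤ ∑ j, ∑ k, a s j k * θ j * θ k ∧
          ∑ j, ∑ k, a s j k * θ j * θ k ≤ δ⁻¹ * ∑ j, (θ j) ^ 2) →
        ∀ r R : ℝ, 0 < r → r < R →
          ∀ (u : ℝ × (Fin d → ℝ) → ℝ) (U : Set (ℝ × (Fin d → ℝ))),
            IsOpen U → closure (Qc d R) ⊆ U → ContDiffOn ℝ (⊤ : ℕ∞) u U →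
            Real.sqrt (∫ p in Qc d r,
                ((u p) ^ 2 + (pdt u p) ^ 2 + (∑ j, (pdx j u p) ^ 2)
                  + ∑ j, ∑ k, (pdxx j k u p) ^ 2))
              ≤ N * (Real.sqrt (∫ p in Qc d R,
                    ((pdt u p + ∑ j, ∑ k, a (p.2 ⟨0, hd⟩) j k * pdxx j k u p)
                      - u p) ^ 2)
                  + ((R - r) ^ 2)⁻¹ * Real.sqrt (∫ p in Qc d R, (u p) ^ 2)) := by
  obtain ⟨C, hC, hest⟩ := Par.localEst d hδ.1
  refine ⟨√C, Real.sqrt_pos.2 hC, ?_⟩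
  intro a ha hs he r R hr hrR u U hU hQU hu
  have hR := hr.trans hrR
  obtain ⟨v, hv, huv⟩ := Par.extend hU (Par.Q_compact (d := d) hR) hQU hu
  have key := hest _ _ (Par.mkCo hd hδ.1 ha hs he) r R hr hrR v hv
  have ev : ∀ p ∈ Qc d R, u =ᶠ[𝓝 p] v := fun p hp => huv p (subset_closure hp)
  have e0 : ∀ p ∈ Qc d R, u p = v p := fun p hp => (ev p hp).eq_of_nhds
  have e1 : ∀ p ∈ Qc d R, ∀ w, Par.D w u p = Par.D w v p :=
    fun p hp w => (Par.D_congr (ev p hp) w).eq_of_nhds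
  have e2 : ∀ p ∈ Qc d R, ∀ w w', Par.D w (Par.D w' u) p = Par.D w (Par.D w' v) p :=
    fun p hp w w' => (Par.D_congr (Par.D_congr (ev p hp) w') w).eq_of_nhds
  have i1 : (∫ p in Qc d r, ((u p) ^ 2 + (pdt u p) ^ 2 + (∑ j, (pdx j u p) ^ 2)
                  + ∑ j, ∑ k, (pdxx j k u p) ^ 2)) = ∫ p in Qc d r, Par.tot v p := by
    refine setIntegral_congr_fun (Par.opQ r).measurableSet fun p hp' => ?_
    have hp := Par.Q_mono hr hrR hp'
    change Par.tot u p = Par.tot v p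
    simp only [Par.tot, e0 p hp, e1 p hp, e2 p hp]
  have i2 : (∫ p in Qc d R, ((pdt u p + ∑ j, ∑ k, a (p.2 ⟨0, hd⟩) j k * pdxx j k u p)
      - u p) ^ 2) = ∫ p in Qc d R, (Par.Lop (fun j k p => a (p.2 ⟨0, hd⟩) j k) v p) ^ 2 := by
    refine setIntegral_congr_fun (Par.opQ R).measurableSet fun p hp => ?_
    change (Par.Lop (fun j k p => a (p.2 ⟨0, hd⟩) j k) u p) ^ 2 = _
    simp only [Par.Lop, e0 p hp, e1 p hp, e2 p hp]
  have i3 : (∫ p in Qc d R, (u p) ^ 2) = ∫ p in Qc d R, (v p) ^ 2 := by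
    refine setIntegral_congr_fun (Par.opQ R).measurableSet fun p hp => ?_
    simp only [e0 p hp]
  rw [i1, i2, i3]
  have hA : 0 ≤ ∫ p in Qc d R, (Par.Lop (fun j k p => a (p.2 ⟨0, hd⟩) j k) v p) ^ 2 :=
    integral_nonneg fun p => sq_nonneg _
  have hB : 0 ≤ ∫ p in Qc d R, (v p) ^ 2 := integral_nonneg fun p => sq_nonneg _
  generalize (∫ p in Qc d R, (Par.Lop (fun j k p => a (p.2 ⟨0, hd⟩) j k) v p) ^ 2) = A at *
  generalize (∫ p in Qc d R, (v p) ^ 2) = B at *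
  refine (Real.sqrt_le_sqrt key).trans ?_
  rw [Real.sqrt_mul hC.le]
  refine mul_le_mul_of_nonneg_left ?_ (Real.sqrt_nonneg _)
  refine Real.sqrt_le_iff.2 ⟨by positivity, ?_⟩
  have hsA := Real.sq_sqrt hA
  have hsB := Real.sq_sqrt hB
  rw [← inv_pow]
  have h5 : 0 ≤ √A * (((R - r)⁻¹) ^ 2 * √B) := by positivity
  calc A + ((R - r)⁻¹) ^ 4 * B = √A ^ 2 + ((R - r)⁻¹) ^ 4 * √B ^ 2 := by rw [hsA, hsB]
    _ ≤ _ := by nlinarith [h5]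
end

section
/- Fix an integer d ≥ 1 and δ ∈ (0,1). Let a^{jk} : ℝ → ℝ (1 ≤ j,k ≤ d) be measurable functions of x¹ only, with a^{jk} = a^{kj} and δ|θ|² ≤ Σ_{j,k=1}^d a^{jk}(x¹) θ^j θ^k ≤ δ⁻¹|θ|² for all x¹ and θ ∈ ℝ^d. Set L₀u = u_t + Σ_{j,k} a^{jk}(x¹) u_{x^j x^k}. Let 0 < r < R, let γ = (γ¹,…,γ^d) be a multi-index with γ¹ ∈ {0,1,2}, and let m be a nonnegative integer. If h is smooth on Q_R, h ∈ L²(Q_R), and L₀h = 0 in Q_R, then ∫_{Q_r} |D_t^m D_x^γ h|² dx dt ≤ N ∫_{Q_R} |h|² dx dt, where N = N(d,δ,γ,m,R,r) and D_t^m D_x^γ h = ∂_t^m ∂_{x¹}^{γ¹} ⋯ ∂_{x^d}^{γ^d} h. -/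
open MeasureTheory

/-- The mixed spatial derivative `D_x^γ = ∂_{x¹}^{γ¹} ⋯ ∂_{x^d}^{γ^d}`. -/
noncomputable def pdxMulti {d : ℕ} (γ : Fin d → ℕ) (u : ℝ × (Fin d → ℝ) → ℝ) :
    ℝ × (Fin d → ℝ) → ℝ :=
  Fin.foldr d (fun j v => (pdx j)^[γ j] v) u

open Set Filter Topology

lemma ballE_open (d : ℕ) (r : ℝ) : IsOpen (ballE d r) := by
  unfold ballE
  exact isOpen_lt (by fun_prop) continuous_const

lemma Qc_open (d : ℕ) (r : ℝ) : IsOpen (Qc d r) := isOpen_Ioo.prod (ballE_open d r)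

lemma Qc_mono (d : ℕ) {r s : ℝ} (hr : 0 < r) (hrs : r ≤ s) : Qc d r ⊆ Qc d s := by
  have h2 : r ^ 2 ≤ s ^ 2 := by gcongr
  rintro ⟨t, x⟩ ⟨⟨h0, h1⟩, hx⟩
  refine ⟨⟨h0, h1.trans_le h2⟩, ?_⟩
  simp only [ballE, mem_ofPred_eq] at hx ⊢
  linarith

section basic
set_option linter.unusedSectionVars false
variable {E : Type*} [NormedAddCommGroup E] [NormedSpace ℝ E]

lemma smooth_D {U : Set E} (hU : IsOpen U) {h : E → ℝ} (hh : ContDiffOn ℝ (⊤ : ℕ∞) h U) (v : E) :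
    ContDiffOn ℝ (⊤ : ℕ∞) (fun p => fderiv ℝ h p v) U :=
  (hh.fderiv_of_isOpen hU (by simp)).clm_apply contDiffOn_const

lemma diffAt_of {U : Set E} (hU : IsOpen U) {h : E → ℝ} (hh : ContDiffOn ℝ (⊤ : ℕ∞) h U)
    {p : E} (hp : p ∈ U) : DifferentiableAt ℝ h p :=
  (hh.contDiffAt (hU.mem_nhds hp)).differentiableAt (by simp)

lemma comm_D {U : Set E} (hU : IsOpen U) {h : E → ℝ} (hh : ContDiffOn ℝ (⊤ : ℕ∞) h U) (v w : E)
    {p : E} (hp : p ∈ U) :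
    fderiv ℝ (fun q => fderiv ℝ h q v) p w = fderiv ℝ (fun q => fderiv ℝ h q w) p v := by
  have hc := hh.contDiffAt (hU.mem_nhds hp)
  have hs := hc.isSymmSndFDerivAt (by simp only [minSmoothness_of_isRCLikeNormedField]; exact WithTop.coe_le_coe.2 le_top)
  have hd : DifferentiableAt ℝ (fderiv ℝ h) p :=
    ((hh.fderiv_of_isOpen hU (m := (⊤ : ℕ∞)) (by simp)).contDiffAt (hU.mem_nhds hp)).differentiableAt
      (by simp)
  have e : ∀ v : E, fderiv ℝ (fun q => fderiv ℝ h q v) p = (fderiv ℝ (fderiv ℝ h) p).flip v := by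
    intro v
    have := (hd.hasFDerivAt.clm_apply (hasFDerivAt_const v p)).fderiv
    rw [this]; ext; simp
  rw [e v, e w]
  simpa using hs.eq w v

lemma congr_D {U : Set E} (hU : IsOpen U) {f g : E → ℝ} (h : EqOn f g U) (v : E) :
    EqOn (fun p => fderiv ℝ f p v) (fun p => fderiv ℝ g p v) U := by
  intro p hp
  have : f =ᶠ[𝓝 p] g := h.eventuallyEq_of_mem (hU.mem_nhds hp)
  simp only [this.fderiv_eq]

lemma mul_D {f g : E → ℝ} {p : E} (hf : DifferentiableAt ℝ f p) (hg : DifferentiableAt ℝ g p)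
    (v : E) : fderiv ℝ (fun q => f q * g q) p v
      = fderiv ℝ f p v * g p + f p * fderiv ℝ g p v := by
  rw [fderiv_fun_mul hf hg]; simp; ring

lemma contDiff_cut {U : Set E} (hU : IsOpen U) {n : ℕ∞} {η g : E → ℝ} (hη : ContDiff ℝ n η)
    (hs : tsupport η ⊆ U) (hg : ContDiffOn ℝ n g U) : ContDiff ℝ n (fun p => η p * g p) := by
  refine contDiff_iff_contDiffAt.2 fun x => ?_
  by_cases hx : x ∈ tsupport η
  swap
  · have h0 : (fun p => η p * g p) =ᶠ[𝓝 x] fun _ => 0 := by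
      filter_upwards [notMem_tsupport_iff_eventuallyEq.1 hx] with y hy
      simp [hy]
    exact contDiffAt_const.congr_of_eventuallyEq h0
  have hx' : x ∈ U := hs hx
  exact hη.contDiffAt.mul (hg.contDiffAt (hU.mem_nhds hx'))

lemma cont_cut {U : Set E} (hU : IsOpen U) {η g : E → ℝ} (hη : Continuous η)
    (hs : tsupport η ⊆ U) (hg : ContinuousOn g U) : Continuous (fun p => η p * g p) := by
  refine continuous_of_tsupport fun x hx => ?_
  have hx' : x ∈ U := hs (tsupport_mul_subset_left hx)
  exact hη.continuousAt.mul (hg.continuousAt (hU.mem_nhds hx'))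

end basic

lemma ibp {d : ℕ} (o : Fin d) (F : ℝ × (Fin d → ℝ) → ℝ) (hF : ContDiff ℝ 1 F)
    (hcs : HasCompactSupport F) (c : ℝ → ℝ) (hc : Measurable c) (B : ℝ) (hB : ∀ s, |c s| ≤ B)
    (v : ℝ × (Fin d → ℝ)) (hv : v.2 o = 0 ∨ ∀ s, c s = 1) :
    Integrable (fun p : ℝ × (Fin d → ℝ) => c (p.2 o) * fderiv ℝ F p v) ∧
    ∫ p : ℝ × (Fin d → ℝ), c (p.2 o) * fderiv ℝ F p v = 0 := by
  have hm : Measurable fun p : ℝ × (Fin d → ℝ) => c (p.2 o) := by fun_prop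
  have hF' : Continuous (fun p => fderiv ℝ F p v) :=
    (hF.continuous_fderiv (by simp)).clm_apply continuous_const
  have hcs' : HasCompactSupport (fun p => fderiv ℝ F p v) := hcs.fderiv_apply ℝ v
  have i1 : Integrable (fun p : ℝ × (Fin d → ℝ) => c (p.2 o) * fderiv ℝ F p v) :=
    (hF'.integrable_of_hasCompactSupport hcs').bdd_mul hm.aestronglyMeasurable
      (Eventually.of_forall fun p => hB _)
  have i0 : Integrable (fun p : ℝ × (Fin d → ℝ) => c (p.2 o) * F p) :=
    (hF.continuous.integrable_of_hasCompactSupport hcs).bdd_mul hm.aestronglyMeasurable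
      (Eventually.of_forall fun p => hB _)
  refine ⟨i1, ?_⟩
  have : (volume : Measure (ℝ × (Fin d → ℝ))).IsAddHaarMeasure :=
    Measure.prod.instIsAddHaarMeasure volume volume
  have key := integral_bilinear_hasLineDerivAt_right_eq_neg_left_of_integrable
    (μ := (volume : Measure (ℝ × (Fin d → ℝ))))
    (f := fun _ => (1 : ℝ)) (f' := fun _ => 0) (g := fun p => c (p.2 o) * F p)
    (g' := fun p => c (p.2 o) * fderiv ℝ F p v) (v := v) (B := ContinuousLinearMap.mul ℝ ℝ)
    (by simp) (by simpa using i1) (by simpa using i0)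
    (fun x _ => by
      unfold HasLineDerivAt; exact hasDerivAt_const (0 : ℝ) (1 : ℝ))
    (fun x _ => by
      have h1 : HasLineDerivAt ℝ F (fderiv ℝ F x v) x v :=
        ((hF.differentiable (by simp)) x).hasFDerivAt.hasLineDerivAt v
      have h2 : ∀ t : ℝ, c ((x + t • v).2 o) = c (x.2 o) := by
        intro t
        rcases hv with hv | hv
        · simp [hv]
        · simp [hv]
      unfold HasLineDerivAt at h1 ⊢
      simp only [h2]
      exact h1.const_mul _)
  simpa using key

structure IsCut (d : ℕ) (ρ ρ' C ε : ℝ) (η : ℝ × (Fin d → ℝ) → ℝ) : Prop where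
  smooth : ContDiff ℝ (⊤ : ℕ∞) η
  cs : HasCompactSupport η
  sub : tsupport η ⊆ Qc d ρ'
  nn : ∀ p, 0 ≤ η p
  le1 : ∀ p, η p ≤ 1
  one : ∀ p ∈ Qc d ρ, ε < p.1 → η p = 1
  dt : ∀ p, -C ≤ η p * pdt η p
  dx : ∀ j p, |pdx j η p| ≤ C

lemma cyl_compact (d : ℕ) (a b s : ℝ) :
    IsCompact {p : ℝ × (Fin d → ℝ) | a ≤ p.1 ∧ p.1 ≤ b ∧ ∑ j, (p.2 j) ^ 2 ≤ s} := by
  have hc : IsClosed {p : ℝ × (Fin d → ℝ) | a ≤ p.1 ∧ p.1 ≤ b ∧ ∑ j, (p.2 j) ^ 2 ≤ s} := by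
    have h1 : IsClosed {p : ℝ × (Fin d → ℝ) | a ≤ p.1} := isClosed_le (by fun_prop) (by fun_prop)
    have h2 : IsClosed {p : ℝ × (Fin d → ℝ) | p.1 ≤ b} := isClosed_le (by fun_prop) (by fun_prop)
    have h3 : IsClosed {p : ℝ × (Fin d → ℝ) | ∑ j, (p.2 j) ^ 2 ≤ s} :=
      isClosed_le (by fun_prop) (by fun_prop)
    exact h1.inter (h2.inter h3)
  refine IsCompact.of_isClosed_subset
    (isCompact_Icc.prod (isCompact_univ_pi fun _ : Fin d => isCompact_Icc)) hc
    (s := Icc a b ×ˢ Set.pi univ fun _ : Fin d => Icc (-(s + 1)) (s + 1)) ?_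
  rintro ⟨t, x⟩ ⟨h1, h2, h3⟩
  refine ⟨⟨h1, h2⟩, fun j _ => ?_⟩
  have : (x j) ^ 2 ≤ s :=
    (Finset.single_le_sum (f := fun j => (x j) ^ 2) (fun i _ => sq_nonneg _) (Finset.mem_univ j)).trans h3
  constructor <;> nlinarith [sq_nonneg (x j - 1), sq_nonneg (x j + 1)]

lemma norm_ex {d : ℕ} (j : Fin d) : ‖((0 : ℝ), (Pi.single j 1 : Fin d → ℝ))‖ ≤ 1 := by
  rw [Prod.norm_def, Pi.norm_single]; simp

lemma norm_et {d : ℕ} : ‖((1 : ℝ), (0 : Fin d → ℝ))‖ ≤ 1 := by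
  rw [Prod.norm_def]; simp

lemma exists_cut (d : ℕ) {ρ ρ' : ℝ} (hρ : 0 < ρ) (hρ' : ρ < ρ') :
    ∃ C : ℝ, 0 < C ∧ ∀ ε : ℝ, 0 < ε → ∃ η, IsCut d ρ ρ' C ε η := by
  have hsq : ρ ^ 2 < ρ' ^ 2 := by gcongr
  obtain ⟨s, hs1, hs2⟩ := exists_between hsq
  set L := s - ρ ^ 2 with hL
  have hLp : 0 < L := by simp only [hL]; linarith
  set η₀ : ℝ × (Fin d → ℝ) → ℝ := fun p => Real.smoothTransition (p.1 + 1) *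
    Real.smoothTransition ((s - p.1) / L) * Real.smoothTransition ((s - ∑ j, (p.2 j) ^ 2) / L)
    with hη₀
  have sm : ContDiff ℝ (⊤ : ℕ∞) η₀ := by
    refine ContDiff.mul (ContDiff.mul ?_ ?_) ?_
    · exact Real.smoothTransition.contDiff.comp (by fun_prop)
    · exact Real.smoothTransition.contDiff.comp (by fun_prop)
    · exact Real.smoothTransition.contDiff.comp (by fun_prop)
  have nz : ∀ p, η₀ p ≠ 0 → -1 ≤ p.1 ∧ p.1 ≤ s ∧ ∑ j, (p.2 j) ^ 2 ≤ s := by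
    intro p hp
    simp only [hη₀, mul_ne_zero_iff, Ne, Real.smoothTransition.zero_iff_nonpos, not_le] at hp
    obtain ⟨⟨h1, h2⟩, h3⟩ := hp
    rw [div_pos_iff_of_pos_right hLp] at h2 h3
    exact ⟨by linarith, by linarith, by linarith⟩
  have cs : HasCompactSupport η₀ :=
    HasCompactSupport.of_support_subset_isCompact (cyl_compact d (-1) s s) fun p hp => nz p hp
  have nn : ∀ p, 0 ≤ η₀ p := fun p => mul_nonneg (mul_nonneg (Real.smoothTransition.nonneg _)
    (Real.smoothTransition.nonneg _)) (Real.smoothTransition.nonneg _)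
  have le1 : ∀ p, η₀ p ≤ 1 := fun p => mul_le_one₀ (mul_le_one₀ (Real.smoothTransition.le_one _)
    (Real.smoothTransition.nonneg _) (Real.smoothTransition.le_one _))
    (Real.smoothTransition.nonneg _) (Real.smoothTransition.le_one _)
  obtain ⟨C, hC⟩ := (cs.fderiv (𝕜 := ℝ)).exists_bound_of_continuous
    (sm.continuous_fderiv (by simp))
  have hC0 : 0 ≤ C := (norm_nonneg _).trans (hC 0)
  have hCv : ∀ p v, ‖v‖ ≤ 1 → |fderiv ℝ η₀ p v| ≤ C := fun p v hv =>
    ((fderiv ℝ η₀ p).le_opNorm v).trans (by nlinarith [hC p, norm_nonneg v, norm_nonneg (fderiv ℝ η₀ p)])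
  refine ⟨C + 1, by linarith, fun ε hε => ?_⟩
  set α : ℝ → ℝ := fun t => Real.smoothTransition (2 * t / ε - 1) with hα
  have αsm : ContDiff ℝ (⊤ : ℕ∞) α := Real.smoothTransition.contDiff.comp (by fun_prop)
  have αmono : Monotone α := Real.smoothTransition.monotone.comp fun x y hxy => by
    gcongr
  have α0 : ∀ t, 0 ≤ α t := fun t => Real.smoothTransition.nonneg _
  have α1 : ∀ t, α t ≤ 1 := fun t => Real.smoothTransition.le_one _
  have αnz : ∀ t, α t ≠ 0 → ε / 2 ≤ t := by
    intro t ht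
    simp only [hα, Ne, Real.smoothTransition.zero_iff_nonpos, not_le] at ht
    have : 1 < 2 * t / ε := by linarith
    rw [lt_div_iff₀ hε] at this
    linarith
  have hd1 : ∀ p v, fderiv ℝ (fun q : ℝ × (Fin d → ℝ) => α q.1) p v = deriv α p.1 * v.1 := by
    intro p v
    have h1 : HasDerivAt α (deriv α p.1) p.1 := (αsm.differentiable (by simp) p.1).hasDerivAt
    have := (h1.comp_hasFDerivAt p (hasFDerivAt_fst (𝕜 := ℝ) (p := p))).fderiv
    change fderiv ℝ (α ∘ Prod.fst) p v = _
    rw [this]; simp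
  have hαd : ∀ t, 0 ≤ deriv α t := fun t => αmono.deriv_nonneg
  have hD : ∀ p v, fderiv ℝ (fun q : ℝ × (Fin d → ℝ) => α q.1 * η₀ q) p v
      = deriv α p.1 * v.1 * η₀ p + α p.1 * fderiv ℝ η₀ p v := by
    intro p v
    rw [mul_D _ (sm.differentiable (by simp) p), hd1]
    exact (αsm.comp contDiff_fst).differentiable (by simp) p
  have sub : ∀ p, α p.1 * η₀ p ≠ 0 → ε / 2 ≤ p.1 ∧ p.1 ≤ s ∧ ∑ j, (p.2 j) ^ 2 ≤ s := by
    intro p hp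
    have h1 := αnz _ (left_ne_zero_of_mul hp)
    have h2 := nz _ (right_ne_zero_of_mul hp)
    exact ⟨h1, h2.2⟩
  refine ⟨fun q => α q.1 * η₀ q, ?_⟩
  refine ⟨(αsm.comp contDiff_fst).mul sm, ?_, ?_, ?_, ?_, ?_, ?_, ?_⟩
  · exact HasCompactSupport.of_support_subset_isCompact (cyl_compact d (ε/2) s s) sub
  · refine (closure_minimal sub (cyl_compact d (ε/2) s s).isClosed).trans ?_
    rintro ⟨t, x⟩ ⟨h1, h2, h3⟩
    simp only at h1 h2 h3
    refine ⟨⟨by dsimp only; linarith, by dsimp only; linarith⟩, ?_⟩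
    simp only [ballE, mem_ofPred_eq]
    linarith
  · exact fun p => mul_nonneg (α0 _) (nn _)
  · exact fun p => mul_le_one₀ (α1 _) (nn _) (le1 _)
  · rintro ⟨t, x⟩ ⟨⟨h1, h2⟩, h3⟩ h4
    simp only [ballE, mem_ofPred_eq] at h1 h2 h3 h4
    have e1 : α t = 1 := by
      refine Real.smoothTransition.one_of_one_le ?_
      have : 2 ≤ 2 * t / ε := by rw [le_div_iff₀ hε]; linarith
      linarith
    have e2 : Real.smoothTransition (t + 1) = 1 :=
      Real.smoothTransition.one_of_one_le (by linarith)
    have e3 : Real.smoothTransition ((s - t) / L) = 1 :=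
      Real.smoothTransition.one_of_one_le (by rw [le_div_iff₀ hLp]; linarith)
    have e4 : Real.smoothTransition ((s - ∑ j, (x j) ^ 2) / L) = 1 :=
      Real.smoothTransition.one_of_one_le (by rw [le_div_iff₀ hLp]; linarith)
    simp only [hη₀, e1, e2, e3, e4]; norm_num
  · intro p
    simp only [pdt, hD]
    have h1 := hCv p _ norm_et
    have h2 := abs_le.1 h1
    have h3 : 0 ≤ α p.1 * η₀ p * (deriv α p.1 * 1 * η₀ p) := by
      have := α0 p.1; have := nn p; have := hαd p.1; positivity
    have h4 : 0 ≤ α p.1 * η₀ p * α p.1 := by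
      have := α0 p.1; have := nn p; positivity
    have h5 : α p.1 * η₀ p * α p.1 ≤ 1 :=
      mul_le_one₀ (mul_le_one₀ (α1 _) (nn _) (le1 _)) (α0 _) (α1 _)
    nlinarith
  · intro j p
    simp only [pdx, hD]
    have h1 := hCv p _ (norm_ex j)
    rw [mul_zero, zero_mul, zero_add, abs_mul, abs_of_nonneg (α0 _)]
    nlinarith [α0 p.1, α1 p.1, abs_nonneg (fderiv ℝ η₀ p (0, Pi.single j 1))]

/-- Removing the cutoff. -/
lemma limit_cut (d : ℕ) {ρ ρ' C : ℝ} (hρ : 0 < ρ) (hρ' : ρ < ρ')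
    (hC : ∀ ε : ℝ, 0 < ε → ∃ η, IsCut d ρ ρ' C ε η) (f : ℝ × (Fin d → ℝ) → ℝ)
    (hf : ContinuousOn f (Qc d ρ')) (hf0 : ∀ p, 0 ≤ f p) (M : ℝ)
    (hM : ∀ ε η, IsCut d ρ ρ' C ε η → ∫ p in Qc d ρ', η p ^ 2 * f p ≤ M) :
    IntegrableOn f (Qc d ρ) ∧ ∫ p in Qc d ρ, f p ≤ M := by
  have hms : MeasurableSet (Qc d ρ) := (Qc_open d ρ).measurableSet
  have hms' : MeasurableSet (Qc d ρ') := (Qc_open d ρ').measurableSet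
  have hsub := Qc_mono d hρ hρ'.le
  set φ : ℕ → Set (ℝ × (Fin d → ℝ)) := fun n => {p | 1 / ((n : ℝ) + 1) < p.1} with hφ
  have hφm : ∀ n, MeasurableSet (φ n) := fun n => measurableSet_lt measurable_const measurable_fst
  have cov : AECover (volume.restrict (Qc d ρ)) atTop φ := by
    refine ⟨?_, hφm⟩
    filter_upwards [ae_restrict_mem hms] with p hp
    exact (tendsto_one_div_add_atTop_nhds_zero_nat).eventually (gt_mem_nhds hp.1.1)
  have main : ∀ n, IntegrableOn f (φ n) (volume.restrict (Qc d ρ)) ∧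
      ∫ p in φ n, f p ∂(volume.restrict (Qc d ρ)) ≤ M := by
    intro n
    obtain ⟨η, hη⟩ := hC (1 / ((n : ℝ) + 1)) (by positivity)
    have ts : tsupport (fun p => η p ^ 2) ⊆ Qc d ρ' := by
      refine subset_trans (closure_mono ?_) hη.sub
      intro p hp hp'
      exact hp (by simp [hp'])
    have hcont : Continuous (fun p => η p ^ 2 * f p) :=
      cont_cut (Qc_open d ρ') (hη.smooth.continuous.pow 2) ts hf
    have hcs : HasCompactSupport (fun p => η p ^ 2 * f p) := by
      refine hη.cs.mono fun p hp hp' => hp (by simp [hp'])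
    have hi : Integrable (fun p => η p ^ 2 * f p) := hcont.integrable_of_hasCompactSupport hcs
    rw [IntegrableOn, Measure.restrict_restrict (hφm n)]
    have hm := (hφm n).inter hms
    have eo : EqOn (fun p => η p ^ 2 * f p) f (φ n ∩ Qc d ρ) := by
      intro p hp
      simp only [hη.one p hp.2 hp.1]; ring
    refine ⟨(hi.integrableOn).congr_fun eo hm, ?_⟩
    rw [← setIntegral_congr_fun hm eo]
    refine le_trans (setIntegral_mono_set hi.integrableOn ?_ ?_) (hM _ _ hη)
    · exact Eventually.of_forall fun p => mul_nonneg (sq_nonneg _) (hf0 p)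
    · exact (inter_subset_right.trans hsub).eventuallyLE
  have hint : Integrable f (volume.restrict (Qc d ρ)) :=
    cov.integrable_of_integral_bounded_of_nonneg_ae M (fun n => (main n).1)
      (Eventually.of_forall hf0) (Eventually.of_forall fun n => (main n).2)
  exact ⟨hint, le_of_tendsto' (cov.integral_tendsto_of_countably_generated hint)
    fun n => (main n).2⟩

/-- Normalised coefficients. -/
structure NC (d : ℕ) (o : Fin d) (κ B : ℝ) (w : ℝ → ℝ) (c : ℝ → Fin d → Fin d → ℝ) : Prop where
  mw : Measurable w
  mc : ∀ j k, Measurable fun s => c s j k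
  oo : ∀ s, c s o o = 1
  wl : ∀ s, κ ≤ w s
  wu : ∀ s, w s ≤ B
  cb : ∀ s j k, |c s j k| ≤ B
  ell : ∀ s (θ : Fin d → ℝ), κ * ∑ j, (θ j) ^ 2 ≤ ∑ j, ∑ k, c s j k * θ j * θ k

structure Sol (d : ℕ) (o : Fin d) (w : ℝ → ℝ) (c : ℝ → Fin d → Fin d → ℝ) (ρ : ℝ)
    (u : ℝ × (Fin d → ℝ) → ℝ) : Prop where
  sm : ContDiffOn ℝ (⊤ : ℕ∞) u (Qc d ρ)
  int : IntegrableOn (fun p => (u p) ^ 2) (Qc d ρ)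
  eq : ∀ p ∈ Qc d ρ, w (p.2 o) * pdt u p + ∑ j, ∑ k, c (p.2 o) j k * pdxx j k u p = 0

def Zf {d : ℕ} (U : Set (ℝ × (Fin d → ℝ))) (f : ℝ × (Fin d → ℝ) → ℝ) : Prop :=
  IntegrableOn f U ∧ ∫ p in U, f p = 0

lemma Zf.add {d : ℕ} {U : Set (ℝ × (Fin d → ℝ))} {f g : ℝ × (Fin d → ℝ) → ℝ} (hf : Zf U f)
    (hg : Zf U g) : Zf U (fun p => f p + g p) :=
  ⟨hf.1.add hg.1, by rw [integral_add hf.1 hg.1, hf.2, hg.2, add_zero]⟩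

lemma Zf.sub {d : ℕ} {U : Set (ℝ × (Fin d → ℝ))} {f g : ℝ × (Fin d → ℝ) → ℝ} (hf : Zf U f)
    (hg : Zf U g) : Zf U (fun p => f p - g p) :=
  ⟨hf.1.sub hg.1, by rw [integral_sub hf.1 hg.1, hf.2, hg.2, sub_zero]⟩

lemma Zf.sum {d : ℕ} {ι : Type*} (s : Finset ι) {U : Set (ℝ × (Fin d → ℝ))}
    {f : ι → ℝ × (Fin d → ℝ) → ℝ} (hf : ∀ i, Zf U (f i)) : Zf U (fun p => ∑ i ∈ s, f i p) :=
  ⟨integrable_finsetSum _ fun i _ => (hf i).1, by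
    rw [integral_finsetSum _ fun i _ => (hf i).1]; simp [(hf _).2]⟩

lemma Zf.le {d : ℕ} {U : Set (ℝ × (Fin d → ℝ))} (hU : MeasurableSet U)
    {T f g : ℝ × (Fin d → ℝ) → ℝ} (hT : Zf U T) (A : ℝ) (hg : IntegrableOn g U)
    (hf0 : ∀ p, 0 ≤ f p) (h : ∀ p ∈ U, f p ≤ A * T p + g p) :
    ∫ p in U, f p ≤ ∫ p in U, g p := by
  have h1 : IntegrableOn (fun p => A * T p + g p) U := (hT.1.const_mul A).add hg
  have h2 : ∫ p in U, (A * T p + g p) = ∫ p in U, g p := by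
    rw [integral_add (hT.1.const_mul A) hg, integral_const_mul, hT.2]; simp
  rw [← h2]
  refine integral_mono_of_nonneg (Eventually.of_forall hf0) h1 ?_
  filter_upwards [ae_restrict_mem hU] with p hp using h p hp

lemma ibpU {d : ℕ} (o : Fin d) {ρ ρ' C ε : ℝ} {η : ℝ × (Fin d → ℝ) → ℝ}
    (hη : IsCut d ρ ρ' C ε η) {g : ℝ × (Fin d → ℝ) → ℝ}
    (hg : ContDiffOn ℝ (⊤ : ℕ∞) g (Qc d ρ'))
    (c : ℝ → ℝ) (hc : Measurable c) (B : ℝ) (hB : ∀ s, |c s| ≤ B)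
    (v : ℝ × (Fin d → ℝ)) (hv : v.2 o = 0 ∨ ∀ s, c s = 1) :
    Zf (Qc d ρ') (fun p => c (p.2 o) * fderiv ℝ (fun q => η q * g q) p v) := by
  have hcs : HasCompactSupport (fun q => η q * g q) := hη.cs.mul_right
  have h := ibp o (fun q => η q * g q)
    ((contDiff_cut (Qc_open d ρ') hη.smooth hη.sub hg).of_le (by exact_mod_cast le_top))
    hcs c hc B hB v hv
  refine ⟨h.1.integrableOn, ?_⟩
  rw [setIntegral_eq_integral_of_forall_compl_eq_zero, h.2]
  intro p hp
  have hp' : p ∉ tsupport (fun q => η q * g q) := fun h =>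
    hp (hη.sub (tsupport_mul_subset_left h))
  have : (fun q => η q * g q) =ᶠ[𝓝 p] fun _ => 0 := notMem_tsupport_iff_eventuallyEq.1 hp'
  rw [this.fderiv_eq]; simp

def Bd (d : ℕ) (ρ ρ' N : ℝ) (u v : ℝ × (Fin d → ℝ) → ℝ) : Prop :=
  IntegrableOn (fun p => (v p) ^ 2) (Qc d ρ) ∧
    ∫ p in Qc d ρ, (v p) ^ 2 ≤ N * ∫ p in Qc d ρ', (u p) ^ 2

lemma eta2_D {d : ℕ} {ρ ρ' C ε : ℝ} {η : ℝ × (Fin d → ℝ) → ℝ}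
    (hη : IsCut d ρ ρ' C ε η) {f g : ℝ × (Fin d → ℝ) → ℝ}
    (hf : ContDiffOn ℝ (⊤ : ℕ∞) f (Qc d ρ')) (hg : ContDiffOn ℝ (⊤ : ℕ∞) g (Qc d ρ'))
    {p : ℝ × (Fin d → ℝ)} (hp : p ∈ Qc d ρ') (v : ℝ × (Fin d → ℝ)) :
    fderiv ℝ (fun q => η q * (η q * (f q * g q))) p v =
      2 * η p * fderiv ℝ η p v * f p * g p + η p ^ 2 * fderiv ℝ f p v * g p
        + η p ^ 2 * f p * fderiv ℝ g p v := by
  have dη : DifferentiableAt ℝ η p := hη.smooth.differentiable (by simp) p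
  have df := diffAt_of (Qc_open d ρ') hf hp
  have dg := diffAt_of (Qc_open d ρ') hg hp
  rw [mul_D dη (dη.fun_mul (df.fun_mul dg)), mul_D dη (df.fun_mul dg), mul_D df dg]
  ring

lemma young (l x y : ℝ) (hl : 0 < l) : 2 * x * y ≤ l * x ^ 2 + y ^ 2 / l := by
  have h : 0 ≤ (l * x - y) ^ 2 / l := by positivity
  have e : (l * x - y) ^ 2 / l = l * x ^ 2 + y ^ 2 / l - 2 * x * y := by
    field_simp; ring
  linarith

lemma cacc (d : ℕ) (o : Fin d) {κ B : ℝ} (hκ : 0 < κ) (hB : 0 < B) {ρ ρ' : ℝ} (hρ : 0 < ρ)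
    (hρ' : ρ < ρ') : ∃ N : ℝ, 0 < N ∧ ∀ w c, NC d o κ B w c → ∀ u, Sol d o w c ρ' u →
      ∀ j, Bd d ρ ρ' N u (pdx j u) := by
  obtain ⟨C, hC0, hC⟩ := exists_cut d hρ hρ'
  have hdpos : (0 : ℝ) < d := by
    have := o.pos; exact_mod_cast this
  set D : ℝ := (d : ℝ) * d with hD
  have hDpos : 0 < D := by positivity
  set l : ℝ := κ / (2 * D) with hl
  have hlpos : 0 < l := by positivity
  set K : ℝ := B * C + D * ((B * C) ^ 2 / l) with hK
  have hKpos : 0 < K := by positivity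
  refine ⟨2 / κ * K, by positivity, fun w c hc u hu i => ?_⟩
  have hU := Qc_open d ρ'
  have hw0 : ∀ s, 0 ≤ w s := fun s => hκ.le.trans (hc.wl s)
  have sx : ∀ j, ContDiffOn ℝ (⊤ : ℕ∞) (pdx j u) (Qc d ρ') := fun j => smooth_D hU hu.sm _
  refine limit_cut d hρ hρ' hC _ ((sx i).continuousOn.pow 2) (fun p => sq_nonneg _) _ ?_
  intro ε η hη
  set σ : Fin d → Fin d → Fin d := fun j k => if j = o then k else j with hσ
  set τ : Fin d → Fin d → Fin d := fun j k => if j = o then j else k with hτ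
  have z0 : Zf (Qc d ρ') (fun p => (w (p.2 o) / 2) *
      fderiv ℝ (fun q => η q * (η q * (u q * u q))) p (1, 0)) := by
    refine ibpU o hη (hη.smooth.contDiffOn.mul (hu.sm.mul hu.sm)) (fun s => w s / 2)
      (hc.mw.div_const 2) B (fun s => ?_) _ (Or.inl rfl)
    have := hc.wu s; have := hw0 s
    rw [abs_of_nonneg (by linarith)]; linarith
  have z1 : ∀ j k, Zf (Qc d ρ') (fun p => c (p.2 o) j k *
      fderiv ℝ (fun q => η q * (η q * (u q * pdx (τ j k) u q))) p (0, Pi.single (σ j k) 1)) := by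
    intro j k
    refine ibpU o hη (hη.smooth.contDiffOn.mul (hu.sm.mul (sx _))) (fun s => c s j k)
      (hc.mc j k) B (fun s => hc.cb s j k) _ ?_
    by_cases hj : j = o
    · by_cases hk : k = o
      · right; intro s; rw [hj, hk]; exact hc.oo s
      · left; simp [hσ, hj, Ne.symm hk]
    · left; simp [hσ, hj, Ne.symm hj]
  have zT := z0.add (Zf.sum Finset.univ fun j => Zf.sum Finset.univ fun k => z1 j k)
  have := Zf.le (f := fun p => η p ^ 2 * pdx i u p ^ 2) hU.measurableSet zT (2 / κ)
    (hu.int.const_mul (2 / κ * K))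
    (fun p => by positivity) ?_
  · rwa [integral_const_mul] at this
  intro p hp
  set S := ∑ j, (pdx j u p) ^ 2 with hS
  have hSi : ∀ j, (pdx j u p) ^ 2 ≤ S := fun j =>
    Finset.single_le_sum (f := fun j => (pdx j u p) ^ 2) (fun i _ => sq_nonneg _) (Finset.mem_univ j)
  set s := p.2 o with hs
  have e0 : w s / 2 * fderiv ℝ (fun q => η q * (η q * (u q * u q))) p (1, 0)
      = w s * (η p * pdt η p) * u p ^ 2 + η p ^ 2 * u p * (w s * pdt u p) := by
    rw [eta2_D hη hu.sm hu.sm hp]; simp only [pdt]; ring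
  have hpair : ∀ j k, η p ^ 2 * u p * (c s j k * pdxx j k u p)
      + η p ^ 2 * (c s j k * pdx j u p * pdx k u p) - (l * (η p ^ 2 * S) + (B * C) ^ 2 / l * u p ^ 2)
      ≤ c s j k *
      fderiv ℝ (fun q => η q * (η q * (u q * pdx (τ j k) u q))) p (0, Pi.single (σ j k) 1) := by
    intro j k
    rw [eta2_D hη hu.sm (sx _) hp]
    have e1 : fderiv ℝ (pdx (τ j k) u) p (0, Pi.single (σ j k) 1) = pdxx j k u p := by
      by_cases hj : j = o
      · simp only [hσ, hτ, if_pos hj, pdxx]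
        exact comm_D hU hu.sm _ _ hp
      · simp only [hσ, hτ, if_neg hj, pdxx]; rfl
    have e2 : fderiv ℝ u p (0, Pi.single (σ j k) 1) * pdx (τ j k) u p
        = pdx j u p * pdx k u p := by
      by_cases hj : j = o
      · simp only [hσ, hτ, if_pos hj, pdx]; ring
      · simp only [hσ, hτ, if_neg hj, pdx]
    rw [e1]
    have b1 : |c s j k * pdx (σ j k) η p| ≤ B * C := by
      rw [abs_mul]
      exact mul_le_mul (hc.cb _ _ _) (hη.dx _ _) (abs_nonneg _) hB.le
    have y := young l (η p * pdx (τ j k) u p) (-(c s j k * pdx (σ j k) η p * u p)) hlpos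
    have b2 : (c s j k * pdx (σ j k) η p) ^ 2 ≤ (B * C) ^ 2 := by
      rw [← sq_abs]; gcongr
    have b3 : (-(c s j k * pdx (σ j k) η p * u p)) ^ 2 / l ≤ (B * C) ^ 2 / l * u p ^ 2 := by
      have : (-(c s j k * pdx (σ j k) η p * u p)) ^ 2 / l
          = (c s j k * pdx (σ j k) η p) ^ 2 / l * u p ^ 2 := by ring
      rw [this]; gcongr
    have b4 : l * (η p * pdx (τ j k) u p) ^ 2 ≤ l * (η p ^ 2 * S) := by
      rw [mul_pow]; gcongr; exact hSi _
    have e3 : fderiv ℝ η p (0, Pi.single (σ j k) 1) = pdx (σ j k) η p := rfl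
    rw [e3]
    have e4 : c s j k * (η p ^ 2 * fderiv ℝ u p (0, Pi.single (σ j k) 1) * pdx (τ j k) u p)
      = η p ^ 2 * (c s j k * pdx j u p * pdx k u p) := by
      linear_combination (c s j k * η p ^ 2) * e2
    nlinarith
  have hsum := Finset.sum_le_sum fun j (_ : j ∈ (Finset.univ : Finset (Fin d))) =>
    Finset.sum_le_sum fun k (_ : k ∈ (Finset.univ : Finset (Fin d))) => hpair j k
  simp only [Finset.sum_sub_distrib, Finset.sum_add_distrib, ← Finset.mul_sum,
    Finset.sum_const, Finset.card_univ, Fintype.card_fin, nsmul_eq_mul] at hsum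
  have heq := hu.eq p hp
  rw [← hs] at heq
  have hell := hc.ell s (fun j => pdx j u p)
  have hSe : ∑ j, (fun j => pdx j u p) j ^ 2 = S := rfl
  rw [hSe] at hell
  have ht : -(B * C) * u p ^ 2 ≤ w s * (η p * pdt η p) * u p ^ 2 := by
    have h1 : -(B * C) ≤ w s * (η p * pdt η p) := by
      nlinarith [hη.dt p, hc.wu s, hw0 s]
    gcongr
  have hell2 : η p ^ 2 * (κ * S) ≤ η p ^ 2 * ∑ j, ∑ k, c s j k * pdx j u p * pdx k u p := by
    gcongr
  have hq : η p ^ 2 * u p * (w s * pdt u p) + η p ^ 2 * u p *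
      ∑ j, ∑ k, c s j k * pdxx j k u p = 0 := by
    rw [← mul_add, heq, mul_zero]
  have hlD : D * l = κ / 2 := by rw [hl]; field_simp
  set T := ∑ j, ∑ k, c s j k *
      fderiv ℝ (fun q => η q * (η q * (u q * pdx (τ j k) u q))) p (0, Pi.single (σ j k) 1) with hT
  have fin : κ / 2 * (η p ^ 2 * S) ≤ (w s / 2 *
      fderiv ℝ (fun q => η q * (η q * (u q * u q))) p (1, 0) + T) + K * u p ^ 2 := by
    rw [e0]
    have e5 : D * (l * (η p ^ 2 * S)) = κ / 2 * (η p ^ 2 * S) := by rw [← mul_assoc, hlD]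
    simp only [hK]
    simp only [hD] at e5 ⊢
    linarith
  have : η p ^ 2 * pdx i u p ^ 2 ≤ 2 / κ * (κ / 2 * (η p ^ 2 * S)) := by
    have : 2 / κ * (κ / 2 * (η p ^ 2 * S)) = η p ^ 2 * S := by field_simp
    rw [this]; gcongr; exact hSi i
  have fin2 := mul_le_mul_of_nonneg_left fin (by positivity : 0 ≤ 2 / κ)
  rw [mul_add (2 / κ) _ (K * u p ^ 2), ← mul_assoc (2 / κ) K] at fin2
  exact this.trans fin2

lemma sol_D {d : ℕ} {o : Fin d} {w : ℝ → ℝ} {c : ℝ → Fin d → Fin d → ℝ} {ρ ρ' : ℝ}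
    (hρ : 0 < ρ) (hρ' : ρ < ρ') {u : ℝ × (Fin d → ℝ) → ℝ} (hu : Sol d o w c ρ' u)
    (v : ℝ × (Fin d → ℝ)) (hv : v.2 o = 0)
    (hi : IntegrableOn (fun p => (fderiv ℝ u p v) ^ 2) (Qc d ρ)) :
    Sol d o w c ρ (fun p => fderiv ℝ u p v) := by
  have hU := Qc_open d ρ'
  have hsub := Qc_mono d hρ hρ'.le
  refine ⟨(smooth_D hU hu.sm v).mono hsub, hi, fun p hp => ?_⟩
  have hp' := hsub hp
  have hline : ∀ f : ℝ × (Fin d → ℝ) → ℝ, ContDiffOn ℝ (⊤ : ℕ∞) f (Qc d ρ') →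
      HasDerivAt (fun t : ℝ => f (p + t • v)) (fderiv ℝ f p v) 0 := fun f hf =>
    (diffAt_of hU hf hp').hasFDerivAt.hasLineDerivAt v
  have h1 := (hline _ (smooth_D hU hu.sm (1, 0))).const_mul (w (p.2 o))
  have h2 : ∀ j k, HasDerivAt (fun t : ℝ => c (p.2 o) j k * pdxx j k u (p + t • v))
      (c (p.2 o) j k * fderiv ℝ (pdxx j k u) p v) 0 := fun j k =>
    (hline _ (smooth_D hU (smooth_D hU hu.sm _) _)).const_mul _
  have h3 := h1.fun_add (HasDerivAt.fun_sum (u := Finset.univ) fun j _ =>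
    HasDerivAt.fun_sum (u := Finset.univ) fun k _ => h2 j k)
  have hc : ContinuousAt (fun t : ℝ => p + t • v) 0 := by fun_prop
  have hev : ∀ᶠ t : ℝ in 𝓝 0, p + t • v ∈ Qc d ρ' :=
    hc.eventually_mem (hU.mem_nhds (by simpa using hp'))
  have h4 : HasDerivAt (fun _ : ℝ => (0 : ℝ)) _ 0 := h3.congr_of_eventuallyEq (by
    filter_upwards [hev] with t ht
    have := hu.eq _ ht
    have e : (p + t • v).2 o = p.2 o := by simp [hv]
    rw [e] at this
    exact this.symm)
  have h5 := h4.unique (hasDerivAt_const _ _)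
  have e1 : fderiv ℝ (fun q => fderiv ℝ u q (1, 0)) p v = pdt (fun p => fderiv ℝ u p v) p :=
    comm_D hU hu.sm _ _ hp'
  have e2 : ∀ j k, fderiv ℝ (pdxx j k u) p v = pdxx j k (fun p => fderiv ℝ u p v) p := by
    intro j k
    have a1 : fderiv ℝ (pdxx j k u) p v
        = fderiv ℝ (fun q => fderiv ℝ (pdx k u) q v) p (0, Pi.single j 1) :=
      comm_D hU (smooth_D hU hu.sm _) _ _ hp'
    rw [a1]
    refine congr_D hU (f := fun q => fderiv ℝ (pdx k u) q v)
      (g := pdx k (fun p => fderiv ℝ u p v)) (fun q hq => ?_) _ hp'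
    exact comm_D hU hu.sm _ _ hq
  rw [e1] at h5
  simpa only [e2] using h5

lemma Bd.trans {d : ℕ} {ρ ρ₁ ρ₂ N M : ℝ} (hN : 0 ≤ N) {u v z : ℝ × (Fin d → ℝ) → ℝ}
    (h1 : Bd d ρ₁ ρ₂ M u v) (h2 : Bd d ρ ρ₁ N v z) : Bd d ρ ρ₂ (N * M) u z :=
  ⟨h2.1, h2.2.trans (by rw [mul_assoc]; gcongr; exact h1.2)⟩

lemma Bd.congr {d : ℕ} {ρ ρ' N : ℝ} {u v z : ℝ × (Fin d → ℝ) → ℝ} (h : EqOn v z (Qc d ρ))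
    (h1 : Bd d ρ ρ' N u v) : Bd d ρ ρ' N u z := by
  have e : EqOn (fun p => (v p) ^ 2) (fun p => (z p) ^ 2) (Qc d ρ) := fun p hp => by
    simp only [h hp]
  have hm := (Qc_open d ρ).measurableSet
  exact ⟨h1.1.congr_fun e hm, by rw [← setIntegral_congr_fun hm e]; exact h1.2⟩

lemma int_nonneg {d : ℕ} (ρ : ℝ) (u : ℝ × (Fin d → ℝ) → ℝ) : 0 ≤ ∫ p in Qc d ρ, (u p) ^ 2 :=
  integral_nonneg fun p => sq_nonneg _

lemma Bd.mono {d : ℕ} {ρ ρ' N M : ℝ} {u v : ℝ × (Fin d → ℝ) → ℝ} (hNM : N ≤ M)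
    (h : Bd d ρ ρ' N u v) : Bd d ρ ρ' M u v :=
  ⟨h.1, h.2.trans (mul_le_mul_of_nonneg_right hNM (int_nonneg ρ' u))⟩

lemma Bd.mono_set {d : ℕ} {ρ ρ₁ ρ' N : ℝ} (hρ : 0 < ρ) (h1 : ρ ≤ ρ₁)
    {u v : ℝ × (Fin d → ℝ) → ℝ}
    (h : Bd d ρ₁ ρ' N u v) : Bd d ρ ρ' N u v :=
  ⟨h.1.mono_set (Qc_mono d hρ h1), (setIntegral_mono_set h.1
    (Eventually.of_forall fun p => sq_nonneg _) (Qc_mono d hρ h1).eventuallyLE).trans h.2⟩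

/-- Tangential space derivatives. -/
lemma sol_x (d : ℕ) (o : Fin d) {κ B : ℝ} (hκ : 0 < κ) (hB : 0 < B) {ρ ρ' : ℝ} (hρ : 0 < ρ)
    (hρ' : ρ < ρ') : ∃ N : ℝ, 0 < N ∧ ∀ w c, NC d o κ B w c → ∀ u, Sol d o w c ρ' u →
      ∀ j, j ≠ o → Sol d o w c ρ (pdx j u) ∧ Bd d ρ ρ' N u (pdx j u) := by
  obtain ⟨N, hN, h⟩ := cacc d o hκ hB hρ hρ'
  refine ⟨N, hN, fun w c hc u hu j hj => ?_⟩
  have hb := h w c hc u hu j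
  exact ⟨sol_D hρ hρ' hu _ (by simp [Ne.symm hj]) hb.1, hb⟩

lemma bd_xx (d : ℕ) (o : Fin d) {κ B : ℝ} (hκ : 0 < κ) (hB : 0 < B) {ρ ρ' : ℝ} (hρ : 0 < ρ)
    (hρ' : ρ < ρ') : ∃ N : ℝ, 0 < N ∧ ∀ w c, NC d o κ B w c → ∀ u, Sol d o w c ρ' u →
      ∀ j k, ¬ (j = o ∧ k = o) → Bd d ρ ρ' N u (pdxx j k u) := by
  obtain ⟨ρ₁, h1, h2⟩ := exists_between hρ'
  obtain ⟨N, hN, hn⟩ := cacc d o hκ hB hρ h1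
  obtain ⟨M, hM, hm⟩ := sol_x d o hκ hB (hρ.trans h1) h2
  refine ⟨N * M, by positivity, fun w c hc u hu j k hjk => ?_⟩
  have hU := Qc_open d ρ'
  by_cases hk : k = o
  · have hj : j ≠ o := fun hj => hjk ⟨hj, hk⟩
    obtain ⟨a, b⟩ := hm w c hc u hu j hj
    refine (b.trans hN.le (hn w c hc _ a k)).congr ?_
    intro p hp
    exact comm_D hU hu.sm _ _ (Qc_mono d hρ hρ'.le hp)
  · obtain ⟨a, b⟩ := hm w c hc u hu k hk
    exact b.trans hN.le (hn w c hc _ a j)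

/-- The off-normal second-order part. -/
noncomputable def offG {d : ℕ} (o : Fin d) (u : ℝ × (Fin d → ℝ) → ℝ) (p : ℝ × (Fin d → ℝ)) : ℝ :=
  ∑ j, ∑ k, if j = o ∧ k = o then 0 else (pdxx j k u p) ^ 2

lemma off_split {d : ℕ} {o : Fin d} {κ B : ℝ} {w : ℝ → ℝ} {c : ℝ → Fin d → Fin d → ℝ}
    (hc : NC d o κ B w c) (s : ℝ) (u : ℝ × (Fin d → ℝ) → ℝ) (p : ℝ × (Fin d → ℝ)) :
    ∃ f : ℝ, ∑ j, ∑ k, c s j k * pdxx j k u p = pdxx o o u p + f ∧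
      f ^ 2 ≤ ((d : ℝ) * d * B ^ 2) * offG o u p := by
  refine ⟨∑ j, ∑ k, if j = o ∧ k = o then 0 else c s j k * pdxx j k u p, ?_, ?_⟩
  · have : pdxx o o u p = ∑ j, ∑ k, if j = o ∧ k = o then c s j k * pdxx j k u p else 0 := by
      rw [Finset.sum_eq_single o, Finset.sum_eq_single o]
      · simp [hc.oo]
      · intro k _ hk; simp [hk]
      · simp
      · intro j _ hj; simp [hj]
      · simp
    rw [this, ← Finset.sum_add_distrib]
    refine Finset.sum_congr rfl fun j _ => ?_
    rw [← Finset.sum_add_distrib]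
    refine Finset.sum_congr rfl fun k _ => ?_
    split_ifs <;> simp
  · have h1 := sq_sum_le_card_mul_sum_sq (s := (Finset.univ : Finset (Fin d)))
      (f := fun j => ∑ k, if j = o ∧ k = o then 0 else c s j k * pdxx j k u p)
    refine h1.trans ?_
    rw [Finset.card_univ, Fintype.card_fin, mul_assoc, mul_assoc]
    refine mul_le_mul_of_nonneg_left ?_ (Nat.cast_nonneg d)
    rw [offG, ← mul_assoc, Finset.mul_sum]
    refine Finset.sum_le_sum fun j _ => ?_
    refine sq_sum_le_card_mul_sum_sq.trans ?_
    rw [Finset.card_univ, Fintype.card_fin, mul_assoc]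
    refine mul_le_mul_of_nonneg_left ?_ (Nat.cast_nonneg d)
    rw [Finset.mul_sum]
    refine Finset.sum_le_sum fun k _ => ?_
    split_ifs
    · simp
    · rw [mul_pow]
      refine mul_le_mul_of_nonneg_right ?_ (sq_nonneg _)
      rw [← sq_abs]; gcongr; exact hc.cb s j k

lemma time0 (d : ℕ) (o : Fin d) {κ B : ℝ} (hκ : 0 < κ) (hB : 0 < B) {ρ ρ' : ℝ} (hρ : 0 < ρ)
    (hρ' : ρ < ρ') : ∃ N : ℝ, 0 < N ∧ ∀ w c, NC d o κ B w c → ∀ u, Sol d o w c ρ' u →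
      IntegrableOn (fun p => offG o u p + (pdx o u p) ^ 2) (Qc d ρ') →
      IntegrableOn (fun p => (pdt u p) ^ 2) (Qc d ρ) ∧
      ∫ p in Qc d ρ, (pdt u p) ^ 2 ≤ N * ∫ p in Qc d ρ', (offG o u p + (pdx o u p) ^ 2) := by
  obtain ⟨C, hC0, hC⟩ := exists_cut d hρ hρ'
  have hdpos : (0 : ℝ) < d := by
    have := o.pos; exact_mod_cast this
  set K : ℝ := (d * d * B ^ 2) / κ + (4 * C ^ 2 / κ + C) with hK
  have hKpos : 0 < K := by positivity
  refine ⟨2 / κ * K, by positivity, fun w c hc u hu hG => ?_⟩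
  have hU := Qc_open d ρ'
  have st : ContDiffOn ℝ (⊤ : ℕ∞) (pdt u) (Qc d ρ') := smooth_D hU hu.sm _
  have sx : ∀ j, ContDiffOn ℝ (⊤ : ℕ∞) (pdx j u) (Qc d ρ') := fun j => smooth_D hU hu.sm _
  refine limit_cut d hρ hρ' hC _ (st.continuousOn.pow 2) (fun p => sq_nonneg _) _ ?_
  intro ε η hη
  have z0 : Zf (Qc d ρ') (fun p => (1 / 2) *
      fderiv ℝ (fun q => η q * (η q * (pdx o u q * pdx o u q))) p (1, 0)) := 
    ibpU o hη (hη.smooth.contDiffOn.mul ((sx o).mul (sx o))) (fun s => 1 / 2)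
      measurable_const (1 / 2) (fun s => by simp) _ (Or.inl rfl)
  have z1 : Zf (Qc d ρ') (fun p => 1 *
      fderiv ℝ (fun q => η q * (η q * (pdt u q * pdx o u q))) p (0, Pi.single o 1)) :=
    ibpU o hη (hη.smooth.contDiffOn.mul (st.mul (sx _))) (fun s => 1)
      measurable_const 1 (fun s => by simp) _ (Or.inr fun _ => rfl)
  have zT := z0.sub z1
  have := Zf.le (f := fun p => η p ^ 2 * pdt u p ^ 2) hU.measurableSet zT (2 / κ)
    (hG.const_mul (2 / κ * K))
    (fun p => by positivity) ?_
  · rwa [integral_const_mul] at this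
  intro p hp
  obtain ⟨f, hf1, hf2⟩ := off_split hc (p.2 o) u p
  set s := p.2 o with hs
  have heq := hu.eq p hp
  rw [← hs, hf1] at heq

  rw [eta2_D hη (sx o) (sx o) hp, eta2_D hη st (sx o) hp]
  have e1 : fderiv ℝ (pdx o u) p (0, Pi.single o 1) = pdxx o o u p := rfl
  have e2 : fderiv ℝ (pdx o u) p (1, 0) = fderiv ℝ (pdt u) p (0, Pi.single o 1) :=
    comm_D hU hu.sm _ _ hp
  have e3 : fderiv ℝ η p (0, Pi.single o 1) = pdx o η p := rfl
  have e4 : fderiv ℝ η p (1, 0) = pdt η p := rfl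
  rw [e1, e2, e3, e4]
  have hoo : pdxx o o u p = -(w s * pdt u p) - f := by linarith
  rw [hoo]
  have h0 := hη.nn p
  have h1 := hη.le1 p
  have hG0 : 0 ≤ offG o u p := Finset.sum_nonneg fun j _ => Finset.sum_nonneg fun k _ => by
    split_ifs <;> positivity
  have y1 := young (κ / 4) (η p * pdt u p) (-(η p * f / 2)) (by positivity)
  have y2 := young (κ / 4) (η p * pdt u p) (pdx o η p * pdx o u p) (by positivity)
  have b0 : η p ^ 2 ≤ 1 := by nlinarith
  have b1 : (-(η p * f / 2)) ^ 2 / (κ / 4) ≤ (d * d * B ^ 2) / κ * offG o u p := by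
    have : (-(η p * f / 2)) ^ 2 / (κ / 4) = η p ^ 2 * f ^ 2 / κ := by
      field_simp
      ring
    rw [this, div_mul_eq_mul_div]
    refine div_le_div_of_nonneg_right ?_ hκ.le
    nlinarith [sq_nonneg f]
  have b2 : (pdx o η p * pdx o u p) ^ 2 / (κ / 4) ≤ 4 * C ^ 2 / κ * pdx o u p ^ 2 := by
    have e : (pdx o η p * pdx o u p) ^ 2 / (κ / 4) = 4 * (pdx o η p) ^ 2 / κ * pdx o u p ^ 2 := by
      field_simp
    have : (pdx o η p) ^ 2 ≤ C ^ 2 := by rw [← sq_abs]; gcongr; exact hη.dx o p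
    rw [e]; gcongr
  have b3 : κ * (η p * pdt u p) ^ 2 ≤ w s * (η p * pdt u p) ^ 2 := by gcongr; exact hc.wl s
  have b4 : -C * pdx o u p ^ 2 ≤ η p * pdt η p * pdx o u p ^ 2 := by gcongr; exact hη.dt p
  have b5 : 0 ≤ d * d * B ^ 2 / κ * pdx o u p ^ 2 := by positivity
  have b6 : 0 ≤ (4 * C ^ 2 / κ + C) * offG o u p := by positivity
  have fin : κ / 2 * (η p ^ 2 * pdt u p ^ 2) ≤
      (1 / 2 * (2 * η p * pdt η p * pdx o u p * pdx o u p
            + η p ^ 2 * (fderiv ℝ (pdt u) p (0, Pi.single o 1)) * pdx o u p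
            + η p ^ 2 * pdx o u p * (fderiv ℝ (pdt u) p (0, Pi.single o 1)))
        - 1 * (2 * η p * pdx o η p * pdt u p * pdx o u p
            + η p ^ 2 * (fderiv ℝ (pdt u) p (0, Pi.single o 1)) * pdx o u p
            + η p ^ 2 * pdt u p * (-(w s * pdt u p) - f)))
      + K * (offG o u p + pdx o u p ^ 2) := by
    simp only [hK]
    linarith
  have fin2 := mul_le_mul_of_nonneg_left fin (by positivity : 0 ≤ 2 / κ)
  rw [mul_add (2 / κ) _ (K * _), ← mul_assoc (2 / κ) K] at fin2
  refine le_trans (le_of_eq ?_) fin2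
  field_simp

lemma Sol.mono {d : ℕ} {o : Fin d} {w : ℝ → ℝ} {c : ℝ → Fin d → Fin d → ℝ} {ρ ρ' : ℝ}
    (hρ : 0 < ρ) (hρ' : ρ ≤ ρ') {u : ℝ × (Fin d → ℝ) → ℝ} (hu : Sol d o w c ρ' u) :
    Sol d o w c ρ u :=
  have h := Qc_mono d hρ hρ'
  ⟨hu.sm.mono h, hu.int.mono_set h, fun p hp => hu.eq p (h hp)⟩

def Good (d : ℕ) (o : Fin d) (κ B : ℝ)
    (op : (ℝ × (Fin d → ℝ) → ℝ) → (ℝ × (Fin d → ℝ) → ℝ)) : Prop :=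
  ∀ ρ ρ' : ℝ, 0 < ρ → ρ < ρ' → ∃ N : ℝ, 0 < N ∧ ∀ w c, NC d o κ B w c → ∀ u, Sol d o w c ρ' u →
    Sol d o w c ρ (op u) ∧ Bd d ρ ρ' N u (op u)

lemma offG_bd (d : ℕ) (o : Fin d) {κ B : ℝ} (hκ : 0 < κ) (hB : 0 < B) {ρ ρ' : ℝ} (hρ : 0 < ρ)
    (hρ' : ρ < ρ') : ∃ N : ℝ, 0 < N ∧ ∀ w c, NC d o κ B w c → ∀ u, Sol d o w c ρ' u →
      IntegrableOn (offG o u) (Qc d ρ) ∧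
      ∫ p in Qc d ρ, offG o u p ≤ N * ∫ p in Qc d ρ', (u p) ^ 2 := by
  have hdpos : (0 : ℝ) < d := by
    have := o.pos; exact_mod_cast this
  obtain ⟨N, hN, hn⟩ := bd_xx d o hκ hB hρ hρ'
  refine ⟨d * (d * N), by positivity, fun w c hc u hu => ?_⟩
  have hjk : ∀ j k, IntegrableOn (fun p => if j = o ∧ k = o then 0 else (pdxx j k u p) ^ 2) (Qc d ρ)
      ∧ ∫ p in Qc d ρ, (if j = o ∧ k = o then 0 else (pdxx j k u p) ^ 2)
        ≤ N * ∫ p in Qc d ρ', (u p) ^ 2 := by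
    intro j k
    by_cases h : j = o ∧ k = o
    · simp only [if_pos h]
      have := int_nonneg ρ' u
      exact ⟨integrableOn_zero, by simpa using by positivity⟩
    · simp only [if_neg h]
      exact hn w c hc u hu j k h
  have i1 : ∀ j, IntegrableOn (fun p => ∑ k, if j = o ∧ k = o then 0 else (pdxx j k u p) ^ 2)
      (Qc d ρ) := fun j => integrable_finsetSum _ fun k _ => (hjk j k).1
  refine ⟨integrable_finsetSum _ fun j _ => i1 j, ?_⟩
  simp only [offG]
  rw [integral_finsetSum _ fun j _ => i1 j]
  calc _ ≤ ∑ j : Fin d, ∑ k : Fin d, N * ∫ p in Qc d ρ', (u p) ^ 2 := by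
        gcongr with j _
        rw [integral_finsetSum _ fun k _ => (hjk j k).1]
        gcongr with k _
        exact (hjk j k).2
    _ = _ := by simp; ring

lemma good_t (d : ℕ) (o : Fin d) {κ B : ℝ} (hκ : 0 < κ) (hB : 0 < B) : Good d o κ B pdt := by
  intro ρ ρ' hρ hρ'
  obtain ⟨ρ₁, h1, h2⟩ := exists_between hρ'
  obtain ⟨N, hN, hn⟩ := time0 d o hκ hB hρ h1
  obtain ⟨M, hM, hm⟩ := offG_bd d o hκ hB (hρ.trans h1) h2
  obtain ⟨L, hL, hl⟩ := cacc d o hκ hB (hρ.trans h1) h2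
  refine ⟨N * (M + L), by positivity, fun w c hc u hu => ?_⟩
  have a1 := hm w c hc u hu
  have a2 := hl w c hc u hu o
  have a3 := hn w c hc u (hu.mono (hρ.trans h1) h2.le) (a1.1.add a2.1)
  refine ⟨sol_D hρ hρ' hu _ rfl a3.1, a3.1, a3.2.trans ?_⟩
  rw [mul_assoc]
  gcongr
  rw [integral_add a1.1 a2.1, add_mul]
  exact add_le_add a1.2 a2.2

lemma good_x (d : ℕ) (o : Fin d) {κ B : ℝ} (hκ : 0 < κ) (hB : 0 < B) (j : Fin d) (hj : j ≠ o) :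
    Good d o κ B (pdx j) := by
  intro ρ ρ' hρ hρ'
  obtain ⟨N, hN, hn⟩ := sol_x d o hκ hB hρ hρ'
  exact ⟨N, hN, fun w c hc u hu => hn w c hc u hu j hj⟩

lemma good_id (d : ℕ) (o : Fin d) (κ B : ℝ) : Good d o κ B (fun u => u) := by
  intro ρ ρ' hρ hρ'
  refine ⟨1, one_pos, fun w c hc u hu => ⟨hu.mono hρ hρ'.le, ?_⟩⟩
  refine Bd.mono_set hρ hρ'.le ⟨hu.int, by simp⟩

lemma Good.comp {d : ℕ} {o : Fin d} {κ B : ℝ}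
    {f g : (ℝ × (Fin d → ℝ) → ℝ) → (ℝ × (Fin d → ℝ) → ℝ)}
    (hf : Good d o κ B f) (hg : Good d o κ B g) : Good d o κ B (fun u => f (g u)) := by
  intro ρ ρ' hρ hρ'
  obtain ⟨ρ₁, h1, h2⟩ := exists_between hρ'
  obtain ⟨N, hN, hn⟩ := hf ρ ρ₁ hρ h1
  obtain ⟨M, hM, hm⟩ := hg ρ₁ ρ' (hρ.trans h1) h2
  refine ⟨N * M, by positivity, fun w c hc u hu => ?_⟩
  obtain ⟨a, b⟩ := hm w c hc u hu
  obtain ⟨a', b'⟩ := hn w c hc _ a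
  exact ⟨a', b.trans hN.le b'⟩

lemma Good.iter {d : ℕ} {o : Fin d} {κ B : ℝ}
    {f : (ℝ × (Fin d → ℝ) → ℝ) → (ℝ × (Fin d → ℝ) → ℝ)}
    (hf : Good d o κ B f) (m : ℕ) : Good d o κ B (fun u => f^[m] u) := by
  induction m with
  | zero => exact good_id d o κ B
  | succ m ih =>
    have := ih.comp hf
    simpa only [Function.iterate_succ, Function.comp] using this

lemma good_fold {d : ℕ} {o : Fin d} {κ B : ℝ} (hκ : 0 < κ) (hB : 0 < B) (n : ℕ)
    (e : Fin n → Fin d) (he : ∀ i, e i ≠ o) (g : Fin n → ℕ) :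
    Good d o κ B (fun u => Fin.foldr n (fun i v => (pdx (e i))^[g i] v) u) := by
  induction n with
  | zero => simpa using good_id d o κ B
  | succ n ih =>
    have h1 := ih (fun i => e i.succ) (fun i => he _) (fun i => g i.succ)
    have h2 := ((good_x d o hκ hB (e 0) (he 0)).iter (g 0)).comp h1
    simpa only [Fin.foldr_succ] using h2

lemma iter_congr {d : ℕ} {U : Set (ℝ × (Fin d → ℝ))} (hU : IsOpen U) (m : ℕ)
    {f g : ℝ × (Fin d → ℝ) → ℝ} (h : EqOn f g U) : EqOn (pdt^[m] f) (pdt^[m] g) U := by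
  induction m generalizing f g with
  | zero => exact h
  | succ m ih => exact ih (congr_D hU h _)

lemma iter_comm {d : ℕ} {U : Set (ℝ × (Fin d → ℝ))} (hU : IsOpen U) (m : ℕ) (o : Fin d)
    {f : ℝ × (Fin d → ℝ) → ℝ} (hf : ContDiffOn ℝ (⊤ : ℕ∞) f U) :
    EqOn (pdt^[m] (pdx o f)) (pdx o (pdt^[m] f)) U := by
  induction m generalizing f with
  | zero => exact fun _ _ => rfl
  | succ m ih =>
    have h1 : EqOn (pdt (pdx o f)) (pdx o (pdt f)) U := fun p hp => comm_D hU hf _ _ hp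
    have h2 := iter_congr hU m h1
    exact h2.trans (ih (f := pdt f) (smooth_D hU hf _))

lemma iter_comm' {d : ℕ} {U : Set (ℝ × (Fin d → ℝ))} (hU : IsOpen U) (m : ℕ) (o : Fin d)
    (g : ℕ) {f : ℝ × (Fin d → ℝ) → ℝ} (hf : ContDiffOn ℝ (⊤ : ℕ∞) f U) :
    EqOn (pdt^[m] ((pdx o)^[g] f)) ((pdx o)^[g] (pdt^[m] f)) U := by
  induction g generalizing f with
  | zero => exact fun _ _ => rfl
  | succ g ih =>
    have h1 := ih (f := pdx o f) (smooth_D hU hf _)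
    refine h1.trans ?_
    have h2 : ∀ (g : ℕ) {f₁ f₂ : ℝ × (Fin d → ℝ) → ℝ}, EqOn f₁ f₂ U →
        EqOn ((pdx o)^[g] f₁) ((pdx o)^[g] f₂) U := by
      intro g
      induction g with
      | zero => exact fun h => h
      | succ g ih => exact fun h => ih (congr_D hU h _)
    exact h2 g (iter_comm hU m o hf)

lemma normal_bd (d : ℕ) (o : Fin d) {κ B : ℝ} (hκ : 0 < κ) (hB : 0 < B) {ρ ρ' : ℝ} (hρ : 0 < ρ)
    (hρ' : ρ < ρ') (g : ℕ) (hg : g ≤ 2) :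
    ∃ N : ℝ, 0 < N ∧ ∀ w c, NC d o κ B w c → ∀ u, Sol d o w c ρ' u →
      ∫ p in Qc d ρ, ((pdx o)^[g] u p) ^ 2 ≤ N * ∫ p in Qc d ρ', (u p) ^ 2 := by
  have hdpos : (0 : ℝ) < d := by
    have := o.pos; exact_mod_cast this
  interval_cases g
  · obtain ⟨N, hN, hn⟩ := good_id d o κ B ρ ρ' hρ hρ'
    exact ⟨N, hN, fun w c hc u hu => (hn w c hc u hu).2.2⟩
  · obtain ⟨N, hN, hn⟩ := cacc d o hκ hB hρ hρ'
    exact ⟨N, hN, fun w c hc u hu => (hn w c hc u hu o).2⟩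
  · obtain ⟨N, hN, hn⟩ := good_t d o hκ hB ρ ρ' hρ hρ'
    obtain ⟨M, hM, hm⟩ := offG_bd d o hκ hB hρ hρ'
    refine ⟨2 * B ^ 2 * N + 2 * (d * d * B ^ 2) * M, by positivity, fun w c hc u hu => ?_⟩
    have a1 := (hn w c hc u hu).2
    have a2 := hm w c hc u hu
    have i1 := a1.1.const_mul (2 * B ^ 2)
    have i2 := a2.1.const_mul (2 * (d * d * B ^ 2))
    have : ∫ p in Qc d ρ, ((pdx o)^[2] u p) ^ 2 ≤
        ∫ p in Qc d ρ, (2 * B ^ 2 * (pdt u p) ^ 2 + 2 * (d * d * B ^ 2) * offG o u p) := by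
      refine integral_mono_of_nonneg (Eventually.of_forall fun p => sq_nonneg _) (i1.add i2) ?_
      filter_upwards [ae_restrict_mem (Qc_open d ρ).measurableSet] with p hp
      obtain ⟨f, hf1, hf2⟩ := off_split hc (p.2 o) u p
      have heq := hu.eq p (Qc_mono d hρ hρ'.le hp)
      rw [hf1] at heq
      have e : (pdx o)^[2] u p = -(w (p.2 o) * pdt u p) - f := by
        have : (pdx o)^[2] u p = pdxx o o u p := rfl
        rw [this]; linarith
      rw [e]
      have hw : (w (p.2 o)) ^ 2 ≤ B ^ 2 := by
        have := hκ.le.trans (hc.wl (p.2 o))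
        gcongr; exact hc.wu _
      have hw2 : (w (p.2 o)) ^ 2 * (pdt u p) ^ 2 ≤ B ^ 2 * (pdt u p) ^ 2 := by gcongr
      nlinarith [sq_nonneg (w (p.2 o) * pdt u p - f)]
    refine this.trans ?_
    rw [integral_add i1 i2, integral_const_mul, integral_const_mul, add_mul]
    have b1 := a1.2
    have b2 := a2.2
    rw [mul_assoc (2 * B ^ 2) N, mul_assoc _ M]
    gcongr

lemma NC_of {d : ℕ} (o : Fin d) {δ : ℝ} (hδ : δ ∈ Set.Ioo (0 : ℝ) 1)
    (a : ℝ → Fin d → Fin d → ℝ) (h1 : ∀ j k, Measurable fun s => a s j k)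
    (h2 : ∀ s j k, a s j k = a s k j)
    (h3 : ∀ (s : ℝ) (θ : Fin d → ℝ),
          δ * ∑ j, (θ j) ^ 2 ≤ ∑ j, ∑ k, a s j k * θ j * θ k ∧
          ∑ j, ∑ k, a s j k * θ j * θ k ≤ δ⁻¹ * ∑ j, (θ j) ^ 2) :
    (∀ s, 0 < a s o o) ∧
    NC d o (δ ^ 2) (δ⁻¹ ^ 2) (fun s => (a s o o)⁻¹) (fun s j k => (a s o o)⁻¹ * a s j k) := by
  obtain ⟨h0, hlt⟩ := hδ
  have hi : 1 < δ⁻¹ := (one_lt_inv₀ h0).2 hlt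
  have dg : ∀ s j, δ ≤ a s j j ∧ a s j j ≤ δ⁻¹ := by
    intro s j
    have := h3 s (Pi.single j 1)
    simpa [Pi.single_apply, Finset.sum_ite_eq, ite_pow] using this
  have ob : ∀ s j k, |a s j k| ≤ δ⁻¹ := by
    intro s j k
    have hq : ∀ x : ℝ, 0 ≤ a s j j + 2 * x * a s j k + x ^ 2 * a s k k := by
      intro x
      have h := (h3 s (Pi.single j 1 + x • Pi.single k 1)).1
      have e : ∑ i, ∑ l, a s i l * (Pi.single j 1 + x • Pi.single k 1 : Fin d → ℝ) i
          * (Pi.single j 1 + x • Pi.single k 1 : Fin d → ℝ) l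
          = a s j j + 2 * x * a s j k + x ^ 2 * a s k k := by
        simp [Pi.single_apply, mul_add, add_mul, Finset.sum_add_distrib]
        rw [h2 s k j]; ring
      rw [e] at h
      refine le_trans ?_ h
      have : 0 ≤ ∑ i, ((Pi.single j 1 + x • Pi.single k 1 : Fin d → ℝ) i) ^ 2 :=
        Finset.sum_nonneg fun i _ => sq_nonneg _
      positivity
    have p1 := hq 1
    have p2 := hq (-1)
    have := (dg s j).2
    have := (dg s k).2
    rw [abs_le]; constructor <;> linarith
  have hp : ∀ s, 0 < a s o o := fun s => h0.trans_le (dg s o).1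
  have wl : ∀ s, δ ≤ (a s o o)⁻¹ := fun s => by
    rw [le_inv_comm₀ h0 (hp s)]; exact (dg s o).2
  have wu : ∀ s, (a s o o)⁻¹ ≤ δ⁻¹ := fun s => by
    have := (dg s o).1
    gcongr
  refine ⟨hp, ⟨(h1 o o).inv, fun j k => (h1 o o).inv.mul (h1 j k), fun s => ?_, fun s => ?_,
    fun s => ?_, fun s j k => ?_, fun s θ => ?_⟩⟩
  · exact inv_mul_cancel₀ (hp s).ne'
  · have := wl s; nlinarith
  · have := wu s; nlinarith
  · rw [abs_mul, sq, abs_of_pos (inv_pos.2 (hp s))]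
    exact mul_le_mul (wu s) (ob s j k) (abs_nonneg _) (by positivity)
  · have e : ∑ j, ∑ k, (a s o o)⁻¹ * a s j k * θ j * θ k
        = (a s o o)⁻¹ * ∑ j, ∑ k, a s j k * θ j * θ k := by
      simp only [Finset.mul_sum, mul_assoc]
    rw [e, sq, mul_assoc]
    have : 0 ≤ ∑ j, (θ j) ^ 2 := Finset.sum_nonneg fun i _ => sq_nonneg _
    exact mul_le_mul (wl s) (h3 s θ).1 (by positivity) (inv_pos.2 (hp s)).le

theorem stmt8 (d : ℕ) (hd : 0 < d) (δ : ℝ) (hδ : δ ∈ Set.Ioo (0 : ℝ) 1)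
    (r R : ℝ) (hr : 0 < r) (hrR : r < R)
    (γ : Fin d → ℕ) (hγ : γ ⟨0, hd⟩ ≤ 2) (m : ℕ) :
    ∃ N : ℝ, 0 < N ∧
      ∀ a : ℝ → Fin d → Fin d → ℝ,
        (∀ j k, Measurable fun s => a s j k) →
        (∀ s j k, a s j k = a s k j) →
        (∀ (s : ℝ) (θ : Fin d → ℝ),
          δ * ∑ j, (θ j) ^ 2 ≤ ∑ j, ∑ k, a s j k * θ j * θ k ∧
          ∑ j, ∑ k, a s j k * θ j * θ k ≤ δ⁻¹ * ∑ j, (θ j) ^ 2) →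
        ∀ h : ℝ × (Fin d → ℝ) → ℝ,
          ContDiffOn ℝ (⊤ : ℕ∞) h (Qc d R) →
          IntegrableOn (fun p => (h p) ^ 2) (Qc d R) →
          (∀ p ∈ Qc d R,
            pdt h p + ∑ j, ∑ k, a (p.2 ⟨0, hd⟩) j k * pdxx j k h p = 0) →
          (∫ p in Qc d r, (pdt^[m] (pdxMulti γ h) p) ^ 2)
            ≤ N * ∫ p in Qc d R, (h p) ^ 2 := by
  obtain ⟨n, rfl⟩ : ∃ n, d = n + 1 := ⟨d - 1, by omega⟩
  have ho : (⟨0, hd⟩ : Fin (n + 1)) = 0 := rfl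
  rw [ho] at hγ
  simp only [ho]
  have hδ0 := hδ.1
  have hκ : 0 < δ ^ 2 := by positivity
  have hB : 0 < δ⁻¹ ^ 2 := by positivity
  obtain ⟨r₁, hr1, hr1R⟩ := exists_between hrR
  obtain ⟨r₂, hr2, hr2R⟩ := exists_between hr1R
  have hr1p := hr.trans hr1
  have hr2p := hr1p.trans hr2
  obtain ⟨N₁, hN₁, hn₁⟩ := good_fold (o := (0 : Fin (n + 1))) hκ hB n Fin.succ
    (fun i => Fin.succ_ne_zero i) (fun i => γ i.succ) r₂ R hr2p hr2R
  obtain ⟨N₂, hN₂, hn₂⟩ := (good_t (n + 1) 0 hκ hB).iter m r₁ r₂ hr1p hr2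
  obtain ⟨N₃, hN₃, hn₃⟩ := normal_bd (n + 1) 0 hκ hB hr hr1 (γ 0) hγ
  refine ⟨N₃ * (N₂ * N₁), by positivity, ?_⟩
  intro a ha1 ha2 ha3 h hsm hint heq
  obtain ⟨hpos, hNC⟩ := NC_of 0 hδ a ha1 ha2 ha3
  have hsol : Sol (n + 1) 0 (fun s => (a s 0 0)⁻¹) (fun s j k => (a s 0 0)⁻¹ * a s j k) R h := by
    refine ⟨hsm, hint, fun p hp => ?_⟩
    have := heq p hp
    simp only [mul_assoc, ← Finset.mul_sum]
    rw [← mul_add, this, mul_zero]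
  obtain ⟨s1, b1⟩ := hn₁ _ _ hNC h hsol
  obtain ⟨s2, b2⟩ := hn₂ _ _ hNC _ s1
  have b3 := hn₃ _ _ hNC _ s2
  have e : EqOn (pdt^[m] (pdxMulti γ h)) ((pdx 0)^[γ 0] (pdt^[m]
      (Fin.foldr n (fun i v => (pdx (Fin.succ i))^[γ i.succ] v) h))) (Qc (n + 1) r) := by
    have := iter_comm' (Qc_open (n + 1) r₂) m 0 (γ 0) s1.sm
    refine EqOn.mono (Qc_mono _ hr (hr1.trans hr2).le) ?_
    rw [pdxMulti, Fin.foldr_succ]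
    exact this
  have e2 := setIntegral_congr_fun (μ := volume) (Qc_open (n + 1) r).measurableSet
    (f := fun p => (pdt^[m] (pdxMulti γ h) p) ^ 2)
    (g := fun p => ((pdx 0)^[γ 0] (pdt^[m]
      (Fin.foldr n (fun i v => (pdx (Fin.succ i))^[γ i.succ] v) h)) p) ^ 2)
    (fun p hp => by simp only [e hp])
  rw [e2]
  refine b3.trans ?_
  rw [mul_assoc]
  gcongr
  exact (b1.trans hN₂.le b2).2
end
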